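/- arXiv:2107.10450 — 7 statements merged into one kernel-verified Lean document; each statement's English description precedes it below -/
import Mathlib

section
/- Let t be a real number with 0 ≤ t ≤ 1/4, let σ > 0 and σ̂ > 0 be reals, and let D be a real number such that |D| ≤ σ²·t and (1 − √t)·σ² ≤ σ̂² ≤ (1 + √t)·σ². Then ln(σ̂/σ) + (σ² − σ̂²)/(2σ̂²) + D/(2σ̂²) ≤ 3t. (In the paper this is applied with t = ε·p_i/(n·d_avg) at each node i to conclude that the node-wise KL contribution d_CP(α*_i, α̂_i) is at most 3ε·p_i/(n·d_avg), and hence that the total KL divergence is at most 3ε.) -/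
/-- The analytic core of Proposition 2.10 (Implication of KL decomposition):
if `|D| ≤ σ²·t` (Condition 1) and `(1 − √t)·σ² ≤ σ̂² ≤ (1 + √t)·σ²` (Condition 2)
with `0 ≤ t ≤ 1/4`, then the node-wise KL contribution
`ln(σ̂/σ) + (σ² − σ̂²)/(2σ̂²) + D/(2σ̂²)` is at most `3t`. -/
theorem stmt_0 (t σ σhat D : ℝ) (ht0 : 0 ≤ t) (ht1 : t ≤ 1 / 4)
    (hσ : 0 < σ) (hσhat : 0 < σhat)
    (hD : |D| ≤ σ ^ 2 * t)
    (hlow : (1 - Real.sqrt t) * σ ^ 2 ≤ σhat ^ 2)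
    (hhigh : σhat ^ 2 ≤ (1 + Real.sqrt t) * σ ^ 2) :
    Real.log (σhat / σ) + (σ ^ 2 - σhat ^ 2) / (2 * σhat ^ 2) + D / (2 * σhat ^ 2)
      ≤ 3 * t := by
  have hs0 := Real.sqrt_nonneg t
  have hss := Real.sq_sqrt ht0
  set s := Real.sqrt t with hs
  have hs1 : s ≤ 1 / 2 := by nlinarith
  have hlog : Real.log (σhat / σ) ≤ (σhat ^ 2 / σ ^ 2 - 1) / 2 := by
    have h1 := Real.log_le_sub_one_of_pos (x := (σhat / σ) ^ 2) (by positivity)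
    rw [Real.log_pow, div_pow] at h1
    push_cast at h1
    linarith
  have ha : 0 < σ ^ 2 := by positivity
  have hb : 0 < σhat ^ 2 := by positivity
  have hD' := (abs_le.mp hD).2
  generalize σ ^ 2 = a at *
  generalize σhat ^ 2 = b at *
  have hab : a ≤ 2 * b := by nlinarith
  have hsq : (b - a) ^ 2 ≤ t * a ^ 2 := by
    rw [← hss, ← mul_pow]
    apply sq_le_sq'
    · linarith
    · linarith
  have key : (b / a - 1) / 2 + (a - b) / (2 * b) + D / (2 * b) ≤ 3 * t := by
    have e : (b / a - 1) / 2 + (a - b) / (2 * b) + D / (2 * b)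
        = ((b - a) ^ 2 + D * a) / (2 * a * b) := by
      field_simp
      ring
    rw [e, div_le_iff₀ (by positivity)]
    have h1 : D * a ≤ a * t * a := mul_le_mul_of_nonneg_right hD' ha.le
    have h2 : t * a * a ≤ t * a * (2 * b) := mul_le_mul_of_nonneg_left hab (by positivity)
    have h3 : 0 ≤ t * a * b := by positivity
    nlinarith
  linarith
end

section
/- Let G be a DAG on nodes 1,…,n with parent sets π_i ⊆ {1,…,i−1}. Let P and Q be Gaussian Bayesian networks on G with parameters (A_i, σ_i)_{i=1}^n and (Â_i, σ̂_i)_{i=1}^n respectively (all σ_i, σ̂_i > 0). For each i, let M_i be the covariance matrix of the parent variables (X_j)_{j∈π_i} under P, and let Δ_i = Â_i − A_i. Then the Kullback–Leibler divergence satisfies KL(P‖Q) = Σ_{i=1}^n [ ln(σ̂_i/σ_i) + (σ_i² − σ̂_i²)/(2σ̂_i²) + Δ_iᵀ M_i Δ_i/(2σ̂_i²) ]. -/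
open MeasureTheory ProbabilityTheory Matrix

/-- Kullback–Leibler divergence `KL(P‖Q) = ∫ log(dP/dQ) dP`. -/
noncomputable def klDiv {α : Type*} [MeasurableSpace α] (P Q : Measure α) : ℝ :=
  ∫ x, Real.log ((P.rnDeriv Q) x).toReal ∂P

/-- The Gaussian Bayesian network with coefficient matrix `B` and noise standard
deviations `σ`: the pushforward of the product Gaussian `⊗ᵢ N(0, σᵢ²)` under the
linear map `η ↦ (I − B)⁻¹ η`. -/
noncomputable def gaussianBN {n : ℕ} (B : Matrix (Fin n) (Fin n) ℝ) (σ : Fin n → ℝ) :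
    Measure (Fin n → ℝ) :=
  Measure.map (fun η => (1 - B)⁻¹.mulVec η)
    (Measure.pi fun i => gaussianReal 0 ((σ i ^ 2).toNNReal))


lemma aux_pi_gauss {n : ℕ} (v : Fin n → NNReal) (hv : ∀ i, v i ≠ 0) :
    Measure.pi (fun i => gaussianReal 0 (v i)) = volume.withDensity
      (fun x : Fin n → ℝ => ENNReal.ofReal (∏ i, gaussianPDFReal 0 (v i) (x i))) := by
  refine Measure.pi_eq fun s hs => ?_
  rw [withDensity_apply _ (MeasurableSet.univ_pi hs), ← lintegral_indicator (MeasurableSet.univ_pi hs)]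
  have h1 : ∀ x : Fin n → ℝ, (Set.univ.pi s).indicator
      (fun x : Fin n → ℝ => ENNReal.ofReal (∏ i, gaussianPDFReal 0 (v i) (x i))) x
      = ENNReal.ofReal (∏ i, (s i).indicator (gaussianPDFReal 0 (v i)) (x i)) := by
    intro x
    by_cases hx : x ∈ Set.univ.pi s
    · rw [Set.indicator_of_mem hx]
      congr 1
      refine Finset.prod_congr rfl fun i _ => ?_
      rw [Set.indicator_of_mem (hx i (Set.mem_univ i))]
    · rw [Set.indicator_of_notMem hx]
      simp only [Set.mem_univ_pi, not_forall] at hx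
      obtain ⟨i, hi⟩ := hx
      rw [Finset.prod_eq_zero (Finset.mem_univ i) (Set.indicator_of_notMem hi _)]
      simp
  have hint : ∀ i, Integrable ((s i).indicator (gaussianPDFReal 0 (v i))) :=
    fun i => (integrable_gaussianPDFReal 0 (v i)).indicator (hs i)
  have hnn : ∀ i x, 0 ≤ (s i).indicator (gaussianPDFReal 0 (v i)) x :=
    fun i x => Set.indicator_nonneg (fun y _ => gaussianPDFReal_nonneg _ _ y) x
  simp_rw [h1]
  rw [← ofReal_integral_eq_lintegral_ofReal]
  · rw [integral_fintype_prod_volume_eq_prod (fun i => (s i).indicator (gaussianPDFReal 0 (v i))),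
      ENNReal.ofReal_prod_of_nonneg (fun i _ => integral_nonneg (hnn i))]
    refine Finset.prod_congr rfl fun i _ => ?_
    rw [integral_indicator (hs i), gaussianReal_apply_eq_integral _ (hv i)]
  · exact Integrable.fintype_prod hint
  · exact ae_of_all _ fun x => Finset.prod_nonneg fun i _ => hnn i _

lemma aux_bn {n : ℕ} (B : Matrix (Fin n) (Fin n) ℝ) (hdet : (1 - B).det = 1) (σ : Fin n → ℝ)
    (hσ : ∀ i, 0 < σ i) :
    gaussianBN B σ = volume.withDensity (fun x : Fin n → ℝ => ENNReal.ofReal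
      (∏ i, gaussianPDFReal 0 ((σ i ^ 2).toNNReal) (((1 - B).mulVec x) i))) := by
  have hT : MeasurePreserving (fun η : Fin n → ℝ => (1 - B)⁻¹.mulVec η) volume volume := by
    refine ⟨by fun_prop, ?_⟩
    have hd : ((1 - B)⁻¹).det = 1 := by rw [Matrix.det_nonsing_inv, hdet]; simp
    have := Real.map_matrix_volume_pi_eq_smul_volume_pi (M := (1 - B)⁻¹) (by rw [hd]; norm_num)
    rw [hd] at this
    simp only [inv_one, abs_one, ENNReal.ofReal_one, one_smul] at this
    exact this
  have hmeas : Measurable (fun x : Fin n → ℝ => ENNReal.ofReal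
      (∏ i, gaussianPDFReal 0 ((σ i ^ 2).toNNReal) (((1 - B).mulVec x) i))) := by
    refine ENNReal.measurable_ofReal.comp (Finset.measurable_prod _ fun i _ => ?_)
    have hm : Measurable (fun x : Fin n → ℝ => ((1 - B).mulVec x) i) := by
      have : Measurable (fun x : Fin n → ℝ => ((1 - B).mulVec x)) := by fun_prop
      exact (measurable_pi_apply i).comp this
    exact (measurable_gaussianPDFReal _ _).comp hm
  rw [gaussianBN, aux_pi_gauss _ (fun i => by have := hσ i; simp; positivity)]
  ext s hs
  rw [Measure.map_apply hT.measurable hs, withDensity_apply _ (hT.measurable hs),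
    withDensity_apply _ hs, ← hT.setLIntegral_comp_preimage hs hmeas]
  refine lintegral_congr fun x => ?_
  rw [Matrix.mulVec_mulVec, Matrix.mul_nonsing_inv _ (by rw [hdet]; simp), Matrix.one_mulVec]

lemma aux_rn {α : Type*} [MeasurableSpace α] (μ : Measure α) [SigmaFinite μ] (f g : α → ℝ)
    (hf : Measurable f) (hg : Measurable g) (hf0 : ∀ x, 0 < f x) (hg0 : ∀ x, 0 < g x) :
    klDiv (μ.withDensity fun x => ENNReal.ofReal (f x)) (μ.withDensity fun x => ENNReal.ofReal (g x))
     = ∫ x, (Real.log (f x) - Real.log (g x)) ∂(μ.withDensity fun x => ENNReal.ofReal (f x)) := by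
  unfold klDiv
  have : SigmaFinite (μ.withDensity fun x => ENNReal.ofReal (f x)) :=
    SigmaFinite.withDensity_of_ne_top (ae_of_all _ fun x => ENNReal.ofReal_ne_top)
  refine integral_congr_ae ?_
  have h1 := Measure.rnDeriv_withDensity_right (μ.withDensity fun x => ENNReal.ofReal (f x)) μ
    (f := fun x => ENNReal.ofReal (g x)) hg.ennreal_ofReal.aemeasurable
    (ae_of_all _ fun x => by simp [hg0 x]) (ae_of_all _ fun x => ENNReal.ofReal_ne_top)
  have h2 := Measure.rnDeriv_withDensity μ hf.ennreal_ofReal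
  refine (withDensity_absolutelyContinuous μ _) ?_
  filter_upwards [h1, h2] with x hx1 hx2
  rw [hx1, hx2, ENNReal.toReal_mul, ENNReal.toReal_inv, ENNReal.toReal_ofReal (hf0 x).le,
    ENNReal.toReal_ofReal (hg0 x).le, Real.log_mul (by have := hg0 x; positivity) (hf0 x).ne',
    Real.log_inv]
  ring

lemma aux_logpdf (s x : ℝ) (hs : 0 < s) : Real.log (gaussianPDFReal 0 ((s ^ 2).toNNReal) x)
    = - Real.log (Real.sqrt (2 * Real.pi)) - Real.log s - x ^ 2 / (2 * s ^ 2) := by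
  have h : ((s ^ 2).toNNReal : ℝ) = s ^ 2 := Real.coe_toNNReal _ (by positivity)
  have hp := Real.pi_pos
  rw [gaussianPDFReal, h, Real.log_mul (by positivity) (by positivity), Real.log_exp,
    Real.log_inv, Real.sqrt_mul (by positivity), Real.sqrt_sq hs.le,
    Real.log_mul (by positivity) (by positivity)]
  ring

lemma aux_cov {n : ℕ} (σ : Fin n → ℝ) (i k : Fin n) :
    ∫ η, η i * η k ∂(Measure.pi fun i => gaussianReal 0 ((σ i ^ 2).toNNReal))
      = if i = k then σ i ^ 2 else 0 := by
  have h := iIndepFun_pi (μ := fun i => gaussianReal 0 ((σ i ^ 2).toNNReal))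
    (X := fun i x => x) (fun i => aemeasurable_id)
  have hmean : ∀ i, ∫ η, η i ∂(Measure.pi fun i => gaussianReal 0 ((σ i ^ 2).toNNReal)) = 0 := by
    intro i
    rw [integral_comp_eval (μ := fun i => gaussianReal 0 ((σ i ^ 2).toNNReal))
      (f := fun x : ℝ => x) (by fun_prop)]
    simp
  split_ifs with hik
  · subst hik
    rw [integral_comp_eval (μ := fun i => gaussianReal 0 ((σ i ^ 2).toNNReal))
      (f := fun x : ℝ => x * x) (by fun_prop)]
    have := variance_id_gaussianReal (μ := 0) (v := (σ i ^ 2).toNNReal)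
    rw [variance_of_integral_eq_zero aemeasurable_id (by simp)] at this
    rw [Real.coe_toNNReal _ (by positivity)] at this
    refine Eq.trans (integral_congr_ae (ae_of_all _ fun x => ?_)) this
    simp [sq]
  · rw [(h.indepFun hik).integral_fun_mul_eq_mul_integral
      (measurable_pi_apply i).aestronglyMeasurable (measurable_pi_apply k).aestronglyMeasurable, hmean, zero_mul]

lemma aux_memLp {n : ℕ} (σ : Fin n → ℝ) (i : Fin n) :
    MemLp (fun η : Fin n → ℝ => η i) 2 (Measure.pi fun i => gaussianReal 0 ((σ i ^ 2).toNNReal)) :=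
  (memLp_id_gaussianReal' 2 (by norm_num)).comp_measurePreserving (measurePreserving_eval _ i)

lemma aux_meas {n : ℕ} (B : Matrix (Fin n) (Fin n) ℝ) (σ : Fin n → ℝ) :
    Measurable (fun x : Fin n → ℝ =>
      ∏ i, gaussianPDFReal 0 ((σ i ^ 2).toNNReal) (((1 - B).mulVec x) i)) := by
  refine Finset.measurable_prod _ fun i _ => ?_
  have hm : Measurable (fun x : Fin n → ℝ => ((1 - B).mulVec x) i) := by
    have : Measurable (fun x : Fin n → ℝ => ((1 - B).mulVec x)) := by fun_prop
    exact (measurable_pi_apply i).comp this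
  exact (measurable_gaussianPDFReal _ _).comp hm

/-- Decomposition of the KL divergence between two Gaussian Bayesian networks on a
common DAG `G` (with parent sets `π i ⊆ {0,…,i−1}`):
`KL(P‖Q) = Σᵢ [ ln(σ̂ᵢ/σᵢ) + (σᵢ² − σ̂ᵢ²)/(2σ̂ᵢ²) + ΔᵢᵀMᵢΔᵢ/(2σ̂ᵢ²) ]`,
where `Mᵢ` is the covariance matrix of the parents of node `i` under `P`
and `Δᵢ = Âᵢ − Aᵢ`. -/
theorem stmt_2 (n : ℕ) (π : Fin n → Finset (Fin n))
    (hdag : ∀ i, ∀ j ∈ π i, j < i)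
    (B Bhat : Matrix (Fin n) (Fin n) ℝ)
    (hB : ∀ i j, j ∉ π i → B i j = 0) (hBhat : ∀ i j, j ∉ π i → Bhat i j = 0)
    (σ σhat : Fin n → ℝ) (hσ : ∀ i, 0 < σ i) (hσhat : ∀ i, 0 < σhat i) :
    klDiv (gaussianBN B σ) (gaussianBN Bhat σhat)
      = ∑ i, (Real.log (σhat i / σ i)
          + (σ i ^ 2 - σhat i ^ 2) / (2 * σhat i ^ 2)
          + (∑ j ∈ π i, ∑ k ∈ π i,
              (Bhat i j - B i j) * (∫ x, x j * x k ∂(gaussianBN B σ))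
                * (Bhat i k - B i k)) / (2 * σhat i ^ 2)) := by
  have hP : ∀ C : Matrix (Fin n) (Fin n) ℝ, (∀ i j, j ∉ π i → C i j = 0) → (1 - C).det = 1 := by
    intro C hC
    have hz : ∀ i j, i ≤ j → C i j = 0 := fun i j hij =>
      hC i j fun h => absurd (hdag i j h) (not_lt.mpr hij)
    rw [Matrix.det_of_isLowerTriangular]
    · refine Finset.prod_eq_one fun i _ => ?_
      simp [hz i i le_rfl]
    · intro i j hij
      have hij' : i < j := hij
      simp [hz i j hij'.le, hij'.ne]
  have hdB := hP B hB
  have hdBh := hP Bhat hBhat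
  have hL0 : ∀ i, ∀ j ∈ π i, (1 - B)⁻¹ j i = 0 := by
    intro i j hj
    have : Invertible (1 - B) := Matrix.invertibleOfIsUnitDet _ (by rw [hdB]; simp)
    have hb : (1 - B).IsLowerTriangular := by
      intro i j hij
      have hij' : i < j := hij
      have : B i j = 0 := hB i j fun h => absurd (hdag i j h) (not_lt.mpr hij'.le)
      simp [this, hij'.ne]
    exact Matrix.blockTriangular_inv_of_blockTriangular hb (hdag i j hj)
  have hpos : ∀ (C : Matrix (Fin n) (Fin n) ℝ) (s : Fin n → ℝ), (∀ i, 0 < s i) →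
      ∀ (x : Fin n → ℝ) i, 0 < gaussianPDFReal 0 ((s i ^ 2).toNNReal) (((1 - C).mulVec x) i) :=
    fun C s hs x i => gaussianPDFReal_pos _ _ _ (by have := hs i; simp; positivity)
  have hmeas : ∀ (C : Matrix (Fin n) (Fin n) ℝ) (s : Fin n → ℝ), Measurable (fun x : Fin n → ℝ =>
      ∏ i, gaussianPDFReal 0 ((s i ^ 2).toNNReal) (((1 - C).mulVec x) i)) := fun C s =>
    aux_meas C s
  have hT : Measurable (fun η : Fin n → ℝ => (1 - B)⁻¹.mulVec η) := by fun_prop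
  have hTj : ∀ j, Measurable (fun η : Fin n → ℝ => ((1 - B)⁻¹.mulVec η) j) :=
    fun j => (measurable_pi_apply j).comp hT
  have hkl : klDiv (gaussianBN B σ) (gaussianBN Bhat σhat) = ∫ x,
      (Real.log (∏ i, gaussianPDFReal 0 ((σ i ^ 2).toNNReal) (((1 - B).mulVec x) i))
      - Real.log (∏ i, gaussianPDFReal 0 ((σhat i ^ 2).toNNReal) (((1 - Bhat).mulVec x) i)))
      ∂(gaussianBN B σ) := by
    rw [aux_bn B hdB σ hσ, aux_bn Bhat hdBh σhat hσhat]
    exact aux_rn volume _ _ (hmeas B σ) (hmeas Bhat σhat)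
      (fun x => Finset.prod_pos fun i _ => hpos B σ hσ x i)
      (fun x => Finset.prod_pos fun i _ => hpos Bhat σhat hσhat x i)
  rw [hkl]
  clear hkl
  have hI : ∀ F : (Fin n → ℝ) → ℝ, Measurable F → ∫ x, F x ∂(gaussianBN B σ) =
      ∫ η, F ((1 - B)⁻¹.mulVec η) ∂(Measure.pi fun i => gaussianReal 0 ((σ i ^ 2).toNNReal)) := by
    intro F hF
    rw [gaussianBN, integral_map hT.aemeasurable hF.aestronglyMeasurable]
  refine (hI _ ((Real.measurable_log.comp (hmeas B σ)).sub
    (Real.measurable_log.comp (hmeas Bhat σhat)))).trans ?_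
  simp only [Pi.sub_apply, Function.comp_apply]
  have hI2 : ∀ j k, ∫ x, x j * x k ∂(gaussianBN B σ) = ∫ η, ((1 - B)⁻¹.mulVec η) j *
      ((1 - B)⁻¹.mulVec η) k ∂(Measure.pi fun i => gaussianReal 0 ((σ i ^ 2).toNNReal)) :=
    fun j k => hI (fun x => x j * x k) (by fun_prop)
  simp_rw [hI2]
  have hLp := aux_memLp σ
  have hcov := aux_cov σ
  set μ := (Measure.pi fun i => gaussianReal 0 ((σ i ^ 2).toNNReal)) with hμ
  set L := (1 - B)⁻¹ with hL
  have hX : ∀ j, MemLp (fun η : Fin n → ℝ => (L.mulVec η) j) 2 μ := by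
    intro j
    simp only [Matrix.mulVec, dotProduct]
    exact memLp_finsetSum _ fun k _ => (hLp k).const_mul _
  have hηη : ∀ i k, Integrable (fun η : Fin n → ℝ => η i * η k) μ :=
    fun i k => (hLp i).integrable_mul (hLp k)
  have hηX : ∀ i k, Integrable (fun η : Fin n → ℝ => η i * (L.mulVec η) k) μ :=
    fun i k => (hLp i).integrable_mul (hX k)
  have hXX : ∀ i k, Integrable (fun η : Fin n → ℝ => (L.mulVec η) i * (L.mulVec η) k) μ :=
    fun i k => (hX i).integrable_mul (hX k)
  have hcross : ∀ i, ∀ j ∈ π i, ∫ η, η i * (L.mulVec η) j ∂μ = 0 := by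
    intro i j hj
    have : ∀ η : Fin n → ℝ, η i * (L.mulVec η) j = ∑ k, L j k * (η i * η k) := by
      intro η
      simp only [Matrix.mulVec, dotProduct, Finset.mul_sum]
      exact Finset.sum_congr rfl fun k _ => by ring
    simp_rw [this]
    rw [integral_finsetSum _ fun k _ => (hηη i k).const_mul _]
    simp_rw [integral_const_mul, hcov]
    simp [hL0 i j hj]
  have hpt : ∀ η : Fin n → ℝ,
      (Real.log (∏ i, gaussianPDFReal 0 ((σ i ^ 2).toNNReal) (((1 - B).mulVec (L.mulVec η)) i))
      - Real.log (∏ i, gaussianPDFReal 0 ((σhat i ^ 2).toNNReal)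
          (((1 - Bhat).mulVec (L.mulVec η)) i)))
      = ∑ i, (Real.log (σhat i / σ i) + ((1 / (2 * σhat i ^ 2) - 1 / (2 * σ i ^ 2)) * (η i * η i)
        + ((- 1 / σhat i ^ 2) * (∑ j ∈ π i, (Bhat i j - B i j) * (η i * (L.mulVec η) j))
        + (1 / (2 * σhat i ^ 2)) * (∑ j ∈ π i, ∑ k ∈ π i,
          ((Bhat i j - B i j) * (Bhat i k - B i k)) * ((L.mulVec η) j * (L.mulVec η) k))))) := by
    intro η
    rw [Real.log_prod (fun i _ => (hpos B σ hσ _ i).ne'),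
      Real.log_prod (fun i _ => (hpos Bhat σhat hσhat _ i).ne'), ← Finset.sum_sub_distrib]
    refine Finset.sum_congr rfl fun i _ => ?_
    rw [aux_logpdf _ _ (hσ i), aux_logpdf _ _ (hσhat i)]
    have e1 : (1 - B).mulVec (L.mulVec η) = η := by
      rw [hL, Matrix.mulVec_mulVec, Matrix.mul_nonsing_inv _ (by rw [hdB]; simp),
        Matrix.one_mulVec]
    have e2 : ((1 - Bhat).mulVec (L.mulVec η)) i
        = η i - ∑ j ∈ π i, (Bhat i j - B i j) * (L.mulVec η) j := by
      have e3 : (1 - Bhat) = (1 - B) - (Bhat - B) := by abel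
      rw [e3, Matrix.sub_mulVec, e1, Pi.sub_apply]
      congr 1
      rw [Matrix.mulVec, dotProduct]
      refine (Finset.sum_subset (Finset.subset_univ _) fun j _ hj => ?_).symm
      rw [Matrix.sub_apply, hB i j hj, hBhat i j hj]; simp
    have e4 : (∑ j ∈ π i, ∑ k ∈ π i,
          ((Bhat i j - B i j) * (Bhat i k - B i k)) * ((L.mulVec η) j * (L.mulVec η) k))
        = (∑ j ∈ π i, (Bhat i j - B i j) * (L.mulVec η) j) ^ 2 := by
      rw [sq, Finset.sum_mul_sum]
      exact Finset.sum_congr rfl fun j _ => Finset.sum_congr rfl fun k _ => by ring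
    have e5 : (∑ j ∈ π i, (Bhat i j - B i j) * (η i * (L.mulVec η) j))
        = η i * (∑ j ∈ π i, (Bhat i j - B i j) * (L.mulVec η) j) := by
      rw [Finset.mul_sum]
      exact Finset.sum_congr rfl fun j _ => by ring
    rw [e4, e5, e2, e1, Real.log_div (hσhat i).ne' (hσ i).ne']
    have h1 := (hσ i).ne'
    have h2 := (hσhat i).ne'
    field_simp
    ring
  simp_rw [hpt]
  have i1 : ∀ i, Integrable (fun η : Fin n → ℝ =>
      (1 / (2 * σhat i ^ 2) - 1 / (2 * σ i ^ 2)) * (η i * η i)) μ :=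
    fun i => (hηη i i).const_mul _
  have i2' : ∀ i, ∀ j ∈ π i, Integrable (fun η : Fin n → ℝ =>
      (Bhat i j - B i j) * (η i * (L.mulVec η) j)) μ := fun i j _ => (hηX i j).const_mul _
  have i2 : ∀ i, Integrable (fun η : Fin n → ℝ => (- 1 / σhat i ^ 2) *
      (∑ j ∈ π i, (Bhat i j - B i j) * (η i * (L.mulVec η) j))) μ :=
    fun i => (integrable_finsetSum _ (i2' i)).const_mul _
  have i3'' : ∀ i, ∀ j ∈ π i, ∀ k ∈ π i, Integrable (fun η : Fin n → ℝ =>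
      ((Bhat i j - B i j) * (Bhat i k - B i k)) * ((L.mulVec η) j * (L.mulVec η) k)) μ :=
    fun i j _ k _ => (hXX j k).const_mul _
  have i3' : ∀ i, ∀ j ∈ π i, Integrable (fun η : Fin n → ℝ => ∑ k ∈ π i,
      ((Bhat i j - B i j) * (Bhat i k - B i k)) * ((L.mulVec η) j * (L.mulVec η) k)) μ :=
    fun i j hj => integrable_finsetSum _ (i3'' i j hj)
  have i3 : ∀ i, Integrable (fun η : Fin n → ℝ => (1 / (2 * σhat i ^ 2)) *
      (∑ j ∈ π i, ∑ k ∈ π i,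
      ((Bhat i j - B i j) * (Bhat i k - B i k)) * ((L.mulVec η) j * (L.mulVec η) k))) μ :=
    fun i => (integrable_finsetSum _ (i3' i)).const_mul _
  have i4 := fun i => (i2 i).fun_add (i3 i)
  have i5 := fun i => (i1 i).fun_add (i4 i)
  have i6 := fun i => (integrable_const (μ := μ) (Real.log (σhat i / σ i))).fun_add (i5 i)
  rw [integral_finsetSum _ fun i _ => i6 i]
  refine Finset.sum_congr rfl fun i _ => ?_
  rw [integral_add (integrable_const _) (i5 i),
    integral_add (i1 i) (i4 i), integral_add (i2 i) (i3 i),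
    integral_const_mul, integral_const_mul, integral_const_mul,
    integral_finsetSum _ (i2' i), integral_finsetSum _ (i3' i), hcov]
  have z2 : ∑ j ∈ π i, ∫ η, (Bhat i j - B i j) * (η i * (L.mulVec η) j) ∂μ = 0 :=
    Finset.sum_eq_zero fun j hj => by rw [integral_const_mul, hcross i j hj, mul_zero]
  have z3 : ∑ j ∈ π i, ∫ η, ∑ k ∈ π i,
      ((Bhat i j - B i j) * (Bhat i k - B i k)) * ((L.mulVec η) j * (L.mulVec η) k) ∂μ
      = ∑ j ∈ π i, ∑ k ∈ π i, (Bhat i j - B i j) * (∫ η, (L.mulVec η) j * (L.mulVec η) k ∂μ)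
                * (Bhat i k - B i k) := by
    refine Finset.sum_congr rfl fun j hj => ?_
    rw [integral_finsetSum _ (i3'' i j hj)]
    refine Finset.sum_congr rfl fun k _ => ?_
    rw [integral_const_mul]; ring
  rw [z2, z3]
  have h1 := (hσ i).ne'
  have h2 := (hσhat i).ne'
  simp only [integral_const, probReal_univ, one_smul, if_true]
  field_simp
  ring
end

section
/- Let G ∈ ℝ^{k×d} be a random matrix with i.i.d. standard Gaussian N(0,1) entries. Then for any constant 0 < c₁ < 1/2 and any k ≥ d/c₁², with probability at least 1 − exp(−k·c₁²/2), the matrix GᵀG is invertible and its inverse has operator norm ‖(GᵀG)⁻¹‖_op ≤ 1/((1 − 2c₁)²·k). -/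
open MeasureTheory ProbabilityTheory Matrix

/-- The operator (spectral) norm of a real matrix, i.e. the operator norm of the induced
linear map between Euclidean spaces. -/
noncomputable def matOpNorm {m n : ℕ} (M : Matrix (Fin m) (Fin n) ℝ) : ℝ :=
  ‖LinearMap.toContinuousLinearMap (Matrix.toEuclideanLin M)‖

open scoped NNReal ENNReal

lemma aux_lintegral_pi_prod {ι : Type*} [Fintype ι] {Ω : ι → Type*} [∀ i, MeasurableSpace (Ω i)]
    (μ : ∀ i, Measure (Ω i)) [∀ i, IsProbabilityMeasure (μ i)] (f : ∀ i, Ω i → ℝ≥0∞)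
    (hf : ∀ i, Measurable (f i)) :
    ∫⁻ x, ∏ i, f i (x i) ∂(Measure.pi μ) = ∏ i, ∫⁻ x, f i x ∂(μ i) := by
  have h := lintegral_prod_eq_prod_lintegral_of_indepFun (μ := Measure.pi μ) Finset.univ
    (fun i (x : ∀ i, Ω i) => f i (x i))
    (iIndepFun_pi (X := f) fun i => (hf i).aemeasurable)
    (fun i => (hf i).comp (measurable_pi_apply i))
  rw [h]
  refine Finset.prod_congr rfl fun i _ => ?_
  exact (measurePreserving_eval μ i).lintegral_comp (hf i)

lemma aux_pi_withDensity {ι : Type*} [Fintype ι] {Ω : ι → Type*} [∀ i, MeasurableSpace (Ω i)]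
    (μ ν : ∀ i, Measure (Ω i)) [∀ i, IsProbabilityMeasure (μ i)] [∀ i, IsProbabilityMeasure (ν i)]
    (f : ∀ i, Ω i → ℝ≥0∞)
    (hf : ∀ i, Measurable (f i)) (h : ∀ i, ν i = (μ i).withDensity (f i)) :
    Measure.pi ν = (Measure.pi μ).withDensity (fun x => ∏ i, f i (x i)) := by
  classical
  refine Measure.pi_eq fun s hs => ?_
  rw [withDensity_apply _ (MeasurableSet.univ_pi hs), ← lintegral_indicator (MeasurableSet.univ_pi hs)]
  have : ∀ x : ∀ i, Ω i, (Set.univ.pi s).indicator (fun x => ∏ i, f i (x i)) x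
      = ∏ i, (s i).indicator (f i) (x i) := by
    intro x
    by_cases hx : x ∈ Set.univ.pi s
    · rw [Set.indicator_of_mem hx]
      refine Finset.prod_congr rfl fun i _ => ?_
      rw [Set.indicator_of_mem (hx i trivial)]
    · rw [Set.indicator_of_notMem hx]
      simp only [Set.mem_pi, not_forall] at hx
      obtain ⟨i, _, hi⟩ := hx
      symm
      exact Finset.prod_eq_zero (Finset.mem_univ i) (Set.indicator_of_notMem hi _)
  simp_rw [this]
  rw [aux_lintegral_pi_prod μ _ (fun i => (hf i).indicator (hs i))]
  refine Finset.prod_congr rfl fun i _ => ?_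
  rw [h i, withDensity_apply _ (hs i), lintegral_indicator (hs i)]

lemma aux_gauss_wd (m m' : ℝ) (V V' : ℝ≥0) (hV : V ≠ 0) (hV' : V' ≠ 0) :
    gaussianReal m V = (gaussianReal m' V').withDensity (fun x => ENNReal.ofReal
      (√V' / √V * Real.exp (-(x - m) ^ 2 / (2 * V) + (x - m') ^ 2 / (2 * V')))) := by
  rw [gaussianReal_of_var_ne_zero _ hV, gaussianReal_of_var_ne_zero _ hV',
    ← withDensity_mul _ (measurable_gaussianPDF _ _) (by fun_prop)]
  congr 1
  ext x
  rw [Pi.mul_apply, gaussianPDF, gaussianPDF, ← ENNReal.ofReal_mul (gaussianPDFReal_nonneg _ _ _)]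
  congr 1
  rw [gaussianPDFReal, gaussianPDFReal]
  have h1 : (0:ℝ) < V := by positivity
  have h2 : (0:ℝ) < V' := by positivity
  have e : Real.exp (-(x - m) ^ 2 / (2 * V)) = Real.exp (-(x - m') ^ 2 / (2 * V')) *
    Real.exp (-(x - m) ^ 2 / (2 * V) + (x - m') ^ 2 / (2 * V')) := by
    rw [← Real.exp_add]; congr 1; ring
  rw [e, Real.sqrt_mul (by positivity), Real.sqrt_mul (x := 2 * Real.pi) (by positivity)]
  have := Real.sqrt_pos.2 h1
  have := Real.sqrt_pos.2 h2
  field_simp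

lemma aux_gauss_pi {d : ℕ} (m m' : Fin d → ℝ) (V V' : ℝ≥0) (hV : V ≠ 0) (hV' : V' ≠ 0)
    (F : (Fin d → ℝ) → ℝ≥0∞) (hF : Measurable F) :
    ∫⁻ x, F x ∂(Measure.pi fun i => gaussianReal (m i) V) =
      ∫⁻ x, ENNReal.ofReal ((√V' / √V) ^ d * Real.exp (∑ i, (-(x i - m i) ^ 2 / (2 * V)
        + (x i - m' i) ^ 2 / (2 * V')))) * F x ∂(Measure.pi fun i => gaussianReal (m' i) V') := by
  rw [aux_pi_withDensity (fun i => gaussianReal (m' i) V') (fun i => gaussianReal (m i) V) _ ?_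
    (fun i => aux_gauss_wd (m i) (m' i) V V' hV hV'), lintegral_withDensity_eq_lintegral_mul _ _ hF]
  · refine lintegral_congr fun x => ?_
    rw [Pi.mul_apply, ← ENNReal.ofReal_prod_of_nonneg (fun i _ => by positivity),
      Finset.prod_mul_distrib, Finset.prod_const, Real.exp_sum]
    simp
  · exact Finset.measurable_prod _ fun i _ => by fun_prop
  · intro i; fun_prop

lemma aux_map_lin {d : ℕ} (m : Fin d → ℝ) (V : ℝ≥0) (a : Fin d → ℝ) :
    (Measure.pi fun i => gaussianReal (m i) V).map (fun x => ∑ i, a i * x i) =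
      gaussianReal (∑ i, a i * m i) (V * (∑ i, a i ^ 2).toNNReal) := by
  have hm : Measurable (fun x : Fin d → ℝ => ∑ i, a i * x i) := by fun_prop
  have : IsProbabilityMeasure ((Measure.pi fun i => gaussianReal (m i) V).map (fun x => ∑ i, a i * x i)) :=
    Measure.isProbabilityMeasure_map hm.aemeasurable
  refine Measure.ext_of_charFun ?_
  ext t
  rw [charFun_gaussianReal, charFun_apply_real, integral_map hm.aemeasurable (by fun_prop)]
  have h1 : ∀ x : Fin d → ℝ, Complex.exp (t * (∑ i, a i * x i : ℝ) * Complex.I) =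
      ∏ i, Complex.exp ((t * a i : ℝ) * (x i) * Complex.I) := by
    intro x
    rw [← Complex.exp_sum]
    congr 1
    push_cast
    rw [Finset.mul_sum, Finset.sum_mul]
    exact Finset.sum_congr rfl fun i _ => by ring
  simp_rw [h1]
  rw [integral_fintype_prod_eq_prod (𝕜 := ℂ) (fun i (y : ℝ) => Complex.exp ((t * a i : ℝ) * y * Complex.I))]
  simp_rw [← charFun_apply_real, charFun_gaussianReal]
  rw [← Complex.exp_sum]
  congr 1
  have h0 : 0 ≤ ∑ i, a i ^ 2 := Finset.sum_nonneg fun i _ => sq_nonneg _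
  push_cast [Real.coe_toNNReal _ h0]
  rw [Finset.sum_sub_distrib, Finset.mul_sum, Finset.sum_mul, Finset.mul_sum, Finset.sum_mul, Finset.sum_div]
  congr 1
  · exact Finset.sum_congr rfl fun i _ => by ring
  · exact Finset.sum_congr rfl fun i _ => by ring

lemma aux_exp_sq (B : ℝ≥0) (l : ℝ) (hl : 0 ≤ l) :
    ∫⁻ x, ENNReal.ofReal (Real.exp (-l / 2 * x ^ 2)) ∂(gaussianReal 0 B) =
      ENNReal.ofReal (1 / √(1 + l * B)) := by
  by_cases hB : B = 0
  · subst hB; simp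
  have hBp : (0:ℝ) < B := by positivity
  have hpos : 0 < 1 + l * B := by positivity
  set V : ℝ≥0 := ⟨B / (1 + l * B), by positivity⟩ with hV
  have hVp : (0:ℝ) < V := by show 0 < (B / (1 + l * B) : ℝ); positivity
  have hVe : (V : ℝ) = B / (1 + l * B) := rfl
  have hV0 : V ≠ 0 := fun h => by simp [h] at hVp
  have h := congrArg (fun ν => ν Set.univ) (aux_gauss_wd 0 0 V B hV0 hB)
  simp only [measure_univ, withDensity_apply _ MeasurableSet.univ, Measure.restrict_univ] at h
  have hs : √(B:ℝ) / √V = √(1 + l * B) := by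
    rw [← Real.sqrt_div (by positivity), hVe]; congr 1; field_simp
  have he : ∀ x : ℝ, ENNReal.ofReal (√(B:ℝ) / √V * Real.exp (-(x - 0) ^ 2 / (2 * V) + (x - 0) ^ 2 / (2 * B)))
      = ENNReal.ofReal (√(1 + l * B)) * ENNReal.ofReal (Real.exp (-l / 2 * x ^ 2)) := by
    intro x
    rw [hs, ENNReal.ofReal_mul (by positivity)]
    congr 3
    rw [hVe]; field_simp; ring
  simp_rw [he] at h
  rw [lintegral_const_mul _ (by fun_prop)] at h
  rw [one_div, ENNReal.ofReal_inv_of_pos (Real.sqrt_pos.2 hpos)]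
  exact ENNReal.eq_inv_of_mul_eq_one_left (by rw [mul_comm]; exact h.symm)

lemma aux_row {d : ℕ} (w : Fin d → ℝ) (A : ℝ) (hA : 0 < A) (l : ℝ) (hl : 0 ≤ l) :
    ∫⁻ g, ENNReal.ofReal (Real.exp (-l / 2 * (∑ i, g i * w i) ^ 2 + (1 - 1 / A) / 2 * ∑ i, g i ^ 2))
      ∂(Measure.pi fun _ : Fin d => gaussianReal 0 1) =
      ENNReal.ofReal (√A ^ d / √(1 + l * A * ∑ i, w i ^ 2)) := by
  set V : ℝ≥0 := ⟨A, hA.le⟩ with hV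
  have hVe : (V : ℝ) = A := rfl
  have hV0 : V ≠ 0 := fun h => by rw [h] at hVe; simp at hVe; linarith
  have h := aux_gauss_pi (fun _ : Fin d => 0) (fun _ => 0) V 1 hV0 one_ne_zero
    (fun g => ENNReal.ofReal (√A ^ d * Real.exp (-l / 2 * (∑ i, g i * w i) ^ 2))) (by fun_prop)
  have h2 := aux_map_lin (fun _ : Fin d => 0) V w
  have h3 := aux_exp_sq (V * (∑ i, w i ^ 2).toNNReal) l hl
  have h0 : 0 ≤ ∑ i, w i ^ 2 := Finset.sum_nonneg fun i _ => sq_nonneg _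
  simp only [mul_zero, Finset.sum_const_zero] at h2
  rw [← h2, lintegral_map (by fun_prop) (by fun_prop)] at h3
  have hsA : 0 < √A := Real.sqrt_pos.2 hA
  calc _ = ∫⁻ x, ENNReal.ofReal ((√A ^ d) * Real.exp (-l / 2 * (∑ i, x i * w i) ^ 2)) ∂(Measure.pi fun i : Fin d => gaussianReal 0 V) := by
        rw [h]
        refine lintegral_congr fun x => ?_
        rw [← ENNReal.ofReal_mul (by positivity)]
        congr 1
        have : (√((1:ℝ≥0):ℝ) / √V) ^ d = (√A ^ d)⁻¹ := by simp [hVe]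
        rw [this, mul_mul_mul_comm, inv_mul_cancel₀ (by positivity), one_mul, ← Real.exp_add]
        congr 1
        rw [add_comm, Finset.mul_sum]
        congr 1
        refine Finset.sum_congr rfl fun i _ => ?_
        rw [hVe]; simp only [NNReal.coe_one]; field_simp; ring
    _ = ENNReal.ofReal (√A ^ d) * ENNReal.ofReal (1 / √(1 + l * A * ∑ i, w i ^ 2)) := by
        simp_rw [ENNReal.ofReal_mul (pow_nonneg hsA.le d)]
        rw [lintegral_const_mul _ (by fun_prop)]
        congr 1
        rw [NNReal.coe_mul, Real.coe_toNNReal _ h0, hVe, ← mul_assoc] at h3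
        rw [← h3]
        refine lintegral_congr fun x => ?_
        simp_rw [mul_comm]
    _ = _ := by
        rw [← ENNReal.ofReal_mul (by positivity)]; congr 1; ring

lemma aux_deriv (m v : ℝ) (p p' : ℝ → ℝ) (hp : ∀ t, HasDerivAt p (p' t) t) :
    deriv (fun t => p t * Real.exp (m * t + v * t ^ 2 / 2)) =
      fun t => (p' t + p t * (m + v * t)) * Real.exp (m * t + v * t ^ 2 / 2) := by
  ext t
  have h1 : HasDerivAt (fun t => m * t + v * t ^ 2 / 2) (m + v * t) t := by
    have a := ((hasDerivAt_id t).const_mul m).add ((((hasDerivAt_id t).pow 2).const_mul v).div_const 2)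
    refine a.congr_deriv ?_
    simp; ring
  have := ((hp t).mul h1.exp).deriv
  refine Eq.trans this ?_
  ring

lemma aux_moment4 (m : ℝ) (V : ℝ≥0) :
    ∫ x, x ^ 4 ∂(gaussianReal m V) = m ^ 4 + 6 * m ^ 2 * V + 3 * V ^ 2 := by
  have h := iteratedDeriv_mgf_zero (X := id) (μ := gaussianReal m V)
    (by simp [integrableExpSet_id_gaussianReal]) 4
  have e : (∫ x, x ^ 4 ∂(gaussianReal m V)) = (gaussianReal m V)[id ^ 4] := rfl
  rw [e, ← h, mgf_id_gaussianReal]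
  have hv := fun t : ℝ => hasDerivAt_id t
  rw [iteratedDeriv_succ', iteratedDeriv_succ', iteratedDeriv_succ', iteratedDeriv_succ', iteratedDeriv_zero]
  have d1 : deriv (fun t => Real.exp (m * t + V * t ^ 2 / 2)) =
      fun t => (m + V * t) * Real.exp (m * t + V * t ^ 2 / 2) := by
    have := aux_deriv m V (fun _ => 1) (fun _ => 0) (fun t => hasDerivAt_const _ _)
    simpa using this
  have hq : ∀ t : ℝ, HasDerivAt (fun t => m + V * t) V t := fun t => by
    simpa using ((hasDerivAt_id t).const_mul (V:ℝ)).const_add m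
  rw [d1, aux_deriv m V _ _ hq]
  have hq2 : ∀ t : ℝ, HasDerivAt (fun t => V + (m + V * t) * (m + V * t)) (2 * V * (m + V * t)) t := fun t => by
    exact (((hq t).mul (hq t)).const_add (V:ℝ)).congr_deriv (by ring)
  rw [aux_deriv m V _ _ hq2]
  have hq3 : ∀ t : ℝ, HasDerivAt (fun t => 2 * V * (m + V * t) + (V + (m + V * t) * (m + V * t)) * (m + V * t))
      (2 * V * V + (2 * V * (m + V * t) * (m + V * t) + (V + (m + V * t) * (m + V * t)) * V)) t := fun t =>
    ((hq t).const_mul (2 * (V:ℝ))).add ((hq2 t).mul (hq t))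
  rw [aux_deriv m V _ _ hq3]
  simp; ring

lemma aux_moment2 (m : ℝ) (V : ℝ≥0) :
    ∫ x, x ^ 2 ∂(gaussianReal m V) = m ^ 2 + V := by
  have h := variance_eq_sub (memLp_id_gaussianReal (μ := m) (v := V) 2)
  rw [variance_id_gaussianReal] at h
  simp only [Pi.pow_apply, id, integral_id_gaussianReal] at h
  linarith

lemma aux_memLp_sq (m : ℝ) (V : ℝ≥0) : MemLp (fun x : ℝ => x ^ 2) 2 (gaussianReal m V) := by
  rw [memLp_two_iff_integrable_sq (by fun_prop)]
  have h := (memLp_id_gaussianReal (μ := m) (v := V) 4).integrable_norm_pow (by norm_num)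
  refine h.congr (ae_of_all _ fun x => ?_)
  simp only [id, Real.norm_eq_abs]
  rw [show |x| ^ 4 = (|x| ^ 2) ^ 2 by ring, sq_abs]

lemma aux_var_sq (m : ℝ) (V : ℝ≥0) :
    Var[fun x : ℝ => x ^ 2; gaussianReal m V] = 2 * V ^ 2 + 4 * V * m ^ 2 := by
  rw [variance_eq_sub (aux_memLp_sq m V)]
  have : ∫ x, ((fun x : ℝ => x ^ 2) ^ 2) x ∂(gaussianReal m V) = ∫ x, x ^ 4 ∂(gaussianReal m V) := by
    congr 1; ext x; simp; ring
  rw [this, aux_moment4, aux_moment2]; ring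

section
variable {d : ℕ} (v : Fin d → ℝ) (V : ℝ≥0)

lemma aux_memLp_X : MemLp (fun w : Fin d → ℝ => ∑ i, w i ^ 2) 2
    (Measure.pi fun i => gaussianReal (v i) V) := by
  refine memLp_finsetSum _ fun i _ => ?_
  exact (aux_memLp_sq (v i) V).comp_measurePreserving (measurePreserving_eval (fun i => gaussianReal (v i) V) i)

lemma aux_int_X : ∫ w, ∑ i, w i ^ 2 ∂(Measure.pi fun i => gaussianReal (v i) V) = ∑ i, v i ^ 2 + d * V := by
  rw [integral_finsetSum]
  · have : ∀ i, ∫ w : Fin d → ℝ, w i ^ 2 ∂(Measure.pi fun i => gaussianReal (v i) V) = v i ^ 2 + V := by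
      intro i
      rw [← aux_moment2 (v i) V, ← (measurePreserving_eval (fun i => gaussianReal (v i) V) i).map_eq,
        integral_map (measurable_pi_apply i).aemeasurable (by fun_prop)]
    simp [this, Finset.sum_add_distrib]
  · intro i _
    exact ((aux_memLp_sq (v i) V).comp_measurePreserving (measurePreserving_eval (fun i => gaussianReal (v i) V) i)).integrable (by norm_num)

lemma aux_var_X : ∫ w, (∑ i, w i ^ 2 - (∑ i, v i ^ 2 + d * V)) ^ 2 ∂(Measure.pi fun i => gaussianReal (v i) V)
    = 2 * d * V ^ 2 + 4 * V * ∑ i, v i ^ 2 := by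
  have h := variance_sum_pi (μ := fun i => gaussianReal (v i) V) (X := fun i x => x ^ 2) (fun i => aux_memLp_sq (v i) V)
  have e : (∑ i, fun ω : Fin d → ℝ => ω i ^ 2) = fun w => ∑ i, w i ^ 2 := by ext; simp
  rw [e, variance_eq_integral (Measurable.aemeasurable (by fun_prop)), aux_int_X] at h
  rw [h]
  simp [aux_var_sq, Finset.sum_add_distrib, Finset.mul_sum]; ring

lemma aux_memLp_lin (a : Fin d → ℝ) : MemLp (fun w : Fin d → ℝ => ∑ i, a i * w i) 2
    (Measure.pi fun i => gaussianReal (v i) V) := by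
  refine memLp_finsetSum _ fun i _ => ?_
  exact ((memLp_id_gaussianReal (μ := v i) (v := V) 2).comp_measurePreserving
    (measurePreserving_eval (fun i => gaussianReal (v i) V) i)).const_mul (a i)

lemma aux_int_lin (a : Fin d → ℝ) : ∫ w, (∑ i, a i * w i) ^ 2 ∂(Measure.pi fun i => gaussianReal (v i) V)
    = (∑ i, a i * v i) ^ 2 + V * ∑ i, a i ^ 2 := by
  have h := aux_moment2 (∑ i, a i * v i) (V * (∑ i, a i ^ 2).toNNReal)
  rw [← aux_map_lin, integral_map (Measurable.aemeasurable (by fun_prop)) (by fun_prop)] at h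
  rw [h, NNReal.coe_mul, Real.coe_toNNReal _ (Finset.sum_nonneg fun i _ => sq_nonneg _)]

end

lemma aux_log (b z : ℝ) (hb : 0 < b) (hz : b ≤ 1 + z) (hb1 : b ≤ 1) : z - z ^ 2 / (2 * b) ≤ Real.log (1 + z) := by
  rcases le_or_gt 0 z with h | h
  · have h1 := Real.le_log_one_add_of_nonneg h
    refine le_trans ?_ h1
    have : z ^ 2 / 2 ≤ z ^ 2 / (2 * b) := by gcongr; nlinarith
    have h2 : z - z ^ 2 / 2 ≤ 2 * z / (z + 2) := by
      rw [le_div_iff₀ (by positivity)]; nlinarith [pow_nonneg h 3]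
    linarith
  · -- substitute u = -z/(1+z)
    have hp : 0 < 1 + z := by linarith
    have h1 : z - z ^ 2 / (2 * (1 + z)) ≤ Real.log (1 + z) := by
      have h2 := Real.sinh_le_self_iff.2 (Real.log_nonpos hp.le (by linarith))
      rw [Real.sinh_log hp] at h2
      refine le_trans (le_of_eq ?_) h2
      field_simp; ring
    refine le_trans ?_ h1
    have : z ^ 2 / (2 * (1 + z)) ≤ z ^ 2 / (2 * b) := by gcongr
    linarith

lemma aux_q (L x x0 : ℝ) (hL : 0 < L) (hx : 0 ≤ x) (hx0 : 0 ≤ x0) :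
    Real.log (1 + L * x0) + L * (x - x0) / (1 + L * x0) - L ^ 2 * (x - x0) ^ 2 / (2 * (1 + L * x0))
      ≤ Real.log (1 + L * x) := by
  have hp : 0 < 1 + L * x0 := by positivity
  have hp1 : 0 < 1 + L * x := by positivity
  have h := aux_log (1 / (1 + L * x0)) (L * (x - x0) / (1 + L * x0)) (by positivity) (by
    rw [div_le_iff₀ hp]; field_simp; nlinarith [mul_nonneg hL.le hx]) (by
    rw [div_le_iff₀ hp]; nlinarith [mul_nonneg hL.le hx0])
  have e : 1 + L * (x - x0) / (1 + L * x0) = (1 + L * x) / (1 + L * x0) := by field_simp; ring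
  rw [e, Real.log_div hp1.ne' hp.ne'] at h
  have e2 : (L * (x - x0) / (1 + L * x0)) ^ 2 / (2 * (1 / (1 + L * x0))) = L ^ 2 * (x - x0) ^ 2 / (2 * (1 + L * x0)) := by
    field_simp
  rw [e2] at h
  linarith

lemma aux_det {k d : ℕ} (G : Fin k → Fin d → ℝ) (T : ℝ) (hT : 0 < T)
    (h : ∀ v : Fin d → ℝ, ∑ i, v i ^ 2 = 1 → T < ∑ j, (∑ i, G j i * v i) ^ 2) :
    IsUnit ((Matrix.of G)ᵀ * Matrix.of G) ∧
          matOpNorm ((Matrix.of G)ᵀ * Matrix.of G)⁻¹ ≤ 1 / T := by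
  set M := (Matrix.of G)ᵀ * Matrix.of G with hM
  have h1 : ∀ v : Fin d → ℝ, T * (v ⬝ᵥ v) ≤ v ⬝ᵥ (M *ᵥ v) := by
    intro v
    have e : v ⬝ᵥ (M *ᵥ v) = ∑ j, (∑ i, G j i * v i) ^ 2 := by
      rw [hM, ← Matrix.mulVec_mulVec, Matrix.dotProduct_mulVec, Matrix.vecMul_transpose]
      simp [dotProduct, mulVec, sq]
    have e2 : v ⬝ᵥ v = ∑ i, v i ^ 2 := by simp [dotProduct, sq]
    rw [e, e2]
    set r := ∑ i, v i ^ 2 with hr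
    have hr0 : 0 ≤ r := Finset.sum_nonneg fun i _ => sq_nonneg _
    rcases hr0.eq_or_lt with h0 | h0
    · rw [← h0, mul_zero]; exact Finset.sum_nonneg fun i _ => sq_nonneg _
    · have := h (fun i => v i / √r) (by
        simp_rw [div_pow, Real.sq_sqrt hr0]
        rw [← Finset.sum_div, ← hr, div_self h0.ne'])
      simp_rw [mul_div_assoc', ← Finset.sum_div, div_pow, Real.sq_sqrt hr0] at this
      rw [← Finset.sum_div, lt_div_iff₀ h0] at this
      exact this.le
  have hU : IsUnit M := by
    rw [← Matrix.mulVec_injective_iff_isUnit]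
    intro x y hxy
    have h2 : M *ᵥ (x - y) = 0 := by rw [Matrix.mulVec_sub]; exact sub_eq_zero.2 hxy
    have h3 := h1 (x - y)
    rw [h2, dotProduct_zero] at h3
    have h4 : 0 ≤ (x - y) ⬝ᵥ (x - y) := by
      simp only [dotProduct]; exact Finset.sum_nonneg fun i _ => mul_self_nonneg _
    have h5 : (x - y) ⬝ᵥ (x - y) = 0 := by nlinarith
    exact sub_eq_zero.1 (dotProduct_self_eq_zero.1 h5)
  refine ⟨hU, ?_⟩
  have hdet : IsUnit M.det := (Matrix.isUnit_iff_isUnit_det M).1 hU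
  refine ContinuousLinearMap.opNorm_le_bound _ (by positivity) fun x => ?_
  set y : EuclideanSpace ℝ (Fin d) := Matrix.toEuclideanLin M⁻¹ x with hy
  show ‖y‖ ≤ 1 / T * ‖x‖
  have hxy : M *ᵥ (WithLp.ofLp y) = WithLp.ofLp x := by
    rw [hy, Matrix.ofLp_toLpLin, Matrix.toLin'_apply, Matrix.mulVec_mulVec, Matrix.mul_nonsing_inv _ hdet, Matrix.one_mulVec]
  have h2 := h1 (WithLp.ofLp y)
  rw [hxy] at h2
  have e1 : WithLp.ofLp y ⬝ᵥ WithLp.ofLp y = ‖y‖ ^ 2 := by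
    rw [EuclideanSpace.real_norm_sq_eq]; simp [dotProduct, sq]
  have e2 : WithLp.ofLp y ⬝ᵥ WithLp.ofLp x ≤ ‖y‖ * ‖x‖ := by
    have := real_inner_le_norm x y
    rw [EuclideanSpace.inner_eq_star_dotProduct] at this
    simp at this
    linarith
  rw [e1] at h2
  rcases (norm_nonneg y).eq_or_lt with h0 | h0
  · rw [← h0]; positivity
  · have : T * ‖y‖ ≤ ‖x‖ := by
      by_contra hc
      push Not at hc
      nlinarith
    rw [one_div, ← div_eq_inv_mul, le_div_iff₀ hT]; linarith

lemma aux_num (c : ℝ) (h0 : 0 < c) (h1 : c < 1 / 2) : ∃ L : ℝ, 0 < L ∧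
    L * ((1 - 2 * c) ^ 2 + 1/40) + c ^ 2 * (1 + Real.log ((1+1/40)/(1/40)))
      - Real.log (1 + L * (1 + 1/40)) + L ^ 2 * (2 * (1/40)^2 + 4 * (1/40)) / (2 * (1 + L * (1 + 1/40))) ≤ 0 := by
  have hl : Real.log ((1+1/40)/(1/40)) ≤ 3.8 := by
    rw [Real.log_le_iff_le_exp (by norm_num)]
    have := Real.exp_one_gt_d9
    have e : Real.exp 3.8 = Real.exp 1 ^ 3 * Real.exp 0.8 := by
      rw [← Real.exp_nat_mul, ← Real.exp_add]; norm_num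
    have e3 : (2.718:ℝ)^3 ≤ Real.exp 1 ^ 3 := by gcongr; linarith
    have e4 : (2.1:ℝ) ≤ Real.exp 0.8 := by
      have := Real.quadratic_le_exp_of_nonneg (show (0:ℝ) ≤ 0.8 by norm_num)
      norm_num at this ⊢; linarith
    rw [e]
    nlinarith
  rcases le_or_gt c 0.3 with hc | hc
  · refine ⟨4 * c, by positivity, ?_⟩
    have hg := Real.le_log_one_add_of_nonneg (show 0 ≤ 4 * c * (1 + 1/40) by positivity)
    have : 4 * c * ((1 - 2 * c) ^ 2 + 1/40) + c ^ 2 * 4.8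
      - 2 * (4 * c * (1 + 1/40)) / (4 * c * (1 + 1/40) + 2) + (4 * c) ^ 2 * (2 * (1/40)^2 + 4 * (1/40)) / (2 * (1 + 4 * c * (1 + 1/40))) ≤ 0 := by
      have a1 : (4 * c) ^ 2 * (2 * (1/40)^2 + 4 * (1/40)) / (2 * (1 + 4 * c * (1 + 1/40))) ≤ c ^ 2 * 0.82 := by
        rw [div_le_iff₀ (by positivity)]; nlinarith [sq_nonneg c, pow_pos h0 3]
      have a2 : 4 * c * ((1 - 2 * c) ^ 2 + 1/40) + c ^ 2 * 4.8 + c ^ 2 * 0.82 ≤ 2 * (4 * c * (1 + 1/40)) / (4 * c * (1 + 1/40) + 2) := by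
        rw [le_div_iff₀ (by positivity)]
        have : 0 ≤ c ^ 2 * ( 1 - 0 ) := by positivity
        have key : (4 * ((1 - 2 * c) ^ 2 + 1/40) + c * 4.8 + c * 0.82) * (4 * c * (1 + 1/40) + 2) ≤ 2 * (4 * (1 + 1/40)) := by
          nlinarith [mul_nonneg h0.le (sub_nonneg.2 hc), mul_nonneg (sq_nonneg c) (sub_nonneg.2 hc)]
        nlinarith
      linarith
    nlinarith [sq_nonneg c]
  · refine ⟨5, by norm_num, ?_⟩
    have hg : 1.75 ≤ Real.log (1 + 5 * (1 + 1/40)) := by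
      rw [Real.le_log_iff_exp_le (by norm_num)]
      have e : Real.exp 1.75 = Real.exp 1 ^ 2 / Real.exp 0.25 := by
        rw [← Real.exp_nat_mul, ← Real.exp_sub]; norm_num
      have e4 : (1.25:ℝ) ≤ Real.exp 0.25 := by
        have := Real.add_one_le_exp (0.25:ℝ); norm_num at this ⊢; linarith
      have := Real.exp_one_lt_d9
      have e5 : Real.exp 1 ^ 2 ≤ 2.7183 ^ 2 := by gcongr; linarith
      rw [e, div_le_iff₀ (by positivity)]
      nlinarith
    nlinarith [sq_nonneg c]

lemma aux_jensen {Ω : Type*} [MeasurableSpace Ω] (μ : Measure Ω) [IsProbabilityMeasure μ] (F : Ω → ℝ)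
    (hF : Integrable F μ) :
    ENNReal.ofReal (Real.exp (∫ x, F x ∂μ)) ≤ ∫⁻ x, ENNReal.ofReal (Real.exp (F x)) ∂μ := by
  set a := ∫ x, F x ∂μ with ha
  have hi : Integrable (fun x => Real.exp a * (F x - a + 1)) μ := by fun_prop
  have h1 : ∫ x, Real.exp a * (F x - a + 1) ∂μ = Real.exp a := by
    rw [integral_const_mul, integral_add (by fun_prop) (by fun_prop), integral_sub hF (by fun_prop)]
    simp [← ha]
  have h2 := integral_eq_lintegral_pos_part_sub_lintegral_neg_part hi
  rw [h1] at h2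
  calc ENNReal.ofReal (Real.exp a) ≤ ENNReal.ofReal (∫⁻ x, ENNReal.ofReal (Real.exp a * (F x - a + 1)) ∂μ).toReal := by
        apply ENNReal.ofReal_le_ofReal
        linarith [h2, ENNReal.toReal_nonneg (a := ∫⁻ x, ENNReal.ofReal (-(Real.exp a * (F x - a + 1))) ∂μ)]
    _ ≤ ∫⁻ x, ENNReal.ofReal (Real.exp a * (F x - a + 1)) ∂μ := ENNReal.ofReal_toReal_le
    _ ≤ _ := by
        refine lintegral_mono fun x => ENNReal.ofReal_le_ofReal ?_
        have := Real.add_one_le_exp (F x - a)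
        calc _ ≤ Real.exp a * Real.exp (F x - a) := by gcongr
          _ = _ := by rw [← Real.exp_add]; congr 1; ring

lemma aux_comb {Ω : Type*} [MeasurableSpace Ω] (μ : Measure Ω) [IsProbabilityMeasure μ]
    (Q X Y l : Ω → ℝ) (hQ : Integrable Q μ) (hX : Integrable X μ) (hY : Integrable Y μ)
    (hl : Integrable l μ) (c0 c1 c2 c3 c4 : ℝ) :
    Integrable (fun x => c0 + c1 * Q x + c2 * X x + c3 * Y x + c4 * l x) μ ∧
    ∫ x, (c0 + c1 * Q x + c2 * X x + c3 * Y x + c4 * l x) ∂μ =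
      c0 + c1 * ∫ x, Q x ∂μ + c2 * ∫ x, X x ∂μ + c3 * ∫ x, Y x ∂μ + c4 * ∫ x, l x ∂μ := by
  refine ⟨by fun_prop, ?_⟩
  rw [integral_add (by fun_prop) (by fun_prop), integral_add (by fun_prop) (by fun_prop),
    integral_add (by fun_prop) (by fun_prop), integral_add (by fun_prop) (by fun_prop)]
  simp [integral_const_mul]

noncomputable def auxE (k d : ℕ) (s L : ℝ) (G : Fin k → Fin d → ℝ) (w : Fin d → ℝ) : ℝ :=
  -(L / (1 + L * (s / d))) / 2 * ∑ j, (∑ i, G j i * w i) ^ 2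
    + (1 - 1 / (1 + L * (s / d))) / 2 * ∑ j, ∑ i, G j i ^ 2
    + k / 2 * (Real.log (1 + L * (1 + s)) + L * (∑ i, w i ^ 2 - (1 + s)) / (1 + L * (1 + s))
        - L ^ 2 * (∑ i, w i ^ 2 - (1 + s)) ^ 2 / (2 * (1 + L * (1 + s))))

noncomputable def auxH (k d : ℕ) (s L : ℝ) (G : Fin k → Fin d → ℝ) : ℝ≥0∞ :=
  ∫⁻ w, ENNReal.ofReal (Real.exp (auxE k d s L G w))
    ∂(Measure.pi fun _ : Fin d => gaussianReal 0 (Real.toNNReal ((1 + s) / d)))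

lemma auxE_meas (k d : ℕ) (s L : ℝ) : Measurable (fun p : (Fin k → Fin d → ℝ) × (Fin d → ℝ) =>
    ENNReal.ofReal (Real.exp (auxE k d s L p.1 p.2))) := by
  unfold auxE
  fun_prop

lemma auxH_meas (k d : ℕ) (s L : ℝ) : Measurable (auxH k d s L) :=
  (auxE_meas k d s L).lintegral_prod_right'

lemma auxE_meas2 (k d : ℕ) (s L : ℝ) (G : Fin k → Fin d → ℝ) :
    Measurable (fun w : Fin d → ℝ => ENNReal.ofReal (Real.exp (auxE k d s L G w))) := by
  unfold auxE
  fun_prop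

lemma auxH_lower (k d : ℕ) (hd : 0 < d) (s L : ℝ) (hs : 0 < s) (hL : 0 < L)
    (G : Fin k → Fin d → ℝ) (v : Fin d → ℝ) (hv : ∑ i, v i ^ 2 = 1) :
    ENNReal.ofReal (Real.exp (-(L / (1 + L * (s / d))) / 2 * ∑ j, (∑ i, G j i * v i) ^ 2
      + k / 2 * (Real.log (1 + L * (1 + s))
        - L ^ 2 * ((2 * s ^ 2 + 4 * s) / d) / (2 * (1 + L * (1 + s))))
      - d / 2 * Real.log ((1 + s) / s))) ≤ auxH k d s L G := by
  have hdp : (0:ℝ) < d := by exact_mod_cast hd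
  obtain ⟨τ, hτ, hτe⟩ : ∃ τ : ℝ≥0, τ = Real.toNNReal ((1 + s) / d) ∧ (τ : ℝ) = (1 + s) / d :=
    ⟨_, rfl, Real.coe_toNNReal _ (by positivity)⟩
  obtain ⟨σ, hσe⟩ : ∃ σ : ℝ≥0, (σ : ℝ) = s / d :=
    ⟨Real.toNNReal (s / d), Real.coe_toNNReal _ (by positivity)⟩
  have hτ0 : τ ≠ 0 := by
    intro h; rw [h] at hτe; simp only [NNReal.coe_zero] at hτe
    have : 0 < (1 + s) / d := by positivity
    linarith
  have hσ0 : σ ≠ 0 := by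
    intro h; rw [h] at hσe; simp only [NNReal.coe_zero] at hσe
    have : 0 < s / d := by positivity
    linarith
  have hP : 0 < 1 + L * (1 + s) := by positivity
  have hP2 : 0 < 1 + L * (s / d) := by positivity
  rw [auxH, ← hτ, aux_gauss_pi (fun _ => 0) v τ σ hτ0 hσ0 _ (auxE_meas2 k d s L G)]
  have hlog : (√(σ:ℝ) / √τ) ^ d = Real.exp (-(d / 2 * Real.log ((1 + s) / s))) := by
    rw [← Real.sqrt_div (by positivity), hσe, hτe]
    have : s / d / ((1 + s) / d) = ((1 + s) / s)⁻¹ := by field_simp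
    rw [this, Real.sqrt_eq_rpow, Real.rpow_def_of_pos (by positivity), Real.log_inv, ← Real.exp_nat_mul]
    congr 1; ring
  set N := ∑ j, ∑ i, G j i ^ 2 with hN
  have i1 : Integrable (fun w : Fin d → ℝ => ∑ j, (∑ i, G j i * w i) ^ 2)
      (Measure.pi fun i => gaussianReal (v i) σ) :=
    integrable_finsetSum _ fun j _ => (aux_memLp_lin v σ (G j)).integrable_sq
  have i2 : Integrable (fun w : Fin d → ℝ => ∑ i, w i ^ 2)
      (Measure.pi fun i => gaussianReal (v i) σ) :=
    (aux_memLp_X v σ).integrable (by norm_num)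
  have i3 : Integrable (fun w : Fin d → ℝ => (∑ i, w i ^ 2 - (∑ i, v i ^ 2 + d * σ)) ^ 2)
      (Measure.pi fun i => gaussianReal (v i) σ) :=
    ((aux_memLp_X v σ).sub (memLp_const _)).integrable_sq
  have i4 : Integrable (fun w : Fin d → ℝ => ∑ i, v i * w i)
      (Measure.pi fun i => gaussianReal (v i) σ) :=
    (aux_memLp_lin v σ v).integrable (by norm_num)
  obtain ⟨hint, hval⟩ := aux_comb (Measure.pi fun i => gaussianReal (v i) σ)
    (fun w => ∑ j, (∑ i, G j i * w i) ^ 2) (fun w => ∑ i, w i ^ 2)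
    (fun w => (∑ i, w i ^ 2 - (∑ i, v i ^ 2 + d * σ)) ^ 2) (fun w => ∑ i, v i * w i)
    i1 i2 i3 i4
    (-(d / 2 * Real.log ((1 + s) / s)) + (1 - 1 / (1 + L * (s / d))) / 2 * N
      + k / 2 * (Real.log (1 + L * (1 + s)) - L * (1 + s) / (1 + L * (1 + s))) + d / (2 * s))
    (-(L / (1 + L * (s / d))) / 2)
    (-d / (2 * (1 + s)) + d / (2 * s) + k / 2 * (L / (1 + L * (1 + s))))
    (-(k / 2 * (L ^ 2 / (2 * (1 + L * (1 + s)))))) (-d / s)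
  have hJ := aux_jensen _ _ hint
  rw [hval] at hJ
  rw [aux_int_X, aux_var_X, integral_finsetSum _ (fun j _ => (aux_memLp_lin v σ (G j)).integrable_sq)] at hJ
  simp_rw [aux_int_lin] at hJ
  have hlin : ∫ w, ∑ i, v i * w i ∂(Measure.pi fun i => gaussianReal (v i) σ) = 1 := by
    have h := integral_id_gaussianReal (μ := ∑ i, v i * v i) (v := σ * (∑ i, v i ^ 2).toNNReal)
    rw [← aux_map_lin, integral_map (Measurable.aemeasurable (by fun_prop)) (by fun_prop)] at h
    rw [h, ← hv]; exact Finset.sum_congr rfl fun i _ => by ring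
  rw [hlin, Finset.sum_add_distrib, ← Finset.mul_sum, ← hN, hv, hσe] at hJ
  have hds : 1 + d * (s / d) = 1 + s := by field_simp
  refine le_trans (le_of_eq ?_) (hJ.trans (le_of_eq ?_))
  · congr 2
    rw [hds]
    set R := ∑ j, (∑ i, G j i * v i) ^ 2
    set ll := Real.log (1 + L * (1 + s))
    set l2 := Real.log ((1 + s) / s)
    set P := 1 + L * (1 + s) with hPd
    set A := 1 + L * (s / d) with hA
    have e1 : (1 - 1 / A) = L / A * (s / d) := by
      field_simp; rw [hA]; field_simp; ring
    rw [e1]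
    field_simp
    ring
  · refine lintegral_congr fun x => ?_
    rw [hlog, ← Real.exp_add, ← ENNReal.ofReal_mul (by positivity), ← Real.exp_add]
    congr 2
    rw [hds]
    have e : ∑ i, (-(x i - 0) ^ 2 / (2 * (τ:ℝ)) + (x i - v i) ^ 2 / (2 * (σ:ℝ))) =
      (-d / (2 * (1 + s)) + d / (2 * s)) * ∑ i, x i ^ 2 + d / (2 * s) + -d / s * ∑ i, v i * x i := by
      have e0 : (d / (2 * s) : ℝ) = ∑ i, d / (2 * s) * v i ^ 2 := by
        rw [← Finset.mul_sum, hv, mul_one]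
      have e1 : (-d / (2 * (1 + s)) + d / (2 * s)) * ∑ i, x i ^ 2 + d / (2 * s) + -d / s * ∑ i, v i * x i
        = (-d / (2 * (1 + s)) + d / (2 * s)) * ∑ i, x i ^ 2 + (∑ i, d / (2 * s) * v i ^ 2)
          + -d / s * ∑ i, v i * x i := by rw [← e0]
      rw [e1, Finset.mul_sum, Finset.mul_sum, ← Finset.sum_add_distrib, ← Finset.sum_add_distrib]
      refine Finset.sum_congr rfl fun i _ => ?_
      rw [hτe, hσe]
      field_simp; ring
    rw [e, auxE, ← hN]
    ring

lemma auxH_upper (k d : ℕ) (hd : 0 < d) (s L : ℝ) (hs : 0 < s) (hL : 0 < L) :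
    ∫⁻ G, auxH k d s L G ∂(Measure.pi fun _ : Fin k => Measure.pi fun _ : Fin d => gaussianReal 0 1) ≤
      ENNReal.ofReal (Real.exp (k / 2 * (L * s))) := by
  have hdp : (0:ℝ) < d := by exact_mod_cast hd
  unfold auxH
  rw [lintegral_lintegral_swap (auxE_meas k d s L).aemeasurable]
  set A := 1 + L * (s / d) with hA
  have hAp : 0 < A := by positivity
  have hAd : √A ^ d ≤ Real.exp (1 / 2 * (L * s)) := by
    have h1 : A ≤ Real.exp (L * (s / d)) := by
      have := Real.add_one_le_exp (L * (s / d)); linarith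
    have h2 : √A ≤ Real.exp (1 / 2 * (L * (s / d))) := by
      rw [Real.sqrt_le_left (by positivity), ← Real.exp_nat_mul]
      refine h1.trans (le_of_eq ?_); congr 1; push_cast; ring
    calc √A ^ d ≤ (Real.exp (1 / 2 * (L * (s / d)))) ^ d := by gcongr
      _ = _ := by rw [← Real.exp_nat_mul]; congr 1; field_simp
  have key : ∀ w : Fin d → ℝ, ∫⁻ G, ENNReal.ofReal (Real.exp (auxE k d s L G w))
      ∂(Measure.pi fun _ : Fin k => Measure.pi fun _ : Fin d => gaussianReal 0 1)
      ≤ ENNReal.ofReal (Real.exp (k / 2 * (L * s))) := by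
    intro w
    set X := ∑ i, w i ^ 2 with hX
    have hX0 : 0 ≤ X := Finset.sum_nonneg fun i _ => sq_nonneg _
    set q := Real.log (1 + L * (1 + s)) + L * (X - (1 + s)) / (1 + L * (1 + s))
        - L ^ 2 * (X - (1 + s)) ^ 2 / (2 * (1 + L * (1 + s))) with hq
    have hql : q ≤ Real.log (1 + L * X) := aux_q L X (1 + s) hL hX0 (by positivity)
    have hqe : Real.exp (q / 2) ≤ √(1 + L * X) := by
      apply Real.le_sqrt_of_sq_le
      rw [← Real.exp_nat_mul]
      rw [Real.le_log_iff_exp_le (by positivity)] at hql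
      refine le_trans (le_of_eq ?_) hql
      congr 1; push_cast; ring
    have e : ∀ G : Fin k → Fin d → ℝ, ENNReal.ofReal (Real.exp (auxE k d s L G w)) =
        ∏ j, ENNReal.ofReal (Real.exp (q / 2)) * ENNReal.ofReal (Real.exp (-(L / A) / 2 * (∑ i, G j i * w i) ^ 2
          + (1 - 1 / A) / 2 * ∑ i, G j i ^ 2)) := by
      intro G
      simp_rw [← ENNReal.ofReal_mul (Real.exp_pos _).le, ← Real.exp_add]
      rw [← ENNReal.ofReal_prod_of_nonneg (fun i _ => by positivity), ← Real.exp_sum]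
      congr 2
      rw [auxE, Finset.sum_add_distrib, Finset.sum_add_distrib, ← Finset.mul_sum, ← Finset.mul_sum,
        Finset.sum_const, Finset.card_univ, Fintype.card_fin, nsmul_eq_mul]
      ring
    simp_rw [e]
    rw [aux_lintegral_pi_prod (fun _ : Fin k => Measure.pi fun _ : Fin d => gaussianReal 0 1)
      (fun _ g => ENNReal.ofReal (Real.exp (q / 2)) * ENNReal.ofReal (Real.exp (-(L / A) / 2 * (∑ i, g i * w i) ^ 2
          + (1 - 1 / A) / 2 * ∑ i, g i ^ 2))) (fun _ => by fun_prop)]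
    rw [Finset.prod_const, Finset.card_univ, Fintype.card_fin, lintegral_const_mul _ (by fun_prop),
      aux_row w A hAp (L / A) (by positivity), div_mul_cancel₀ _ hAp.ne', ← hX,
      ← ENNReal.ofReal_mul (by positivity), ← ENNReal.ofReal_pow (by positivity)]
    apply ENNReal.ofReal_le_ofReal
    have hsq : 0 < √(1 + L * X) := Real.sqrt_pos.2 (by positivity)
    calc (Real.exp (q / 2) * (√A ^ d / √(1 + L * X))) ^ k ≤ (Real.exp (1 / 2 * (L * s))) ^ k := by
          gcongr
          rw [mul_div_assoc', div_le_iff₀ hsq, mul_comm]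
          gcongr
      _ = _ := by rw [← Real.exp_nat_mul]; congr 1; ring
  calc _ ≤ ∫⁻ w, ENNReal.ofReal (Real.exp (k / 2 * (L * s)))
      ∂(Measure.pi fun _ : Fin d => gaussianReal 0 (Real.toNNReal ((1 + s) / d))) := lintegral_mono key
    _ = _ := by simp

theorem stmt_3 (k d : ℕ) (c₁ : ℝ) (hc₁0 : 0 < c₁) (hc₁ : c₁ < 1 / 2)
    (hk : (d : ℝ) / c₁ ^ 2 ≤ (k : ℝ)) :
    ENNReal.ofReal (1 - Real.exp (-((k : ℝ) * c₁ ^ 2) / 2)) ≤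
      (Measure.pi fun _ : Fin k => Measure.pi fun _ : Fin d => gaussianReal 0 1)
        {G | IsUnit ((Matrix.of G)ᵀ * Matrix.of G) ∧
          matOpNorm ((Matrix.of G)ᵀ * Matrix.of G)⁻¹
            ≤ 1 / ((1 - 2 * c₁) ^ 2 * (k : ℝ))} := by
  rcases Nat.eq_zero_or_pos d with rfl | hd
  · have : {G : Fin k → Fin 0 → ℝ | IsUnit ((Matrix.of G)ᵀ * Matrix.of G) ∧
          matOpNorm ((Matrix.of G)ᵀ * Matrix.of G)⁻¹
            ≤ 1 / ((1 - 2 * c₁) ^ 2 * (k : ℝ))} = Set.univ := by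
      ext G
      simp only [Set.mem_setOf_eq, Set.mem_univ, iff_true]
      refine ⟨isUnit_of_subsingleton _, ?_⟩
      refine ContinuousLinearMap.opNorm_le_bound _ (by positivity) fun x => ?_
      rw [Subsingleton.elim x 0]; simp
    rw [this, measure_univ]
    rw [ENNReal.ofReal_le_one]
    linarith [Real.exp_pos (-((k : ℝ) * c₁ ^ 2) / 2)]
  have hdp : (0:ℝ) < d := by exact_mod_cast hd
  have hd1 : (1:ℝ) ≤ d := by exact_mod_cast hd
  have hdk : (d:ℝ) ≤ k * c₁ ^ 2 := by rwa [div_le_iff₀ (by positivity)] at hk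
  have hkp : (0:ℝ) < k := by
    by_contra h
    have : (k:ℝ) * c₁ ^ 2 ≤ 0 := mul_nonpos_of_nonpos_of_nonneg (not_lt.1 h) (sq_nonneg _)
    linarith
  obtain ⟨L, hL, hnum⟩ := aux_num c₁ hc₁0 hc₁
  set s : ℝ := 1 / 40 with hs
  have hsp : 0 < s := by norm_num [hs]
  set μ := (Measure.pi fun _ : Fin k => Measure.pi fun _ : Fin d => gaussianReal 0 1) with hμ
  set T := (1 - 2 * c₁) ^ 2 * (k : ℝ) with hT
  have hTp : 0 < T := by
    have : 0 < 1 - 2 * c₁ := by linarith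
    positivity
  set P := 1 + L * (1 + s) with hP
  have hPp : 0 < P := by positivity
  set θ := -L / 2 * T + k / 2 * (Real.log P - L ^ 2 * (2 * s ^ 2 + 4 * s) / (2 * P))
      - k * c₁ ^ 2 / 2 * Real.log ((1 + s) / s) with hθ
  set B := {G | ENNReal.ofReal (Real.exp θ) ≤ auxH k d s L G} with hB
  have hBm : MeasurableSet B := measurableSet_le measurable_const (auxH_meas k d s L)
  have hmk : ENNReal.ofReal (Real.exp θ) * μ B ≤ ENNReal.ofReal (Real.exp (k / 2 * (L * s))) :=
    (mul_meas_ge_le_lintegral (auxH_meas k d s L) _).trans (auxH_upper k d hd s L hsp hL)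
  have hμB : μ B ≤ ENNReal.ofReal (Real.exp (-((k : ℝ) * c₁ ^ 2) / 2)) := by
    have h1 : μ B ≤ ENNReal.ofReal (Real.exp (k / 2 * (L * s))) / ENNReal.ofReal (Real.exp θ) := by
      rw [ENNReal.le_div_iff_mul_le (by left; simp [Real.exp_pos]) (by left; simp), mul_comm]
      exact hmk
    refine h1.trans ?_
    rw [← ENNReal.ofReal_div_of_pos (Real.exp_pos _), ← Real.exp_sub]
    apply ENNReal.ofReal_le_ofReal
    apply Real.exp_le_exp.2
    have := mul_le_mul_of_nonneg_left hnum (show (0:ℝ) ≤ k / 2 by positivity)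
    rw [hθ, hT]
    linarith
  have hsub : Bᶜ ⊆ {G | IsUnit ((Matrix.of G)ᵀ * Matrix.of G) ∧
          matOpNorm ((Matrix.of G)ᵀ * Matrix.of G)⁻¹ ≤ 1 / T} := by
    intro G hG
    refine aux_det G T hTp fun v hv => ?_
    by_contra hc
    push Not at hc
    apply hG
    refine le_trans (ENNReal.ofReal_le_ofReal (Real.exp_le_exp.2 ?_)) (auxH_lower k d hd s L hsp hL G v hv)
    have hR0 : 0 ≤ ∑ j, (∑ i, G j i * v i) ^ 2 := Finset.sum_nonneg fun i _ => sq_nonneg _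
    have a1 : L / (1 + L * (s / d)) ≤ L := div_le_self hL.le (by
      have : 0 ≤ L * (s / d) := by positivity
      linarith)
    have a2 : L / (1 + L * (s / d)) * ∑ j, (∑ i, G j i * v i) ^ 2 ≤ L * T := by gcongr
    have a3 : L ^ 2 * ((2 * s ^ 2 + 4 * s) / d) / (2 * P) ≤ L ^ 2 * (2 * s ^ 2 + 4 * s) / (2 * P) := by
      gcongr
      exact div_le_self (by positivity) hd1
    have a4 : (k:ℝ) / 2 * (Real.log P - L ^ 2 * (2 * s ^ 2 + 4 * s) / (2 * P)) ≤
      k / 2 * (Real.log P - L ^ 2 * ((2 * s ^ 2 + 4 * s) / d) / (2 * P)) := by gcongr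
    have hlog : 0 ≤ Real.log ((1 + s) / s) := Real.log_nonneg (by rw [le_div_iff₀ hsp]; linarith)
    have a5 : d / 2 * Real.log ((1 + s) / s) ≤ k * c₁ ^ 2 / 2 * Real.log ((1 + s) / s) := by gcongr
    rw [hθ, ← hP]
    linarith
  refine le_trans ?_ (measure_mono hsub)
  rw [prob_compl_eq_one_sub hBm, ENNReal.ofReal_sub _ (Real.exp_pos _).le, ENNReal.ofReal_one]
  gcongr
end

section
/- Let X_1, …, X_m be i.i.d. random variables with the standard Cauchy distribution Cauchy(0,1), and let 0 < τ < 1. Then the probability that at least m/2 of the X_i exceed τ, or at least m/2 of the X_i are less than −τ, is at most 2·exp(−m·τ²/8). In particular, the probability that the sample median of X_1, …, X_m lies outside the interval [−τ, τ] is at most 2·exp(−m·τ²/8). -/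
open MeasureTheory

/-- The centered Cauchy distribution with scale `γ`, given by its density
`x ↦ γ/(π(γ² + x²))`; `cauchyMeasure 1` is the standard Cauchy distribution. -/
noncomputable def cauchyMeasure (γ : ℝ) : Measure ℝ :=
  volume.withDensity fun x => ENNReal.ofReal (γ / (Real.pi * (γ ^ 2 + x ^ 2)))

/-- The sample median of `X_1, …, X_m` (the entry at position `⌊m/2⌋` of the sorted
list of values, `0`-indexed). -/
noncomputable def sampleMedian {m : ℕ} (X : Fin m → ℝ) : ℝ :=
  ((Multiset.map X Finset.univ.val).sort (· ≤ ·)).getD (m / 2) 0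

open ProbabilityTheory in
lemma aux_hoeff (μ : Measure ℝ) [IsProbabilityMeasure μ] (A : Set ℝ) [DecidablePred (· ∈ A)]
    (hA : MeasurableSet A)
    (m : ℕ) (hm : 0 < m) (τ : ℝ) (hτ0 : 0 < τ) (h : μ.real A ≤ 1 / 2 - τ / 4) :
    (Measure.pi fun _ : Fin m => μ)
      {X | (m : ℝ) / 2 ≤ (({i | X i ∈ A} : Finset (Fin m)).card : ℝ)}
      ≤ ENNReal.ofReal (Real.exp (-((m : ℝ) * τ ^ 2) / 8)) := by
  classical
  set f : ℝ → ℝ := A.indicator 1 with hf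
  have hfm : Measurable f := measurable_one.indicator hA
  have hint : ∫ x, f x ∂μ = μ.real A := by
    rw [hf, integral_indicator_one hA]
  have hsub : HasSubgaussianMGF (fun x => f x - μ.real A) ((‖(1:ℝ) - 0‖₊ / 2) ^ 2) μ := by
    rw [← hint]
    refine hasSubgaussianMGF_of_mem_Icc hfm.aemeasurable (Filter.Eventually.of_forall fun x => ?_)
    by_cases hx : x ∈ A <;> simp [hf, hx]
  have hind : iIndepFun (fun (i : Fin m) (X : Fin m → ℝ) => f (X i) - μ.real A)
      (Measure.pi fun _ : Fin m => μ) :=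
    iIndepFun_pi (μ := fun _ : Fin m => μ) (X := fun _ x => f x - μ.real A)
      (fun i => (hfm.sub_const _).aemeasurable)
  have hsub' : ∀ i ∈ (Finset.univ : Finset (Fin m)),
      HasSubgaussianMGF (fun (X : Fin m → ℝ) => f (X i) - μ.real A)
        ((‖(1:ℝ) - 0‖₊ / 2) ^ 2) (Measure.pi fun _ : Fin m => μ) := by
    intro i _
    have hmp := measurePreserving_eval (fun _ : Fin m => μ) i
    refine HasSubgaussianMGF.of_map (Y := fun X : Fin m → ℝ => X i) (X := fun x => f x - μ.real A)
      (measurable_pi_apply i).aemeasurable ?_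
    have hme : Measure.map (fun X : Fin m → ℝ => X i) (Measure.pi fun _ : Fin m => μ) = μ :=
      hmp.map_eq
    rw [hme]; exact hsub
  have key := HasSubgaussianMGF.measure_sum_ge_le_of_iIndepFun hind hsub'
    (ε := m * τ / 4) (by positivity)
  rw [← ofReal_measureReal]
  apply ENNReal.ofReal_le_ofReal
  refine (measureReal_mono ?_).trans (key.trans (Real.exp_le_exp.mpr (le_of_eq ?_)))
  · intro X hX
    simp only [Set.mem_ofPred_eq] at hX ⊢
    have hs : ∑ i, f (X i) = (({i | X i ∈ A} : Finset (Fin m)).card : ℝ) := by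
      simp [hf, Set.indicator_apply, Finset.sum_boole]
    rw [Finset.sum_sub_distrib, hs]
    simp only [Finset.sum_const, Finset.card_univ, Fintype.card_fin, nsmul_eq_mul]
    have hm' : (0:ℝ) < m := by exact_mod_cast hm
    nlinarith
  · have hm' : (0:ℝ) < m := by exact_mod_cast hm
    simp
    field_simp
    norm_num

lemma aux_arctan (τ : ℝ) (h0 : 0 < τ) (h1 : τ < 1) : Real.pi * τ / 4 ≤ Real.arctan τ := by
  have hc : ConcaveOn ℝ (Set.Ici 0) Real.arctan := by
    apply AntitoneOn.concaveOn_of_deriv (convex_Ici 0) Real.continuous_arctan.continuousOn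
      Real.differentiable_arctan.differentiableOn
    intro x hx y hy hxy
    simp at hx hy
    simp only [Real.deriv_arctan]
    gcongr
  have := hc.2 (Set.mem_Ici.mpr le_rfl) (Set.mem_Ici.mpr zero_le_one)
    (sub_nonneg.mpr h1.le) h0.le (sub_add_cancel 1 τ)
  simp at this
  linarith

lemma aux_density (s : Set ℝ) (hs : MeasurableSet s) :
    cauchyMeasure 1 s = ENNReal.ofReal (Real.pi⁻¹ * ∫ x in s, (1 + x ^ 2)⁻¹) := by
  rw [cauchyMeasure, withDensity_apply _ hs, ← integral_const_mul,
    ofReal_integral_eq_lintegral_ofReal]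
  · congr 1; ext x; congr 1
    rw [one_div, mul_inv]; simp
  · exact (integrable_inv_one_add_sq.const_mul _).integrableOn
  · exact Filter.Eventually.of_forall fun x => by
      have := Real.pi_pos; simp only [Pi.zero_apply]; positivity

instance aux_prob : IsProbabilityMeasure (cauchyMeasure 1) := ⟨by
  rw [aux_density _ MeasurableSet.univ]
  simp [integral_univ_inv_one_add_sq, Real.pi_ne_zero]⟩

lemma aux_Ioi (τ : ℝ) (h0 : 0 < τ) (h1 : τ < 1) :
    (cauchyMeasure 1).real (Set.Ioi τ) ≤ 1 / 2 - τ / 4 := by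
  rw [Measure.real, aux_density _ measurableSet_Ioi, integral_Ioi_inv_one_add_sq,
    ENNReal.toReal_ofReal']
  have := aux_arctan τ h0 h1
  have hp := Real.pi_pos
  apply max_le _ (by linarith)
  rw [inv_mul_le_iff₀ hp]; linarith

lemma aux_Iio (τ : ℝ) (h0 : 0 < τ) (h1 : τ < 1) :
    (cauchyMeasure 1).real (Set.Iio (-τ)) ≤ 1 / 2 - τ / 4 := by
  refine (measureReal_mono Set.Iio_subset_Iic_self).trans ?_
  rw [Measure.real, aux_density _ measurableSet_Iic, integral_Iic_inv_one_add_sq,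
    ENNReal.toReal_ofReal']
  have := aux_arctan τ h0 h1
  have hp := Real.pi_pos
  apply max_le _ (by linarith)
  rw [inv_mul_le_iff₀ hp, Real.arctan_neg]; linarith

lemma aux_count {m : ℕ} (X : Fin m → ℝ) (p : ℝ → Prop) [DecidablePred p] :
    ((Multiset.map X Finset.univ.val).sort (· ≤ ·)).countP p
      = ({i | p (X i)} : Finset (Fin m)).card := by
  rw [← Multiset.coe_countP, Multiset.sort_eq, Multiset.countP_map]
  rfl

lemma aux_median {m : ℕ} (hm : 0 < m) (τ : ℝ) (X : Fin m → ℝ)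
    (h : sampleMedian X ∉ Set.Icc (-τ) τ) :
    (m : ℝ) / 2 ≤ (({i | τ < X i} : Finset (Fin m)).card : ℝ) ∨
      (m : ℝ) / 2 ≤ (({i | X i < -τ} : Finset (Fin m)).card : ℝ) := by
  rw [← aux_count X (fun x => τ < x), ← aux_count X (fun x => x < -τ)]
  unfold sampleMedian at h
  have hlen : ((Multiset.map X Finset.univ.val).sort (· ≤ ·)).length = m := by simp
  have hs := Multiset.pairwise_sort (Multiset.map X Finset.univ.val) (· ≤ ·)
  generalize (Multiset.map X Finset.univ.val).sort (· ≤ ·) = L at *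
  have hk : m / 2 < L.length := by omega
  rw [List.getD_eq_getElem _ _ hk] at h
  rw [List.pairwise_iff_getElem] at hs
  have hs' : ∀ i j (hi : i < L.length) (hj : j < L.length), i ≤ j → L[i] ≤ L[j] := by
    intro i j hi hj hij
    rcases hij.lt_or_eq with h | rfl
    · exact hs i j hi hj h
    · exact le_rfl
  by_cases hlt : τ < L[m / 2]
  · left
    have h1 : (L.drop (m / 2)).countP (fun x => decide (τ < x)) = (L.drop (m / 2)).length := by
      rw [List.countP_eq_length]
      intro a ha
      obtain ⟨i, hi, rfl⟩ := List.mem_iff_getElem.mp ha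
      rw [List.getElem_drop]
      simp only [decide_eq_true_eq]
      exact hlt.trans_le (hs' _ _ _ _ (by omega))
    have h2 := (List.drop_sublist (m / 2) L).countP_le (p := fun x => decide (τ < x))
    rw [h1, List.length_drop, hlen] at h2
    have h3 : m ≤ 2 * L.countP (fun x => decide (τ < x)) := by omega
    have : (m : ℝ) ≤ 2 * (L.countP (fun x => decide (τ < x)) : ℝ) := by exact_mod_cast h3
    linarith
  · right
    have hlt' : L[m / 2] < -τ := by
      by_contra hc
      exact h ⟨not_lt.mp hc, not_lt.mp hlt⟩
    have h1 : (L.take (m / 2 + 1)).countP (fun x => decide (x < -τ))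
        = (L.take (m / 2 + 1)).length := by
      rw [List.countP_eq_length]
      intro a ha
      obtain ⟨i, hi, rfl⟩ := List.mem_iff_getElem.mp ha
      rw [List.getElem_take]
      simp only [decide_eq_true_eq]
      rw [List.length_take] at hi
      exact (hs' _ _ _ _ (by omega)).trans_lt hlt'
    have h2 := (List.take_sublist (m / 2 + 1) L).countP_le (p := fun x => decide (x < -τ))
    rw [h1, List.length_take, hlen] at h2
    have h3 : m ≤ 2 * L.countP (fun x => decide (x < -τ)) := by omega
    have : (m : ℝ) ≤ 2 * (L.countP (fun x => decide (x < -τ)) : ℝ) := by exact_mod_cast h3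
    linarith

/-- Lemma 2.8 (non-asymptotic convergence of the Cauchy median): for `X_1, …, X_m`
i.i.d. standard Cauchy and `0 < τ < 1`, the probability that at least `m/2` of the `X_i`
exceed `τ`, or at least `m/2` of them are below `−τ`, is at most `2·exp(−mτ²/8)`;
in particular the sample median lies outside `[−τ, τ]` with at most this probability. -/
theorem stmt_5 (m : ℕ) (hm : 0 < m) (τ : ℝ) (hτ0 : 0 < τ) (hτ1 : τ < 1) :
    ((Measure.pi fun _ : Fin m => cauchyMeasure 1)
        {X | (m : ℝ) / 2 ≤ (({i | τ < X i} : Finset (Fin m)).card : ℝ) ∨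
             (m : ℝ) / 2 ≤ (({i | X i < -τ} : Finset (Fin m)).card : ℝ)}
      ≤ ENNReal.ofReal (2 * Real.exp (-((m : ℝ) * τ ^ 2) / 8))) ∧
    ((Measure.pi fun _ : Fin m => cauchyMeasure 1)
        {X | sampleMedian X ∉ Set.Icc (-τ) τ}
      ≤ ENNReal.ofReal (2 * Real.exp (-((m : ℝ) * τ ^ 2) / 8))) := by
  have hmain : (Measure.pi fun _ : Fin m => cauchyMeasure 1)
        {X | (m : ℝ) / 2 ≤ (({i | τ < X i} : Finset (Fin m)).card : ℝ) ∨
             (m : ℝ) / 2 ≤ (({i | X i < -τ} : Finset (Fin m)).card : ℝ)}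
      ≤ ENNReal.ofReal (2 * Real.exp (-((m : ℝ) * τ ^ 2) / 8)) := by
    rw [Set.ofPred_or, two_mul, ENNReal.ofReal_add (Real.exp_pos _).le (Real.exp_pos _).le]
    refine (measure_union_le _ _).trans (add_le_add ?_ ?_)
    · exact aux_hoeff (cauchyMeasure 1) (Set.Ioi τ) measurableSet_Ioi m hm τ hτ0
        (aux_Ioi τ hτ0 hτ1)
    · exact aux_hoeff (cauchyMeasure 1) (Set.Iio (-τ)) measurableSet_Iio m hm τ hτ0
        (aux_Iio τ hτ0 hτ1)
  exact ⟨hmain, (measure_mono fun X hX => aux_median hm τ X hX).trans hmain⟩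
end

section
/- Consider the node model: M = LLᵀ ∈ ℝ^{p×p} is positive definite, A ∈ ℝ^p, σ_y > 0; the design matrix X ∈ ℝ^{k×p} has rows drawn i.i.d. from the multivariate Gaussian N(0, M); η ∈ ℝ^k has i.i.d. N(0, σ_y²) entries independent of X; the responses are B = XA + η. Let Â = (XᵀX)⁻¹XᵀB be the least-squares solution and Δ = Â − A. Then for any constants 0 < c₁ < 1/2 and c₂ > 0, if k ≥ p/c₁², one has Pr( ‖LᵀΔ‖₂ > 2σ_y c₂√p / ((1 − 2c₁)²√k) ) ≤ exp(−k·c₁²/2) + 2p·exp(−2k) + p·exp(−c₂²/2). Equivalently, since ΔᵀMΔ = ‖LᵀΔ‖₂², Pr( ΔᵀMΔ > 4σ_y²c₂²p/((1 − 2c₁)⁴k) ) is bounded by the same quantity. -/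
open MeasureTheory ProbabilityTheory Matrix

/-- The centered multivariate Gaussian `N(0, LLᵀ)` on `ℝ^p`, realized as the pushforward
of the standard Gaussian product measure under `x ↦ Lx`. -/
noncomputable def mvg0 {p : ℕ} (L : Matrix (Fin p) (Fin p) ℝ) : Measure (Fin p → ℝ) :=
  Measure.map (fun x => L.mulVec x) (Measure.pi fun _ : Fin p => gaussianReal 0 1)

/-- Euclidean norm of a vector in `ℝ^p`. -/
noncomputable def enorm' {p : ℕ} (v : Fin p → ℝ) : ℝ := Real.sqrt (∑ i, v i ^ 2)

lemma final_ineq (p k : ℕ) (c y : ℝ) (hp : 1 ≤ p) (hpk : 4 * (p:ℝ) ≤ k) (hc0 : 0 < c) (hc : c < 1/2)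
    (hy : 0 ≤ y) :
    (p:ℝ) * ((√(1 + 4 * y / k))⁻¹) ^ (k - p) ≤ Real.exp (-((k : ℝ) * c ^ 2) / 2)
          + (p : ℝ) * Real.exp (-y / 2) := by
  have hp' : (1:ℝ) ≤ p := by exact_mod_cast hp
  have hk0 : (0:ℝ) < k := by linarith
  set w := 4 * y / k with hw
  have hw0 : 0 ≤ w := by positivity
  have hyw : y = w * k / 4 := by rw [hw]; field_simp
  have hle : p ≤ k := by
    have : (p:ℝ) ≤ k := by linarith
    exact_mod_cast this
  have h1 : ((√(1 + w))⁻¹) ^ (k - p) = Real.exp (-(((k:ℝ) - p) / 2 * Real.log (1+w))) := by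
    have : (√(1+w))⁻¹ = Real.exp (-(Real.log (1+w) / 2)) := by
      rw [Real.exp_neg, ← Real.log_sqrt (by positivity), Real.exp_log (by positivity)]
    rw [this, ← Real.exp_nat_mul, Nat.cast_sub hle]
    congr 1; ring
  rw [h1]
  have hkp : 3 / 8 * (k:ℝ) ≤ ((k:ℝ) - p) / 2 := by linarith
  rcases le_total w 2 with h | h
  · have hl : w / 3 ≤ Real.log (1 + w) := by
      have := Real.one_sub_inv_le_log_of_pos (show 0 < 1 + w by linarith)
      refine le_trans ?_ this
      have : 1 - (1+w)⁻¹ = w / (1+w) := by field_simp; ring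
      rw [this]
      gcongr; linarith
    have : Real.exp (-(((k:ℝ) - p) / 2 * Real.log (1+w))) ≤ Real.exp (-y/2) := by
      apply Real.exp_le_exp.2
      have : 3 / 8 * (k:ℝ) * (w/3) ≤ ((k:ℝ) - p) / 2 * Real.log (1+w) := by
        apply mul_le_mul hkp hl (by positivity) (by linarith)
      rw [hyw]; linarith
    have h2 := mul_le_mul_of_nonneg_left this (by linarith : (0:ℝ) ≤ p)
    have := Real.exp_pos (-((k : ℝ) * c ^ 2) / 2)
    linarith
  · have hl : 1 ≤ Real.log (1 + w) := by
      rw [Real.le_log_iff_exp_le (by linarith)]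
      have := Real.exp_one_lt_d9
      linarith
    have h3 : 3 / 8 * (k:ℝ) * 1 ≤ ((k:ℝ) - p) / 2 * Real.log (1+w) := by
        apply mul_le_mul hkp hl (by positivity) (by linarith)
    have h4 : (p:ℝ) ≤ Real.exp (k/4) := by
      have := Real.add_one_le_exp ((k:ℝ)/4); linarith
    have h5 : (p:ℝ) * Real.exp (-(((k:ℝ) - p) / 2 * Real.log (1+w))) ≤ Real.exp (k/4) * Real.exp (-(3/8*k)) := by
      apply mul_le_mul h4 (Real.exp_le_exp.2 (by linarith)) (Real.exp_pos _).le (Real.exp_pos _).le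
    rw [← Real.exp_add] at h5
    have h6 : Real.exp (k/4 + -(3/8*k)) ≤ Real.exp (-((k : ℝ) * c ^ 2) / 2) := by
      apply Real.exp_le_exp.2
      have : c^2 ≤ 1/4 := by nlinarith
      nlinarith
    have : 0 ≤ (p : ℝ) * Real.exp (-y / 2) := by positivity
    linarith

lemma exists_resid {k p : ℕ} (G : Matrix (Fin k) (Fin p) ℝ) (i : Fin p) :
    ∃ v : Fin p → ℝ, v i = 1 ∧ ∀ j ≠ i, (G *ᵥ v) ⬝ᵥ (fun r => G r j) = 0 := by
  classical
  let c : Fin p → EuclideanSpace ℝ (Fin k) := fun j => WithLp.toLp 2 (fun r => G r j)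
  let V : Submodule ℝ (EuclideanSpace ℝ (Fin k)) := Submodule.span ℝ (Set.range fun j : {j // j ≠ i} => c j)
  have hmem : V.starProjection (c i) ∈ V := Submodule.starProjection_apply_mem _ _
  obtain ⟨w, hw⟩ := (Submodule.mem_span_range_iff_exists_fun ℝ).1 hmem
  refine ⟨fun j => if h : j = i then 1 else - w ⟨j, h⟩, by simp, ?_⟩
  intro j hj
  have h0 := Submodule.starProjection_inner_eq_zero (K := V) (c i) (c j) (Submodule.subset_span ⟨⟨j, hj⟩, rfl⟩)
  rw [← hw] at h0
  have hG : c i - ∑ j : {j // j ≠ i}, w j • c j = WithLp.toLp 2 (G *ᵥ fun j => if h : j = i then 1 else - w ⟨j, h⟩) := by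
    ext r
    simp only [Matrix.mulVec, dotProduct, PiLp.sub_apply, c, WithLp.ofLp_sum, WithLp.ofLp_smul, Finset.sum_apply, Pi.smul_apply, smul_eq_mul]
    rw [← Finset.add_sum_erase _ _ (Finset.mem_univ i)]
    simp only [dite_true, mul_one, sub_eq_add_neg, ← Finset.sum_neg_distrib]
    congr 1
    rw [Finset.sum_subtype (s := Finset.univ.erase i) (p := fun j => j ≠ i) (f := fun x => G r x * if h : x = i then 1 else - w ⟨x, h⟩)]
    · apply Finset.sum_congr rfl
      rintro ⟨x, hx⟩ -
      simp [hx, mul_comm]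
    · simp
  rw [hG] at h0
  rw [dotProduct_comm]
  simpa [EuclideanSpace.inner_eq_star_dotProduct, c] using h0

lemma resid_dot {k p : ℕ} (G : Matrix (Fin k) (Fin p) ℝ) (i : Fin p) (v : Fin p → ℝ)
    (h : ∀ j ≠ i, (G *ᵥ v) ⬝ᵥ (fun r => G r j) = 0) (u : Fin p → ℝ) :
    (G *ᵥ v) ⬝ᵥ (G *ᵥ u) = u i * ((G *ᵥ v) ⬝ᵥ (fun r => G r i)) := by
  rw [Matrix.dotProduct_mulVec]
  have : (G *ᵥ v) ᵥ* G = fun j => (G *ᵥ v) ⬝ᵥ (fun r => G r j) := rfl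
  rw [this, dotProduct, Finset.sum_eq_single i]
  · ring
  · intro j _ hj; rw [h j hj]; simp
  · simp

lemma det_main {k p : ℕ} (G : Matrix (Fin k) (Fin p) ℝ) (v : Fin p → Fin p → ℝ) (hv : ∀ i, v i i = 1)
    (h : ∀ i, ∀ j ≠ i, (G *ᵥ v i) ⬝ᵥ (fun r => G r j) = 0) (T : ℝ) (η : Fin k → ℝ)
    (hT : ∀ i, |(G *ᵥ v i) ⬝ᵥ η| < T * ((G *ᵥ v i) ⬝ᵥ (G *ᵥ v i))) :
    IsUnit (Gᵀ * G).det ∧ ∀ i, |((Gᵀ * G)⁻¹ *ᵥ (Gᵀ *ᵥ η)) i| < T := by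
  have hd : ∀ i u, (G *ᵥ v i) ⬝ᵥ (G *ᵥ u) = u i * ((G *ᵥ v i) ⬝ᵥ (G *ᵥ v i)) := by
    intro i u
    rw [resid_dot G i (v i) (h i) u, resid_dot G i (v i) (h i) (v i), hv]; simp
  have hpos : ∀ i, 0 < (G *ᵥ v i) ⬝ᵥ (G *ᵥ v i) := by
    intro i
    have h0 : 0 ≤ (G *ᵥ v i) ⬝ᵥ (G *ᵥ v i) := Finset.sum_nonneg fun r _ => mul_self_nonneg _
    rcases h0.lt_or_eq with h0 | h0
    · exact h0
    · have := hT i; rw [← h0] at this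
      have := abs_nonneg ((G *ᵥ v i) ⬝ᵥ η)
      linarith
  have hU : IsUnit (Gᵀ * G) := by
    rw [← Matrix.mulVec_injective_iff_isUnit]
    refine (injective_iff_map_eq_zero (Matrix.mulVecLin (Gᵀ * G))).2 ?_
    intro u hu
    have hu : (Gᵀ * G) *ᵥ u = 0 := hu
    have : G *ᵥ u = 0 := by
      rw [← dotProduct_self_eq_zero, Matrix.dotProduct_mulVec, ← Matrix.mulVec_transpose, Matrix.mulVec_mulVec, hu]
      simp
    ext i
    have := hd i u
    rw [‹G *ᵥ u = 0›] at this
    simp only [dotProduct_zero] at this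
    rcases mul_eq_zero.1 this.symm with h | h
    · exact h
    · exact absurd h (hpos i).ne'
  have hU' := (Matrix.isUnit_iff_isUnit_det _).1 hU
  refine ⟨hU', fun i => ?_⟩
  set u := (Gᵀ * G)⁻¹ *ᵥ (Gᵀ *ᵥ η) with hu
  have h1 : Gᵀ *ᵥ (G *ᵥ u) = Gᵀ *ᵥ η := by
    rw [hu, Matrix.mulVec_mulVec, Matrix.mulVec_mulVec, Matrix.mul_nonsing_inv _ hU', Matrix.one_mulVec]
  have h2 : (G *ᵥ v i) ⬝ᵥ η = u i * ((G *ᵥ v i) ⬝ᵥ (G *ᵥ v i)) := by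
    rw [← hd]
    have e : ∀ z : Fin k → ℝ, (G *ᵥ v i) ⬝ᵥ z = v i ⬝ᵥ (Gᵀ *ᵥ z) := by
      intro z
      rw [Matrix.dotProduct_mulVec, Matrix.vecMul_transpose]
    rw [e, e, h1]
  have h3 := hT i
  rw [h2, abs_mul, abs_of_pos (hpos i)] at h3
  exact lt_of_mul_lt_mul_right h3 (hpos i).le

lemma delta_eq {k p : ℕ} (L : Matrix (Fin p) (Fin p) ℝ) (hM : (L * Lᵀ).PosDef) (A : Fin p → ℝ)
    (G : Matrix (Fin k) (Fin p) ℝ) (hG : IsUnit (Gᵀ * G).det) (η : Fin k → ℝ)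
    (X : Matrix (Fin k) (Fin p) ℝ) (hX : X = G * Lᵀ) :
    Lᵀ *ᵥ ((Xᵀ * X)⁻¹ *ᵥ (Xᵀ *ᵥ (X *ᵥ A + η)) - A) = (Gᵀ * G)⁻¹ *ᵥ (Gᵀ *ᵥ η) := by
  have hL : IsUnit L.det := by
    have := hM.det_pos
    rw [Matrix.det_mul, Matrix.det_transpose] at this
    exact isUnit_iff_ne_zero.2 (by intro h; simp [h] at this)
  have hLt : IsUnit Lᵀ.det := by rwa [Matrix.det_transpose]
  have hXX : Xᵀ * X = L * (Gᵀ * G) * Lᵀ := by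
    rw [hX, Matrix.transpose_mul, Matrix.transpose_transpose]; simp only [Matrix.mul_assoc]
  have hXu : IsUnit (Xᵀ * X).det := by
    rw [hXX, Matrix.det_mul, Matrix.det_mul]; exact (hL.mul hG).mul hLt
  rw [Matrix.mulVec_add, Matrix.mulVec_mulVec, Matrix.mulVec_add, Matrix.mulVec_mulVec, Matrix.nonsing_inv_mul _ hXu,
    Matrix.one_mulVec, add_sub_cancel_left, hXX, Matrix.mul_inv_rev, Matrix.mul_inv_rev]
  have hXt : Xᵀ = L * Gᵀ := by rw [hX, Matrix.transpose_mul, Matrix.transpose_transpose]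
  rw [hXt]
  simp only [Matrix.mulVec_mulVec]
  congr 1
  rw [Matrix.mul_assoc, Matrix.mul_nonsing_inv_cancel_left _ _ hLt]
  rw [Matrix.mul_assoc, Matrix.nonsing_inv_mul_cancel_left _ _ hL]

lemma gauss_tail (v : NNReal) (hv : v ≠ 0) (t : ℝ) (ht : 0 ≤ t) :
    gaussianReal 0 v {x | t ≤ |x|} ≤ ENNReal.ofReal (Real.exp (-(t ^ 2) / (2 * v))) := by
  have : NullSingletonClass (gaussianReal 0 v) := nullSingletonClass_gaussianReal hv
  have hv' : (0:ℝ) < v := lt_of_le_of_ne v.2 (fun h => hv (NNReal.coe_eq_zero.1 h.symm))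
  set K := ENNReal.ofReal (Real.exp (-(t ^ 2) / (2 * v))) with hK
  have key : ∀ x s : ℝ, 0 ≤ s * x → s ^ 2 = t ^ 2 → gaussianPDF 0 v (x + s) ≤ K * gaussianPDF 0 v x := by
    intro x s hs hst
    rw [hK, gaussianPDF, gaussianPDF, ← ENNReal.ofReal_mul (Real.exp_pos _).le]
    apply ENNReal.ofReal_le_ofReal
    rw [gaussianPDFReal, gaussianPDFReal, mul_left_comm, ← Real.exp_add]
    gcongr
    rw [← add_div]
    gcongr
    nlinarith
  have h1 : gaussianReal 0 v (Set.Ici t) ≤ K * gaussianReal 0 v (Set.Ici 0) := by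
    rw [gaussianReal_apply _ hv, gaussianReal_apply _ hv, ← lintegral_indicator measurableSet_Ici,
      ← lintegral_indicator measurableSet_Ici, ← lintegral_const_mul _ ((measurable_gaussianPDF _ _).indicator measurableSet_Ici),
      ← lintegral_add_right_eq_self _ t]
    apply lintegral_mono
    intro x
    by_cases hx : 0 ≤ x
    · simp only [Set.indicator, Set.mem_Ici, le_add_iff_nonneg_left, hx, if_true]
      exact key x t (mul_nonneg ht hx) rfl
    · simp [Set.indicator, hx]
  have h2 : gaussianReal 0 v (Set.Iio (-t)) ≤ K * gaussianReal 0 v (Set.Iio 0) := by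
    rw [gaussianReal_apply _ hv, gaussianReal_apply _ hv, ← lintegral_indicator measurableSet_Iio,
      ← lintegral_indicator measurableSet_Iio, ← lintegral_const_mul _ ((measurable_gaussianPDF _ _).indicator measurableSet_Iio),
      ← lintegral_add_right_eq_self _ (-t)]
    apply lintegral_mono
    intro x
    by_cases hx : x < 0
    · simp only [Set.indicator, Set.mem_Iio, add_lt_iff_neg_right, hx, if_true]
      exact key x (-t) (by nlinarith) (by ring)
    · simp [Set.indicator, hx]
  have hsub : {x : ℝ | t ≤ |x|} ⊆ Set.Ici t ∪ Set.Iic (-t) := by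
    intro x hx
    rcases le_abs.1 (show t ≤ |x| from hx) with h | h
    · exact Or.inl h
    · exact Or.inr (by simp; linarith)
  calc gaussianReal 0 v {x | t ≤ |x|} ≤ gaussianReal 0 v (Set.Ici t) + gaussianReal 0 v (Set.Iic (-t)) :=
        (measure_mono hsub).trans (measure_union_le _ _)
    _ = gaussianReal 0 v (Set.Ici t) + gaussianReal 0 v (Set.Iio (-t)) := by
        rw [measure_congr (Iio_ae_eq_Iic (a := -t) (μ := gaussianReal 0 v))]
    _ ≤ K * gaussianReal 0 v (Set.Ici 0) + K * gaussianReal 0 v (Set.Iio 0) := add_le_add h1 h2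
    _ = K * (gaussianReal 0 v (Set.Iio 0 ∪ Set.Ici 0)) := by
        rw [← mul_add, measure_union _ measurableSet_Ici, add_comm]
        rw [Set.disjoint_left]; intro x hx hx'; exact absurd (Set.mem_Iio.1 hx) (not_lt.2 (Set.mem_Ici.1 hx'))
    _ = K := by rw [Set.Iio_union_Ici, measure_univ, mul_one]

lemma gauss_sq (θ : ℝ) (hθ : 0 ≤ θ) :
    ∫ x, Real.exp (-θ * x ^ 2) ∂(gaussianReal 0 1) = (√(1 + 2 * θ))⁻¹ := by
  rw [integral_gaussianReal_eq_integral_smul one_ne_zero]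
  have : ∀ x : ℝ, gaussianPDFReal 0 1 x • Real.exp (-θ * x ^ 2) = (√(2 * Real.pi))⁻¹ * Real.exp (-(θ + 1/2) * x ^ 2) := by
    intro x
    rw [gaussianPDFReal, smul_eq_mul, mul_assoc, ← Real.exp_add]
    simp only [NNReal.coe_one, mul_one, sub_zero]
    congr 2; ring
  simp_rw [this]
  rw [integral_const_mul, integral_gaussian, ← Real.sqrt_inv, ← Real.sqrt_mul (by positivity), ← Real.sqrt_inv]
  congr 1
  have := Real.pi_pos
  field_simp; ring

lemma noise (k : ℕ) (σ T : ℝ) (hσ : 0 < σ) (hT : 0 ≤ T) (a : Fin k → ℝ) :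
    (Measure.pi fun _ : Fin k => gaussianReal 0 ((σ ^ 2).toNNReal)) {η | T * (a ⬝ᵥ a) ≤ |a ⬝ᵥ η|}
      ≤ ENNReal.ofReal (Real.exp (-(T ^ 2 / (2 * σ ^ 2)) * (a ⬝ᵥ a))) := by
  by_cases ha : a = 0
  · subst ha
    simp
  have hpos : 0 < a ⬝ᵥ a := by
    have h0 : 0 ≤ a ⬝ᵥ a := Finset.sum_nonneg fun r _ => mul_self_nonneg _
    exact lt_of_le_of_ne h0 (fun h => ha (dotProduct_self_eq_zero.1 h.symm))
  let L : StrongDual ℝ (EuclideanSpace ℝ (Fin k)) := innerSL ℝ (WithLp.toLp 2 (σ • a))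
  have hL : ∀ ζ : Fin k → ℝ, L (WithLp.toLp 2 ζ) = a ⬝ᵥ (fun i => σ * ζ i) := by
    intro ζ
    simp only [L, innerSL_apply_apply, EuclideanSpace.inner_eq_star_dotProduct, dotProduct]
    apply Finset.sum_congr rfl
    intro i _
    simp; ring
  have hn : ‖L‖ ^ 2 = σ ^ 2 * (a ⬝ᵥ a) := by
    simp only [L, innerSL_apply_norm, EuclideanSpace.real_norm_sq_eq, dotProduct, Finset.mul_sum]
    apply Finset.sum_congr rfl
    intro i _
    simp; ring
  have hmap : (Measure.pi fun _ : Fin k => gaussianReal 0 ((σ ^ 2).toNNReal)) =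
      (Measure.pi fun _ : Fin k => gaussianReal 0 1).map (fun ζ i => σ * ζ i) := by
    have e : (gaussianReal 0 1).map (fun x => σ * x) = gaussianReal 0 ((σ ^ 2).toNNReal) := by
      rw [gaussianReal_map_const_mul]
      congr 1
      · simp
      · ext; simp [Real.coe_toNNReal _ (sq_nonneg σ)]
    have : IsProbabilityMeasure ((gaussianReal 0 1).map (fun x => σ * x)) := by rw [e]; infer_instance
    rw [Measure.pi_map_pi (fun i => by fun_prop)]
    simp_rw [e]
  have hg : (Measure.pi fun _ : Fin k => gaussianReal 0 1).map (fun ζ => L (WithLp.toLp 2 ζ)) =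
      gaussianReal 0 (σ ^ 2 * (a ⬝ᵥ a)).toNNReal := by
    rw [show (fun ζ : Fin k → ℝ => L (WithLp.toLp 2 ζ)) = L ∘ (WithLp.toLp 2) from rfl,
      ← Measure.map_map (by fun_prop) (by fun_prop), map_pi_eq_stdGaussian, IsGaussian.map_eq_gaussianReal,
      variance_dual_stdGaussian, integral_strongDual_stdGaussian, hn]
  have hms : MeasurableSet {x : ℝ | T * (a ⬝ᵥ a) ≤ |x|} := measurableSet_le (by fun_prop) (by fun_prop)
  have hme : MeasurableSet {η : Fin k → ℝ | T * (a ⬝ᵥ a) ≤ |a ⬝ᵥ η|} :=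
    measurableSet_le (by fun_prop) (by simp only [dotProduct]; fun_prop)
  rw [hmap, Measure.map_apply (by fun_prop) hme]
  have : (fun (ζ : Fin k → ℝ) i => σ * ζ i) ⁻¹' {η : Fin k → ℝ | T * (a ⬝ᵥ a) ≤ |a ⬝ᵥ η|} =
      (fun ζ => L (WithLp.toLp 2 ζ)) ⁻¹' {x : ℝ | T * (a ⬝ᵥ a) ≤ |x|} := by
    ext ζ; simp only [Set.mem_preimage, Set.mem_ofPred_eq, hL]
  rw [this, ← Measure.map_apply (by fun_prop) hms, hg]
  have hp2 : 0 < σ ^ 2 * (a ⬝ᵥ a) := by positivity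
  refine (gauss_tail _ (by simpa using hp2) _ (by positivity)).trans (le_of_eq ?_)
  rw [Real.coe_toNNReal _ hp2.le]
  congr 2
  field_simp

lemma map_orthonormal {k m : ℕ} (f : Fin m → EuclideanSpace ℝ (Fin k)) (hf : Orthonormal ℝ f) :
    (stdGaussian (EuclideanSpace ℝ (Fin k))).map (fun y => (WithLp.toLp 2 (fun j => inner ℝ (f j) y) : EuclideanSpace ℝ (Fin m)))
      = stdGaussian (EuclideanSpace ℝ (Fin m)) := by
  have hmeas : Measurable (fun y => (WithLp.toLp 2 (fun j => inner ℝ (f j) y) : EuclideanSpace ℝ (Fin m))) := by fun_prop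
  have := Measure.isProbabilityMeasure_map (μ := stdGaussian (EuclideanSpace ℝ (Fin k))) hmeas.aemeasurable
  apply Measure.ext_of_charFun
  ext t
  rw [charFun_stdGaussian, charFun_apply, integral_map hmeas.aemeasurable (by fun_prop)]
  have : ∀ y, inner ℝ (WithLp.toLp 2 (fun j => inner ℝ (f j) y) : EuclideanSpace ℝ (Fin m)) t
      = inner ℝ y (∑ j, t j • f j) := by
    intro y
    rw [inner_sum, PiLp.inner_apply]
    apply Finset.sum_congr rfl
    intro j _
    rw [inner_smul_right, real_inner_comm (f j) y]; simp
  simp_rw [this]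
  rw [← charFun_apply, charFun_stdGaussian]
  have hn : ‖∑ j, t j • f j‖ = ‖t‖ := by
   rw [← sq_eq_sq₀ (norm_nonneg _) (norm_nonneg _), ← real_inner_self_eq_norm_sq, hf.inner_sum, EuclideanSpace.real_norm_sq_eq]
   simp [sq]
  rw [hn]

lemma gauss_subspace {k p : ℕ} (θ : ℝ) (hθ : 0 ≤ θ) (V : Submodule ℝ (EuclideanSpace ℝ (Fin k)))
    (hV : Module.finrank ℝ V ≤ p) :
    ∫⁻ y : Fin k → ℝ, ⨆ w : V, ENNReal.ofReal (Real.exp (-θ * ‖WithLp.toLp 2 y + (w : EuclideanSpace ℝ (Fin k))‖ ^ 2))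
      ∂(Measure.pi fun _ : Fin k => gaussianReal 0 1) ≤ ENNReal.ofReal ((√(1 + 2 * θ))⁻¹ ^ (k - p)) := by
  obtain ⟨m, hmm⟩ : ∃ m, m = Module.finrank ℝ Vᗮ := ⟨_, rfl⟩
  let b := stdOrthonormalBasis ℝ Vᗮ
  obtain ⟨f, hf, hfV⟩ : ∃ f : Fin m → EuclideanSpace ℝ (Fin k), Orthonormal ℝ f ∧ ∀ j, f j ∈ Vᗮ := by
    subst hmm
    exact ⟨fun j => b j, b.orthonormal.comp_linearIsometry (Vᗮ.subtypeₗᵢ), fun j => (b j).2⟩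
  have hm : k - p ≤ m := by
    have := Submodule.finrank_add_finrank_orthogonal V
    simp at this
    omega
  let F : EuclideanSpace ℝ (Fin m) → ENNReal := fun z => ENNReal.ofReal (Real.exp (-θ * ∑ j, z j ^ 2))
  have hF : Measurable F := by fun_prop
  calc _ ≤ ∫⁻ y : Fin k → ℝ, F (WithLp.toLp 2 (fun j => inner ℝ (f j) (WithLp.toLp 2 y : EuclideanSpace ℝ (Fin k)))) ∂(Measure.pi fun _ : Fin k => gaussianReal 0 1) := by
        apply lintegral_mono
        intro y
        apply iSup_le
        intro w
        apply ENNReal.ofReal_le_ofReal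
        apply Real.exp_le_exp.2
        have h1 := hf.sum_inner_products_le (WithLp.toLp 2 y + (w : EuclideanSpace ℝ (Fin k))) (s := Finset.univ)
        have h2 : ∀ j, inner ℝ (f j) (WithLp.toLp 2 y + (w : EuclideanSpace ℝ (Fin k))) = inner ℝ (f j) (WithLp.toLp 2 y : EuclideanSpace ℝ (Fin k)) := by
          intro j
          rw [inner_add_right, Submodule.inner_left_of_mem_orthogonal w.2 (hfV j), add_zero]
        simp_rw [h2, Real.norm_eq_abs, sq_abs] at h1
        simp only [neg_mul, neg_le_neg_iff]
        exact mul_le_mul_of_nonneg_left h1 hθ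
    _ = ∫⁻ y, F (WithLp.toLp 2 (fun j => inner ℝ (f j) y)) ∂(stdGaussian (EuclideanSpace ℝ (Fin k))) := by
        rw [← map_pi_eq_stdGaussian, lintegral_map (by fun_prop) (by fun_prop)]
    _ = ∫⁻ z, F z ∂(stdGaussian (EuclideanSpace ℝ (Fin m))) := by
        rw [← map_orthonormal f hf, lintegral_map hF (by fun_prop)]
    _ = ∫⁻ z : Fin m → ℝ, ENNReal.ofReal (∏ j, Real.exp (-θ * z j ^ 2)) ∂(Measure.pi fun _ => gaussianReal 0 1) := by
        rw [← map_pi_eq_stdGaussian, lintegral_map hF (by fun_prop)]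
        simp only [F, Finset.mul_sum, Real.exp_sum]
    _ = ENNReal.ofReal (∫ z : Fin m → ℝ, (∏ j, Real.exp (-θ * z j ^ 2)) ∂(Measure.pi fun _ => gaussianReal 0 1)) := by
        rw [ofReal_integral_eq_lintegral_ofReal]
        · apply Integrable.of_bound (C := 1) (Measurable.aestronglyMeasurable (by fun_prop))
          refine Filter.Eventually.of_forall fun z => ?_
          rw [← Real.exp_sum, Real.norm_eq_abs, Real.abs_exp, Real.exp_le_one_iff]
          apply Finset.sum_nonpos
          intro j _
          nlinarith [mul_nonneg hθ (sq_nonneg (z j))]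
        · exact Filter.Eventually.of_forall fun z => Finset.prod_nonneg fun j _ => (Real.exp_pos _).le
    _ = ENNReal.ofReal ((√(1 + 2 * θ))⁻¹ ^ m) := by
        rw [integral_fintype_prod_eq_prod (fun _ x => Real.exp (-θ * x ^ 2))]
        simp only [gauss_sq θ hθ, Finset.prod_const, Finset.card_univ, Fintype.card_fin]
    _ ≤ _ := by
        apply ENNReal.ofReal_le_ofReal
        apply pow_le_pow_of_le_one (by positivity) _ hm
        apply inv_le_one_of_one_le₀
        rw [Real.one_le_sqrt]; linarith

lemma transpose_lintegral {k p : ℕ} (ν : Measure ℝ) [IsProbabilityMeasure ν] (F : (Fin k → Fin p → ℝ) → ENNReal)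
    (hF : Measurable F) :
    ∫⁻ G, F G ∂(Measure.pi fun _ : Fin k => Measure.pi fun _ : Fin p => ν)
      = ∫⁻ C : Fin p → Fin k → ℝ, F (fun r j => C j r) ∂(Measure.pi fun _ : Fin p => Measure.pi fun _ : Fin k => ν) := by
  have h1 : (Measure.pi fun _ : Fin k × Fin p => ν) =
      (Measure.pi fun _ : Fin k => Measure.pi fun _ : Fin p => ν).map (fun G ij => G ij.1 ij.2) := by
    apply Measure.pi_eq
    intro s hs
    rw [Measure.map_apply (by fun_prop) (MeasurableSet.univ_pi hs)]
    have : (fun (G : Fin k → Fin p → ℝ) (ij : Fin k × Fin p) => G ij.1 ij.2) ⁻¹' Set.univ.pi s =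
        Set.univ.pi fun i => Set.univ.pi fun j => s (i, j) := by
      ext G; simp [Set.mem_pi]
    rw [this, Measure.pi_pi]
    simp_rw [Measure.pi_pi]
    rw [Fintype.prod_prod_type]
  have h2 : (Measure.pi fun _ : Fin k × Fin p => ν) =
      (Measure.pi fun _ : Fin p => Measure.pi fun _ : Fin k => ν).map (fun G ij => G ij.2 ij.1) := by
    apply Measure.pi_eq
    intro s hs
    rw [Measure.map_apply (by fun_prop) (MeasurableSet.univ_pi hs)]
    have : (fun (G : Fin p → Fin k → ℝ) (ij : Fin k × Fin p) => G ij.2 ij.1) ⁻¹' Set.univ.pi s =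
        Set.univ.pi fun j => Set.univ.pi fun i => s (i, j) := by
      ext G; simp only [Set.mem_preimage, Set.mem_pi, Set.mem_univ, true_imp_iff, Prod.forall]
      exact forall_comm
    rw [this, Measure.pi_pi]
    simp_rw [Measure.pi_pi]
    rw [Fintype.prod_prod_type, Finset.prod_comm]
  have hm : Measurable (fun Z : Fin k × Fin p → ℝ => F (fun i j => Z (i, j))) := by fun_prop
  have e1 := lintegral_map (μ := Measure.pi fun _ : Fin k => Measure.pi fun _ : Fin p => ν) hm (g := fun G ij => G ij.1 ij.2) (by fun_prop)
  have e2 := lintegral_map (μ := Measure.pi fun _ : Fin p => Measure.pi fun _ : Fin k => ν) hm (g := fun G ij => G ij.2 ij.1) (by fun_prop)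
  rw [← h1] at e1
  rw [← h2] at e2
  exact e1.symm.trans e2

/-- supremum bounding the residual exponential -/
noncomputable def HH {k p : ℕ} (θ : ℝ) (i : Fin p) (G : Fin k → Fin p → ℝ) : ENNReal :=
  ⨆ v : {v : Fin p → ℝ // v i = 1},
    ENNReal.ofReal (Real.exp (-θ * ((Matrix.of G *ᵥ v.1) ⬝ᵥ (Matrix.of G *ᵥ v.1))))

lemma HH_meas {k p : ℕ} (θ : ℝ) (i : Fin p) : Measurable (HH (k := k) θ i) := by
  apply LowerSemicontinuous.measurable
  unfold HH
  apply lowerSemicontinuous_iSup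
  intro v
  apply Continuous.lowerSemicontinuous
  simp only [Matrix.mulVec, dotProduct, Matrix.of_apply]
  exact ENNReal.continuous_ofReal.comp (by fun_prop)

lemma HH_int {k p : ℕ} (θ : ℝ) (hθ : 0 ≤ θ) (i : Fin p) :
    ∫⁻ G, HH θ i G ∂(Measure.pi fun _ : Fin k => Measure.pi fun _ : Fin p => gaussianReal 0 1)
      ≤ ENNReal.ofReal ((√(1 + 2 * θ))⁻¹ ^ (k - p)) := by
  classical
  rw [transpose_lintegral _ _ (HH_meas θ i)]
  have hm : Measurable (fun C : Fin p → Fin k → ℝ => HH θ i (fun r j => C j r)) := by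
    have := HH_meas (k := k) θ i
    fun_prop
  rw [lintegral_eq_lmarginal_univ (fun _ _ => 0), lmarginal_erase' _ hm (Finset.mem_univ i)]
  set K := ENNReal.ofReal ((√(1 + 2 * θ))⁻¹ ^ (k - p))
  have hle : (fun C : Fin p → Fin k → ℝ => ∫⁻ y, HH θ i (fun r j => Function.update C i y j r) ∂(Measure.pi fun _ : Fin k => gaussianReal 0 1))
      ≤ fun _ => K := by
    intro C
    let c : Fin p → EuclideanSpace ℝ (Fin k) := fun j => WithLp.toLp 2 (C j)
    let V : Submodule ℝ (EuclideanSpace ℝ (Fin k)) := Submodule.span ℝ (Set.range c)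
    have hV : Module.finrank ℝ V ≤ p := by
      have := finrank_range_le_card (R := ℝ) c
      exact this.trans (by simp)
    refine le_trans (lintegral_mono fun y => ?_) (gauss_subspace θ hθ V hV)
    apply iSup_le
    rintro ⟨v, hv⟩
    have hw : ∑ j ∈ Finset.univ.erase i, v j • c j ∈ V :=
      Submodule.sum_mem _ fun j _ => Submodule.smul_mem _ _ (Submodule.subset_span ⟨j, rfl⟩)
    refine le_trans (le_of_eq ?_) (le_iSup (fun w : V => ENNReal.ofReal (Real.exp (-θ * ‖WithLp.toLp 2 y + (w : EuclideanSpace ℝ (Fin k))‖ ^ 2))) ⟨_, hw⟩)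
    congr 3
    rw [EuclideanSpace.real_norm_sq_eq, dotProduct]
    apply Finset.sum_congr rfl
    intro r _
    rw [← sq]
    congr 1
    simp only [Matrix.mulVec, dotProduct, Matrix.of_apply]
    rw [← Finset.add_sum_erase _ _ (Finset.mem_univ i)]
    simp only [Function.update_self, hv, mul_one, PiLp.add_apply, WithLp.ofLp_sum, WithLp.ofLp_smul, Finset.sum_apply, Pi.smul_apply, smul_eq_mul, c]
    congr 1
    apply Finset.sum_congr rfl
    intro j hj
    rw [Function.update_of_ne (Finset.ne_of_mem_erase hj), mul_comm]
  refine le_trans (lmarginal_mono hle _) ?_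
  rw [lmarginal]
  simp

lemma mulVec_meas {m n : ℕ} {Ω : Type*} [MeasurableSpace Ω] (M : Ω → Matrix (Fin m) (Fin n) ℝ) (w : Ω → Fin n → ℝ)
    (hM : ∀ i j, Measurable fun ω => M ω i j) (hw : ∀ j, Measurable fun ω => w ω j) (i : Fin m) :
    Measurable fun ω => (M ω *ᵥ w ω) i := by
  have : (fun ω => (M ω *ᵥ w ω) i) = fun ω => ∑ j, M ω i j * w ω j := rfl
  rw [this]
  exact Finset.measurable_sum _ fun j _ => (hM i j).mul (hw j)

lemma inv_meas {p : ℕ} {Ω : Type*} [MeasurableSpace Ω] (M : Ω → Matrix (Fin p) (Fin p) ℝ)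
    (hM : ∀ i j, Measurable fun ω => M ω i j) (i j : Fin p) : Measurable fun ω => (M ω)⁻¹ i j := by
  have hM' : Measurable (fun ω => (fun i j => M ω i j : Fin p → Fin p → ℝ)) := by fun_prop
  have h1 : Continuous fun N : Fin p → Fin p → ℝ => (Matrix.of N).det := by
    apply Continuous.matrix_det; exact continuous_id
  have h2 : Continuous fun N : Fin p → Fin p → ℝ => (Matrix.of N).adjugate i j := by
    have : Continuous fun N : Fin p → Fin p → ℝ => (Matrix.of N).adjugate := by
      apply Continuous.matrix_adjugate; exact continuous_id
    exact this.matrix_elem i j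
  have e : (fun ω => (M ω)⁻¹ i j) = fun ω => ((Matrix.of fun i j => M ω i j).det)⁻¹ * (Matrix.of fun i j => M ω i j).adjugate i j := by
    ext ω
    rw [Matrix.inv_def, Ring.inverse_eq_inv']; rfl
  rw [e]
  exact (h1.measurable.comp hM').inv.mul (h2.measurable.comp hM')

/-- Per-node guarantee of the LeastSquares estimator (Lemma 3.2): with `X ∈ ℝ^{k×p}`
having rows i.i.d. `N(0, M)`, `M = LLᵀ` positive definite, noise `η` with i.i.d.
`N(0, σ_y²)` entries, responses `B = XA + η`, least-squares solution
`Â = (XᵀX)⁻¹XᵀB` and `Δ = Â − A`, for constants `0 < c₁ < 1/2`, `c₂ > 0` and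
`k ≥ p/c₁²` one has
`Pr(‖LᵀΔ‖₂ > 2σ_y c₂ √p/((1−2c₁)²√k)) ≤ exp(−kc₁²/2) + 2p·exp(−2k) + p·exp(−c₂²/2)`. -/
theorem stmt_6 (p k : ℕ) (L : Matrix (Fin p) (Fin p) ℝ) (hM : (L * Lᵀ).PosDef)
    (A : Fin p → ℝ) (σy : ℝ) (hσy : 0 < σy)
    (c₁ c₂ : ℝ) (hc₁0 : 0 < c₁) (hc₁ : c₁ < 1 / 2) (hc₂ : 0 < c₂)
    (hk : (p : ℝ) / c₁ ^ 2 ≤ (k : ℝ)) :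
    ((Measure.pi fun _ : Fin k => mvg0 L).prod
        (Measure.pi fun _ : Fin k => gaussianReal 0 ((σy ^ 2).toNNReal)))
      {ω | let X : Matrix (Fin k) (Fin p) ℝ := Matrix.of ω.1
           let B : Fin k → ℝ := X.mulVec A + ω.2
           let Δ : Fin p → ℝ := (Xᵀ * X)⁻¹.mulVec (Xᵀ.mulVec B) - A
           2 * σy * c₂ * Real.sqrt (p : ℝ) / ((1 - 2 * c₁) ^ 2 * Real.sqrt (k : ℝ))
             < enorm' (Lᵀ.mulVec Δ)}
      ≤ ENNReal.ofReal (Real.exp (-((k : ℝ) * c₁ ^ 2) / 2)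
          + 2 * (p : ℝ) * Real.exp (-2 * (k : ℝ))
          + (p : ℝ) * Real.exp (-c₂ ^ 2 / 2)) := by
  have hLm : Measurable (fun x : Fin p → ℝ => L.mulVec x) := by
    refine measurable_pi_lambda _ fun i => ?_
    exact mulVec_meas (fun _ => L) id (fun _ _ => measurable_const) (fun j => measurable_pi_apply j) i
  have : IsProbabilityMeasure (mvg0 L) := Measure.isProbabilityMeasure_map hLm.aemeasurable
  rcases Nat.eq_zero_or_pos p with hp | hp
  · subst hp
    simp [enorm']
  have hp' : (1:ℝ) ≤ p := by exact_mod_cast hp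
  have hpk : 4 * (p:ℝ) ≤ k := by
    refine le_trans ?_ hk
    rw [le_div_iff₀ (by positivity)]
    have : c₁ ^ 2 ≤ 1/4 := by nlinarith
    nlinarith
  have hk0 : (0:ℝ) < k := by linarith
  set T : ℝ := 2 * σy * c₂ / √k with hTdef
  have hT : 0 < T := by positivity
  set θ : ℝ := T ^ 2 / (2 * σy ^ 2) with hθdef
  have hθ : 0 ≤ θ := by positivity
  have hθ2 : 2 * θ = 4 * c₂ ^ 2 / k := by
    rw [hθdef, hTdef, div_pow, Real.sq_sqrt hk0.le]; field_simp; norm_num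
  set S := {ω : (Fin k → Fin p → ℝ) × (Fin k → ℝ) | let X : Matrix (Fin k) (Fin p) ℝ := Matrix.of ω.1
           let B : Fin k → ℝ := X.mulVec A + ω.2
           let Δ : Fin p → ℝ := (Xᵀ * X)⁻¹.mulVec (Xᵀ.mulVec B) - A
           2 * σy * c₂ * Real.sqrt (p : ℝ) / ((1 - 2 * c₁) ^ 2 * Real.sqrt (k : ℝ))
             < enorm' (Lᵀ.mulVec Δ)} with hS
  have hSm : MeasurableSet S := by
    apply measurableSet_lt measurable_const
    have hinv := inv_meas (fun ω : (Fin k → Fin p → ℝ) × (Fin k → ℝ) => (Matrix.of ω.1)ᵀ * Matrix.of ω.1)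
      (by intro i j; simp only [Matrix.mul_apply, Matrix.transpose_apply, Matrix.of_apply]; fun_prop)
    unfold enorm'
    apply Measurable.sqrt
    apply Finset.measurable_sum
    intro i _
    apply Measurable.pow_const
    refine mulVec_meas (fun _ : (Fin k → Fin p → ℝ) × (Fin k → ℝ) => Lᵀ) _ (fun _ _ => measurable_const) (fun j => ?_) i
    apply Measurable.sub_const
    refine mulVec_meas _ _ hinv (fun l => ?_) j
    refine mulVec_meas _ _ (fun a b => ?_) (fun b => ?_) l
    · simp only [Matrix.transpose_apply, Matrix.of_apply]; fun_prop
    · refine Measurable.add (mulVec_meas _ (fun _ => A) (fun a b => ?_) (fun b => measurable_const) b) (by fun_prop)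
      simp only [Matrix.of_apply]; fun_prop
  have hmap : (Measure.pi fun _ : Fin k => mvg0 L) =
      (Measure.pi fun _ : Fin k => Measure.pi fun _ : Fin p => gaussianReal 0 1).map (fun G r => L.mulVec (G r)) := by
    have h : ∀ _ : Fin k, SigmaFinite ((Measure.pi fun _ : Fin p => gaussianReal 0 1).map (fun x => L.mulVec x)) := by
      intro _
      change SigmaFinite (mvg0 L)
      infer_instance
    rw [Measure.pi_map_pi (hμ := h) (fun i => hLm.aemeasurable)]
    rfl
  have hGm : Measurable (fun (G : Fin k → Fin p → ℝ) r => L.mulVec (G r)) :=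
    measurable_pi_lambda _ fun r => hLm.comp (measurable_pi_apply r)
  rw [Measure.prod_apply hSm, hmap, lintegral_map (measurable_measure_prodMk_left hSm) hGm]
  have hpt : ∀ G : Fin k → Fin p → ℝ,
      (Measure.pi fun _ : Fin k => gaussianReal 0 ((σy ^ 2).toNNReal)) (Prod.mk (fun r => L.mulVec (G r)) ⁻¹' S)
        ≤ ∑ i, HH θ i G := by
    intro G
    choose v hv1 hv2 using exists_resid (Matrix.of G)
    have hsub : Prod.mk (fun r => L.mulVec (G r)) ⁻¹' S ⊆
        ⋃ i, {η | T * ((Matrix.of G *ᵥ v i) ⬝ᵥ (Matrix.of G *ᵥ v i)) ≤ |(Matrix.of G *ᵥ v i) ⬝ᵥ η|} := by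
      intro η hη
      by_contra hcon
      simp only [Set.mem_iUnion, Set.mem_ofPred_eq, not_exists, not_le] at hcon
      obtain ⟨hU, hu⟩ := det_main (Matrix.of G) v hv1 hv2 T η hcon
      have hη : 2 * σy * c₂ * Real.sqrt (p : ℝ) / ((1 - 2 * c₁) ^ 2 * Real.sqrt (k : ℝ))
             < enorm' (Lᵀ *ᵥ (((Matrix.of (fun r => L.mulVec (G r)))ᵀ * (Matrix.of (fun r => L.mulVec (G r))))⁻¹ *ᵥ
              ((Matrix.of (fun r => L.mulVec (G r)))ᵀ *ᵥ ((Matrix.of (fun r => L.mulVec (G r))) *ᵥ A + η)) - A)) := hη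
      rw [delta_eq L hM A (Matrix.of G) hU η _ (by
        ext r j
        simp [Matrix.mul_apply, Matrix.mulVec, dotProduct, mul_comm])] at hη
      set u := ((Matrix.of G)ᵀ * Matrix.of G)⁻¹ *ᵥ ((Matrix.of G)ᵀ *ᵥ η)
      have h1 : enorm' u ≤ T * √p := by
        unfold enorm'
        rw [Real.sqrt_le_left (by positivity), mul_pow, Real.sq_sqrt (by positivity)]
        have : ∀ i ∈ Finset.univ, u i ^ 2 ≤ T ^ 2 := fun i _ => by
          rw [← sq_abs]
          exact pow_le_pow_left₀ (abs_nonneg _) (hu i).le 2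
        have := Finset.sum_le_card_nsmul _ _ _ this
        simp at this
        linarith
      have h2 : T * √p ≤ 2 * σy * c₂ * Real.sqrt (p : ℝ) / ((1 - 2 * c₁) ^ 2 * Real.sqrt (k : ℝ)) := by
        rw [hTdef, div_mul_eq_mul_div]
        have h3 : 0 < 1 - 2 * c₁ := by linarith
        apply div_le_div_of_nonneg_left (by positivity) (by positivity)
        have h4 : (1 - 2 * c₁) ^ 2 ≤ 1 := by nlinarith
        exact mul_le_of_le_one_left (Real.sqrt_nonneg _) h4
      linarith
    refine (measure_mono hsub).trans ((measure_iUnion_fintype_le _ _).trans ?_)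
    apply Finset.sum_le_sum
    intro i _
    refine (noise k σy T hσy hT.le _).trans ?_
    exact le_iSup (fun w : {v : Fin p → ℝ // v i = 1} =>
      ENNReal.ofReal (Real.exp (-θ * ((Matrix.of G *ᵥ w.1) ⬝ᵥ (Matrix.of G *ᵥ w.1))))) ⟨v i, hv1 i⟩
  refine (lintegral_mono hpt).trans ?_
  rw [lintegral_finsetSum _ (fun i _ => HH_meas θ i)]
  refine (Finset.sum_le_sum fun i _ => HH_int θ hθ i).trans ?_
  rw [Finset.sum_const, Finset.card_univ, Fintype.card_fin, nsmul_eq_mul, ← ENNReal.ofReal_natCast,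
    ← ENNReal.ofReal_mul (by positivity)]
  apply ENNReal.ofReal_le_ofReal
  rw [hθ2]
  refine (final_ineq p k c₁ (c₂ ^ 2) hp hpk hc₁0 hc₁ (sq_nonneg _)).trans ?_
  have : 0 ≤ 2 * (p : ℝ) * Real.exp (-2 * (k : ℝ)) := by positivity
  linarith
end

section
/- Consider the node model: M = LLᵀ ∈ ℝ^{p×p} is positive definite, A ∈ ℝ^p, σ_y > 0. Let t be a real with 0 ≤ t ≤ 3 − 2√2, and let Â ∈ ℝ^p be a fixed vector with Δ = Â − A satisfying |ΔᵀMΔ| ≤ σ_y²·t. Let δ ∈ (0,1) and let k ≥ (32/t)·log(2/δ) be an integer. Draw k i.i.d. samples: for s = 1,…,k, X^{(s)} ~ N(0, M) (a row vector in ℝ^p) and Y^{(s)} = X^{(s)}A + η^{(s)} with independent η^{(s)} ~ N(0, σ_y²). Define σ̂_y² = (1/k)·Σ_{s=1}^k (Y^{(s)} − X^{(s)}Â)². Then Pr( (1 − √t)·σ_y² ≤ σ̂_y² ≤ (1 + √t)·σ_y² ) ≥ 1 − δ. (In the paper t = ε·p/(n·d_avg).) -/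
open MeasureTheory ProbabilityTheory Matrix

lemma aux_lin {p : ℕ} (c : Fin p → ℝ) :
    Measure.map (fun x => x ⬝ᵥ c) (Measure.pi fun _ : Fin p => gaussianReal 0 1)
      = gaussianReal 0 ((c ⬝ᵥ c).toNNReal) := by
  have hm : Measurable (fun x : Fin p → ℝ => x ⬝ᵥ c) := by
    unfold dotProduct; fun_prop
  have := Measure.isProbabilityMeasure_map
    (μ := Measure.pi fun _ : Fin p => gaussianReal 0 1) hm.aemeasurable
  refine Measure.ext_of_charFun ?_
  ext t
  have hc : 0 ≤ c ⬝ᵥ c := Finset.sum_nonneg fun i _ => mul_self_nonneg _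
  rw [charFun_apply_real, integral_map hm.aemeasurable (by fun_prop), charFun_gaussianReal]
  have h : ∀ x : Fin p → ℝ, Complex.exp (t * ((x ⬝ᵥ c : ℝ) : ℂ) * Complex.I)
      = ∏ i, Complex.exp (((t * c i : ℝ) : ℂ) * (x i : ℂ) * Complex.I) := by
    intro x
    rw [← Complex.exp_sum]
    congr 1
    simp only [dotProduct]
    push_cast
    rw [Finset.mul_sum, Finset.sum_mul]
    refine Finset.sum_congr rfl fun i _ => by ring
  simp_rw [h]
  rw [integral_fintype_prod_eq_prod (𝕜 := ℂ)
    (f := fun i (y : ℝ) => Complex.exp (((t * c i : ℝ) : ℂ) * (y : ℂ) * Complex.I))]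
  simp_rw [← charFun_apply_real, charFun_gaussianReal]
  rw [← Complex.exp_sum]
  congr 1
  rw [Real.coe_toNNReal _ hc]
  simp only [dotProduct]
  push_cast
  rw [Finset.sum_mul, Finset.sum_div, mul_zero, zero_mul, zero_sub, ← Finset.sum_neg_distrib]
  refine Finset.sum_congr rfl fun i _ => by ring

lemma aux_single {p : ℕ} (L : Matrix (Fin p) (Fin p) ℝ) (A Ahat : Fin p → ℝ) (w : NNReal) :
    Measure.map (fun z : (Fin p → ℝ) × ℝ => z.1 ⬝ᵥ A + z.2 - z.1 ⬝ᵥ Ahat)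
      ((mvg0 L).prod (gaussianReal 0 w))
      = gaussianReal 0 (((Ahat - A) ⬝ᵥ (L * Lᵀ).mulVec (Ahat - A)).toNNReal + w) := by
  have hL : Measurable (fun x : Fin p → ℝ => L.mulVec x) := by
    unfold mulVec dotProduct; fun_prop
  have hm : Measurable (fun x : Fin p → ℝ => x ⬝ᵥ (A - Ahat)) := by
    unfold dotProduct; fun_prop
  have : IsProbabilityMeasure (mvg0 L) :=
    Measure.isProbabilityMeasure_map hL.aemeasurable
  have h1 : Measure.map (fun x => x ⬝ᵥ (A - Ahat)) (mvg0 L)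
      = gaussianReal 0 (((Ahat - A) ⬝ᵥ (L * Lᵀ).mulVec (Ahat - A)).toNNReal) := by
    unfold mvg0
    rw [Measure.map_map hm hL]
    have : (fun x => x ⬝ᵥ (A - Ahat)) ∘ (fun x => L.mulVec x)
        = fun x => x ⬝ᵥ (Lᵀ.mulVec (A - Ahat)) := by
      ext x
      simp only [Function.comp]
      rw [dotProduct_mulVec, vecMul_transpose]
    rw [this, aux_lin]
    congr 2
    rw [← neg_sub A Ahat, mulVec_neg, neg_dotProduct_neg, ← mulVec_mulVec,
      dotProduct_mulVec (A - Ahat) L, ← mulVec_transpose]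
  have h2 : (fun z : (Fin p → ℝ) × ℝ => z.1 ⬝ᵥ A + z.2 - z.1 ⬝ᵥ Ahat)
      = (fun z : ℝ × ℝ => z.1 + z.2) ∘ Prod.map (fun x => x ⬝ᵥ (A - Ahat)) id := by
    ext z
    simp [dotProduct_sub]; ring
  rw [h2, ← Measure.map_map (by fun_prop) (hm.prodMap measurable_id),
    ← Measure.map_prod_map _ _ hm measurable_id, h1, Measure.map_id]
  change (gaussianReal 0 _) ∗ (gaussianReal 0 w) = _
  rw [gaussianReal_conv_gaussianReal, add_zero]

lemma aux_all {p k : ℕ} (L : Matrix (Fin p) (Fin p) ℝ) (A Ahat : Fin p → ℝ) (w : NNReal) :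
    MeasurePreserving
      (fun (ω : (Fin k → Fin p → ℝ) × (Fin k → ℝ)) s => ω.1 s ⬝ᵥ A + ω.2 s - ω.1 s ⬝ᵥ Ahat)
      ((Measure.pi fun _ : Fin k => mvg0 L).prod (Measure.pi fun _ : Fin k => gaussianReal 0 w))
      (Measure.pi fun _ : Fin k =>
        gaussianReal 0 (((Ahat - A) ⬝ᵥ (L * Lᵀ).mulVec (Ahat - A)).toNNReal + w)) := by
  have hL : Measurable (fun x : Fin p → ℝ => L.mulVec x) := by
    unfold mulVec dotProduct; fun_prop
  have : IsProbabilityMeasure (mvg0 L) :=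
    Measure.isProbabilityMeasure_map hL.aemeasurable
  have hm : Measurable (fun z : (Fin p → ℝ) × ℝ => z.1 ⬝ᵥ A + z.2 - z.1 ⬝ᵥ Ahat) := by
    unfold dotProduct; fun_prop
  have h1 : MeasurePreserving (fun z : (Fin p → ℝ) × ℝ => z.1 ⬝ᵥ A + z.2 - z.1 ⬝ᵥ Ahat)
      ((mvg0 L).prod (gaussianReal 0 w)) _ := ⟨hm, aux_single L A Ahat w⟩
  have h2 := measurePreserving_pi (ι := Fin k) (fun _ => (mvg0 L).prod (gaussianReal 0 w)) _
    (fun _ => h1)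
  have h3 := (measurePreserving_arrowProdEquivProdArrow (Fin p → ℝ) ℝ (Fin k)
    (fun _ => mvg0 L) (fun _ => gaussianReal 0 w)).symm
  exact h2.comp h3

lemma aux_int (v : NNReal) (hv : v ≠ 0) (l : ℝ) (hl : l < 1 / 2) :
    ∫ x, Real.exp (l * (x ^ 2 / v)) ∂(gaussianReal 0 v) = (Real.sqrt (1 - 2 * l))⁻¹ := by
  have hv' : (0 : ℝ) < v := by positivity
  rw [integral_gaussianReal_eq_integral_smul hv]
  have h : ∀ x : ℝ, gaussianPDFReal 0 v x • Real.exp (l * (x ^ 2 / v))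
      = (Real.sqrt (2 * Real.pi * v))⁻¹ * Real.exp (-((1 - 2 * l) / (2 * v)) * x ^ 2) := by
    intro x
    rw [gaussianPDFReal, smul_eq_mul, mul_assoc, ← Real.exp_add]
    congr 2
    field_simp
    ring
  simp_rw [h]
  have hp : 0 < 1 - 2 * l := by linarith
  rw [integral_const_mul, integral_gaussian, ← Real.sqrt_inv, ← Real.sqrt_inv,
    ← Real.sqrt_mul (by positivity)]
  congr 1
  have := Real.pi_pos
  field_simp

lemma aux_log_s15 (x : ℝ) (hx : |x| ≤ 1 / 4) : -x - x ^ 2 ≤ Real.log (1 - x) := by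
  have h := Real.abs_log_sub_add_sum_range_le (x := x) (by linarith) 2
  simp only [Finset.sum_range_succ, Finset.sum_range_zero] at h
  norm_num at h
  have h2 := (abs_le.1 h).1
  have h3 : |x| ^ 3 / (1 - |x|) ≤ x ^ 2 / 2 := by
    rw [div_le_iff₀ (by linarith), ← sq_abs x]
    have := abs_nonneg x
    nlinarith [sq_nonneg |x|]
  linarith

lemma aux_mgf (v : NNReal) (hv : v ≠ 0) (k : ℕ) (l : ℝ) (hl : |l| ≤ 1 / 8) :
    Integrable (fun x : Fin k → ℝ => Real.exp (l * ∑ s, x s ^ 2 / v))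
        (Measure.pi fun _ : Fin k => gaussianReal 0 v) ∧
    mgf (fun x : Fin k → ℝ => ∑ s, x s ^ 2 / v) (Measure.pi fun _ : Fin k => gaussianReal 0 v) l
      ≤ Real.exp (k * (l + 2 * l ^ 2)) := by
  have hl' := abs_le.1 hl
  have hp : 0 < 1 - 2 * l := by linarith
  have key : ∫ x : Fin k → ℝ, Real.exp (l * ∑ s, x s ^ 2 / v)
      ∂(Measure.pi fun _ : Fin k => gaussianReal 0 v) = (Real.sqrt (1 - 2 * l))⁻¹ ^ k := by
    simp_rw [Finset.mul_sum, Real.exp_sum]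
    rw [integral_fintype_prod_eq_prod (𝕜 := ℝ)
      (f := fun _ (y : ℝ) => Real.exp (l * (y ^ 2 / v)))]
    simp [aux_int v hv l (by linarith)]
  refine ⟨Integrable.of_integral_ne_zero ?_, ?_⟩
  · rw [key]; positivity
  · rw [mgf, key, Real.exp_nat_mul]
    refine pow_le_pow_left₀ (by positivity) ?_ k
    have h := aux_log_s15 (2 * l) (by rw [abs_le]; constructor <;> linarith)
    rw [← Real.exp_log (Real.sqrt_pos.2 hp), ← Real.exp_neg, Real.exp_le_exp,
      Real.log_sqrt hp.le]
    nlinarith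

lemma aux_tail (v : NNReal) (hv : v ≠ 0) (k : ℕ) (u : ℝ) (hu : 0 ≤ u) (hu1 : u ≤ 1 / 2) :
    (Measure.pi fun _ : Fin k => gaussianReal 0 v).real
      {x | k * (1 + u) ≤ ∑ s, x s ^ 2 / v} ≤ Real.exp (-(k * u ^ 2 / 8)) ∧
    (Measure.pi fun _ : Fin k => gaussianReal 0 v).real
      {x | ∑ s, x s ^ 2 / v ≤ k * (1 - u)} ≤ Real.exp (-(k * u ^ 2 / 8)) := by
  constructor
  · obtain ⟨h1, h2⟩ := aux_mgf v hv k (u / 4) (by rw [abs_le]; constructor <;> linarith)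
    refine (measure_ge_le_exp_mul_mgf _ (by positivity) h1).trans
      ((mul_le_mul_of_nonneg_left h2 (Real.exp_nonneg _)).trans (le_of_eq ?_))
    rw [← Real.exp_add]; congr 1; ring
  · obtain ⟨h1, h2⟩ := aux_mgf v hv k (-(u / 4)) (by rw [abs_le]; constructor <;> linarith)
    refine (measure_le_le_exp_mul_mgf _ (by linarith) h1).trans
      ((mul_le_mul_of_nonneg_left h2 (Real.exp_nonneg _)).trans (le_of_eq ?_))
    rw [← Real.exp_add]; congr 1; ring

/-- Single-node guarantee of VarianceRecovery (Lemma 2.12): with `M = LLᵀ` positive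
definite, `0 ≤ t ≤ 3 − 2√2`, a fixed estimate `Â` with `|ΔᵀMΔ| ≤ σ_y²t` for
`Δ = Â − A`, and `k ≥ (32/t)·log(2/δ)` i.i.d. samples `X⁽ˢ⁾ ~ N(0,M)`,
`Y⁽ˢ⁾ = X⁽ˢ⁾A + η⁽ˢ⁾` with independent `η⁽ˢ⁾ ~ N(0,σ_y²)`, the empirical residual
variance `σ̂_y² = (1/k)Σ (Y⁽ˢ⁾ − X⁽ˢ⁾Â)²` satisfies
`(1 − √t)σ_y² ≤ σ̂_y² ≤ (1 + √t)σ_y²` with probability at least `1 − δ`. -/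
theorem stmt_15 (p : ℕ) (L : Matrix (Fin p) (Fin p) ℝ) (hM : (L * Lᵀ).PosDef)
    (A Ahat : Fin p → ℝ) (σy t δ : ℝ) (hσy : 0 < σy)
    (ht0 : 0 ≤ t) (ht1 : t ≤ 3 - 2 * Real.sqrt 2)
    (hΔ : |(Ahat - A) ⬝ᵥ (L * Lᵀ).mulVec (Ahat - A)| ≤ σy ^ 2 * t)
    (hδ0 : 0 < δ) (hδ1 : δ < 1) (k : ℕ)
    (hk : 32 * Real.log (2 / δ) ≤ (k : ℝ) * t) :
    ENNReal.ofReal (1 - δ) ≤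
      ((Measure.pi fun _ : Fin k => mvg0 L).prod
          (Measure.pi fun _ : Fin k => gaussianReal 0 ((σy ^ 2).toNNReal)))
        {ω | (1 - Real.sqrt t) * σy ^ 2
              ≤ (1 / (k : ℝ)) * ∑ s : Fin k, (ω.1 s ⬝ᵥ A + ω.2 s - ω.1 s ⬝ᵥ Ahat) ^ 2 ∧
             (1 / (k : ℝ)) * ∑ s : Fin k, (ω.1 s ⬝ᵥ A + ω.2 s - ω.1 s ⬝ᵥ Ahat) ^ 2
              ≤ (1 + Real.sqrt t) * σy ^ 2} := by
  have hlog : 0 < Real.log (2 / δ) := Real.log_pos (by rw [lt_div_iff₀ hδ0]; linarith)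
  have hkt : 0 < (k : ℝ) * t := by linarith
  have hk0 : (0 : ℝ) < k := by
    rcases (Nat.cast_nonneg (α := ℝ) k).eq_or_lt with h | h
    · rw [← h] at hkt; simp at hkt
    · exact h
  have htpos : 0 < t := by
    rcases ht0.eq_or_lt with h | h
    · rw [← h] at hkt; simp at hkt
    · exact h
  set r : ℝ := (Ahat - A) ⬝ᵥ (L * Lᵀ).mulVec (Ahat - A) with hr
  have hr0 : 0 ≤ r := by
    have := hM.posSemidef.dotProduct_mulVec_nonneg (Ahat - A)
    rwa [star_trivial] at this
  rw [abs_of_nonneg hr0] at hΔ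
  set v : NNReal := r.toNNReal + (σy ^ 2).toNNReal with hvdef
  have hvv : (v : ℝ) = r + σy ^ 2 := by
    rw [hvdef, NNReal.coe_add, Real.coe_toNNReal _ hr0, Real.coe_toNNReal _ (sq_nonneg _)]
  have hσ2 : 0 < σy ^ 2 := by positivity
  have hvpos : (0 : ℝ) < v := by rw [hvv]; linarith
  have hv : v ≠ 0 := by
    intro h; rw [h] at hvpos; simp at hvpos
  set q := Real.sqrt t with hq
  have hq0 : 0 < q := Real.sqrt_pos.2 htpos
  have hqt : q ^ 2 = t := Real.sq_sqrt ht0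
  have h2 : Real.sqrt 2 ^ 2 = 2 := Real.sq_sqrt (by norm_num)
  have h2' : 1 < Real.sqrt 2 := by
    nlinarith [Real.sqrt_nonneg 2]
  have hq1 : q ≤ Real.sqrt 2 - 1 := by
    refine abs_le_of_sq_le_sq' ?_ (by linarith) |>.2
    rw [hqt]; nlinarith
  have hq2 : q ^ 2 + 2 * q ≤ 1 := by nlinarith
  have hqh : q ≤ 1 / 2 := by nlinarith
  obtain ⟨t1, t2⟩ := aux_tail v hv k (q / 2) (by positivity) (by linarith)
  have hexp : Real.exp (-(k * (q / 2) ^ 2 / 8)) ≤ δ / 2 := by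
    rw [← Real.exp_log (show 0 < δ / 2 by positivity), Real.exp_le_exp, div_pow, hqt]
    have : Real.log (δ / 2) = - Real.log (2 / δ) := by rw [← Real.log_inv, inv_div]
    rw [this]; linarith
  have hmp := aux_all (k := k) L A Ahat (σy ^ 2).toNNReal
  rw [← hr, ← hvdef] at hmp
  set P := Measure.pi fun _ : Fin k => gaussianReal 0 v with hP
  set S : Set (Fin k → ℝ) := {x | (1 - q) * σy ^ 2 ≤ (1 / (k : ℝ)) * ∑ s, x s ^ 2 ∧
    (1 / (k : ℝ)) * ∑ s, x s ^ 2 ≤ (1 + q) * σy ^ 2} with hS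
  have hSm : MeasurableSet S := by
    have hf : Measurable fun x : Fin k → ℝ => (1 / (k : ℝ)) * ∑ s, x s ^ 2 := by fun_prop
    exact (measurableSet_le measurable_const hf).inter (measurableSet_le hf measurable_const)
  have hgoal := hmp.measure_preimage hSm.nullMeasurableSet
  refine le_of_le_of_eq ?_ hgoal.symm
  have hsub : Sᶜ ⊆ {x | k * (1 + q / 2) ≤ ∑ s, x s ^ 2 / (v : ℝ)} ∪
      {x | ∑ s, x s ^ 2 / (v : ℝ) ≤ k * (1 - q / 2)} := by
    intro x hx
    by_contra hcon
    apply hx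
    simp only [Set.mem_union, Set.mem_setOf_eq, not_or, not_le, ← Finset.sum_div] at hcon
    obtain ⟨c1, c2⟩ := hcon
    rw [div_lt_iff₀ hvpos] at c1
    rw [lt_div_iff₀ hvpos] at c2
    constructor
    · rw [one_div, inv_mul_eq_div, le_div_iff₀ hk0]
      refine le_trans ?_ c2.le
      have : (1 - q) * σy ^ 2 ≤ (1 - q / 2) * v := by rw [hvv]; nlinarith
      nlinarith
    · rw [one_div, inv_mul_eq_div, div_le_iff₀ hk0]
      refine c1.le.trans ?_
      have : (1 + q / 2) * v ≤ (1 + q) * σy ^ 2 := by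
        have e1 : (v : ℝ) ≤ σy ^ 2 * (1 + q ^ 2) := by rw [hvv, hqt]; linarith
        have e2 : (1 + q / 2) * (1 + q ^ 2) ≤ 1 + q := by nlinarith
        calc (1 + q / 2) * (v : ℝ) ≤ (1 + q / 2) * (σy ^ 2 * (1 + q ^ 2)) := by gcongr
          _ = σy ^ 2 * ((1 + q / 2) * (1 + q ^ 2)) := by ring
          _ ≤ σy ^ 2 * (1 + q) := by gcongr
          _ = _ := by ring
      nlinarith
  have hc : P.real Sᶜ ≤ δ := by
    refine (measureReal_mono hsub).trans ((measureReal_union_le _ _).trans ?_)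
    linarith
  rw [probReal_compl_eq_one_sub hSm] at hc
  rw [← ofReal_measureReal]
  exact ENNReal.ofReal_le_ofReal (by linarith)
end

section
/- There exists a universal constant c > 0 such that for every ε ∈ (0,1) and all integers n, d with 1 ≤ d ≤ n/2, there is a DAG G on n nodes with every in-degree at most d (namely the complete bipartite DAG with d source nodes each pointing to all n − d sink nodes) with the following property. Any estimator — a measurable map taking m i.i.d. samples from a Gaussian Bayesian network P on G to a Gaussian Bayesian network Q on G — that satisfies, for every Gaussian Bayesian network P on G, Pr( d_TV(P, Q) ≤ c·ε ) ≥ 2/3, must use at least m ≥ c·d(n−d)/ε² samples; in particular Ω(nd/ε²) samples are needed. -/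
open MeasureTheory ProbabilityTheory Matrix

/-- Total variation distance between two measures:
`d_TV(P,Q) = sup_A |P(A) − Q(A)|`. -/
noncomputable def dTV {α : Type*} [MeasurableSpace α] (P Q : Measure α) : ℝ :=
  ⨆ s : Set α, |(P s).toReal - (Q s).toReal|

lemma pi_withDensity_aux {m : ℕ} {α : Type*} [MeasurableSpace α] (μ : Measure α)
    [IsProbabilityMeasure μ] (L : α → ENNReal) (hL : Measurable L)
    [IsProbabilityMeasure (μ.withDensity L)] :
    (Measure.pi fun _ : Fin m => μ.withDensity L) =
      (Measure.pi fun _ : Fin m => μ).withDensity (fun ω => ∏ k, L (ω k)) := by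
  refine Measure.pi_eq fun s hs => ?_
  rw [withDensity_apply _ (MeasurableSet.univ_pi hs), ← lintegral_indicator (MeasurableSet.univ_pi hs)]
  have h1 : ∀ ω : Fin m → α, (Set.pi Set.univ s).indicator (fun ω => ∏ k, L (ω k)) ω
      = ∏ k, (s k).indicator L (ω k) := by
    intro ω
    by_cases h : ω ∈ Set.pi Set.univ s
    · rw [Set.indicator_of_mem h]
      refine Finset.prod_congr rfl fun k _ => ?_
      rw [Set.indicator_of_mem (h k (Set.mem_univ k))]
    · rw [Set.indicator_of_notMem h]
      simp only [Set.mem_pi, Set.mem_univ, true_imp_iff, not_forall] at h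
      obtain ⟨k, hk⟩ := h
      exact (Finset.prod_eq_zero (Finset.mem_univ k) (Set.indicator_of_notMem hk _)).symm
  simp_rw [h1]
  have hm : ∀ k, Measurable ((s k).indicator L) := fun k => hL.indicator (hs k)
  rw [lintegral_prod_eq_prod_lintegral_of_indepFun (μ := Measure.pi fun _ : Fin m => μ) Finset.univ
    (fun k ω => (s k).indicator L (ω k))
    (iIndepFun_pi (μ := fun _ : Fin m => μ) (fun k => (hm k).aemeasurable))
    (fun k => (hm k).comp (measurable_pi_apply k))]
  refine Finset.prod_congr rfl fun k _ => ?_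
  rw [withDensity_apply _ (hs k), ← lintegral_indicator (hs k)]
  exact (measurePreserving_eval (fun _ : Fin m => μ) k).lintegral_comp (hm k)

lemma lintegral_prod_sq {m : ℕ} {α : Type*} [MeasurableSpace α] (μ : Measure α)
    [IsProbabilityMeasure μ] (L : α → ENNReal) (hL : Measurable L) :
    ∫⁻ ω, (∏ k, L (ω k)) ^ 2 ∂(Measure.pi fun _ : Fin m => μ) = (∫⁻ x, L x ^ 2 ∂μ) ^ m := by
  simp_rw [← Finset.prod_pow]
  rw [lintegral_prod_eq_prod_lintegral_of_indepFun (μ := Measure.pi fun _ : Fin m => μ) Finset.univ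
    (fun k ω => L (ω k) ^ 2)
    (iIndepFun_pi (μ := fun _ : Fin m => μ) (X := fun _ x => L x ^ 2)
      (fun k => (hL.pow_const 2).aemeasurable))
    (fun k => (hL.pow_const 2).comp (measurable_pi_apply k))]
  have : ∀ k : Fin m, ∫⁻ ω, L (ω k) ^ 2 ∂(Measure.pi fun _ : Fin m => μ) = ∫⁻ x, L x ^ 2 ∂μ :=
    fun k => (measurePreserving_eval (fun _ : Fin m => μ) k).lintegral_comp (hL.pow_const 2)
  simp [this]

lemma chi_sq_tv {α : Type*} [MeasurableSpace α] (μ : Measure α)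
    [IsProbabilityMeasure μ] (L : α → ENNReal) (hL : Measurable L) (hfin : ∀ x, L x ≠ ⊤)
    [IsProbabilityMeasure (μ.withDensity L)] (t : ℝ) (ht : 0 < t)
    (h : ∫⁻ x, L x ^ 2 ∂μ ≤ ENNReal.ofReal (1 + t ^ 2)) (A : Set α) (hA : MeasurableSet A) :
    |μ.real A - (μ.withDensity L).real A| ≤ t := by
  set l : α → ℝ := fun x => (L x).toReal with hl
  have hlm : Measurable l := hL.ennreal_toReal
  have h0 : ∀ x, 0 ≤ l x := fun x => ENNReal.toReal_nonneg
  have hLl : ∀ x, L x = ENNReal.ofReal (l x) := fun x => (ENNReal.ofReal_toReal (hfin x)).symm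
  have hL1 : ∫⁻ x, L x ∂μ = 1 := by
    have := measure_univ (μ := μ.withDensity L)
    rwa [withDensity_apply _ MeasurableSet.univ, Measure.restrict_univ] at this
  have hil : Integrable l μ := integrable_toReal_of_lintegral_ne_top hL.aemeasurable (by simp [hL1])
  have hl1 : ∫ x, l x ∂μ = 1 := by
    rw [integral_toReal hL.aemeasurable (by filter_upwards with x using (hfin x).lt_top), hL1]; simp
  have hsq : ∀ x, l x ^ 2 = (L x ^ 2).toReal := fun x => by simp [hl]
  have hne : ∫⁻ x, L x ^ 2 ∂μ ≠ ⊤ := (h.trans_lt ENNReal.ofReal_lt_top).ne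
  have hil2 : Integrable (fun x => l x ^ 2) μ := by
    simp_rw [hsq]
    exact integrable_toReal_of_lintegral_ne_top (hL.pow_const 2).aemeasurable hne
  have hl2 : ∫ x, l x ^ 2 ∂μ ≤ 1 + t ^ 2 := by
    simp_rw [hsq]
    rw [integral_toReal (hL.pow_const 2).aemeasurable
      (by filter_upwards with x using (ENNReal.pow_ne_top (hfin x)).lt_top)]
    exact ENNReal.toReal_le_of_le_ofReal (by positivity) h
  have hQ : (μ.withDensity L).real A = ∫ x in A, l x ∂μ := by
    rw [measureReal_def, withDensity_apply _ hA, integral_toReal hL.aemeasurable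
      (by filter_upwards with x using (hfin x).lt_top)]
  have hP : μ.real A = ∫ x in A, (1:ℝ) ∂μ := by simp
  rw [hQ, hP, ← integral_sub (integrable_const _) hil.integrableOn]
  have hi1 : Integrable (fun x => 1 - l x) μ := (integrable_const _).sub hil
  have hi2 : Integrable (fun x => (l x ^ 2 - 2 * l x + 1) / (2 * t) + t / 2) μ :=
    (((hil2.sub (hil.const_mul 2)).add (integrable_const _)).div_const _).add (integrable_const _)
  calc |∫ x in A, (1 - l x) ∂μ| ≤ ∫ x in A, |1 - l x| ∂μ := abs_integral_le_integral_abs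
    _ ≤ ∫ x, |1 - l x| ∂μ := setIntegral_le_integral hi1.abs (by filter_upwards with x using abs_nonneg _)
    _ ≤ ∫ x, ((l x ^ 2 - 2 * l x + 1) / (2 * t) + t / 2) ∂μ := by
        refine integral_mono hi1.abs hi2 fun x => ?_
        have : (l x ^ 2 - 2 * l x + 1) / (2 * t) + t / 2 - |1 - l x| = (|1 - l x| - t) ^ 2 / (2 * t) := by
          field_simp
          rw [sub_sq, sq_abs]; ring
        have h2 : 0 ≤ (|1 - l x| - t) ^ 2 / (2 * t) := by positivity
        show |1 - l x| ≤ _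
        linarith
    _ = (∫ x, l x ^ 2 ∂μ - 2 * 1 + 1) / (2 * t) + t / 2 := by
        have k1 : Integrable (fun x => l x ^ 2 - 2 * l x) μ := hil2.sub (hil.const_mul 2)
        have k2 : Integrable (fun x => l x ^ 2 - 2 * l x + 1) μ := k1.add (integrable_const _)
        rw [integral_add (k2.div_const _) (integrable_const _),
          integral_div, integral_add k1 (integrable_const _),
          integral_sub hil2 (hil.const_mul 2), integral_const_mul, hl1]
        simp
    _ ≤ t := by
        have : (∫ x, l x ^ 2 ∂μ - 2 * 1 + 1) / (2 * t) ≤ t ^ 2 / (2 * t) := by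
          gcongr; linarith
        have h3 : t ^ 2 / (2 * t) = t / 2 := by field_simp
        linarith

/-- linear functional of standard Gaussians -/
lemma map_linear_gaussian {ι : Type*} [Fintype ι] (w : ι → ℝ) :
    (Measure.pi fun _ : ι => gaussianReal 0 1).map (fun η => ∑ i, w i * η i)
      = gaussianReal 0 (Real.toNNReal (∑ i, w i ^ 2)) := by
  have hm : Measurable (fun η : ι → ℝ => ∑ i, w i * η i) := by fun_prop
  have := Measure.isProbabilityMeasure_map (μ := Measure.pi fun _ : ι => gaussianReal 0 1) hm.aemeasurable
  refine Measure.ext_of_charFun ?_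
  ext t
  rw [charFun_gaussianReal, charFun_apply_real, integral_map hm.aemeasurable (by fun_prop)]
  have : ∀ η : ι → ℝ, Complex.exp (t * ((∑ i, w i * η i : ℝ) : ℂ) * Complex.I)
      = ∏ i, Complex.exp ((t * w i : ℝ) * (η i : ℂ) * Complex.I) := by
    intro η
    rw [← Complex.exp_sum]
    congr 1
    push_cast
    rw [Finset.mul_sum, Finset.sum_mul]
    refine Finset.sum_congr rfl fun i _ => by ring
  simp_rw [this]
  rw [integral_fintype_prod_eq_prod (𝕜 := ℂ) (fun i (x : ℝ) => Complex.exp ((t * w i : ℝ) * (x : ℂ) * Complex.I))]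
  simp_rw [← charFun_apply_real, charFun_gaussianReal]
  rw [← Complex.exp_sum]
  congr 1
  rw [Real.coe_toNNReal _ (Finset.sum_nonneg fun i _ => sq_nonneg _)]
  push_cast
  simp
  rw [Finset.sum_mul, Finset.sum_div]
  refine Finset.sum_congr rfl fun i _ => by ring

lemma gaussian_shift_1d (b : ℝ) (g : ℝ → ENNReal) (hg : Measurable g) :
    ∫⁻ x, g (x + b) ∂(gaussianReal 0 1)
      = ∫⁻ x, ENNReal.ofReal (Real.exp (b * x - b ^ 2 / 2)) * g x ∂(gaussianReal 0 1) := by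
  have h1 : ∫⁻ x, g (x + b) ∂(gaussianReal 0 1) = ∫⁻ x, g x ∂(gaussianReal b 1) := by
    have := gaussianReal_map_add_const (μ := 0) (v := 1) b
    rw [zero_add] at this
    rw [← this, lintegral_map hg (by fun_prop)]
  rw [h1, gaussianReal_of_var_ne_zero _ one_ne_zero, gaussianReal_of_var_ne_zero _ one_ne_zero,
    lintegral_withDensity_eq_lintegral_mul _ (measurable_gaussianPDF _ _) hg,
    lintegral_withDensity_eq_lintegral_mul _ (measurable_gaussianPDF _ _) (by fun_prop)]
  refine lintegral_congr fun x => ?_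
  simp only [Pi.mul_apply, ← mul_assoc, gaussianPDF]
  congr 1
  rw [← ENNReal.ofReal_mul (gaussianPDFReal_nonneg _ _ _)]
  congr 1
  simp only [gaussianPDFReal, mul_assoc, ← Real.exp_add]
  congr 3
  simp; ring

/-- shear density -/
noncomputable def shearL {ι : Type*} (i j : ι) (b : ℝ) (η : ι → ℝ) : ENNReal :=
  ENNReal.ofReal (Real.exp (b * η j * η i - (b * η j) ^ 2 / 2))

lemma measurable_shearL {ι : Type*} (i j : ι) (b : ℝ) : Measurable (shearL i j b) := by
  unfold shearL; fun_prop

lemma gaussian_shear {ι : Type*} [Fintype ι] [DecidableEq ι] (i j : ι) (hij : i ≠ j) (b : ℝ)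
    (g : (ι → ℝ) → ENNReal) (hg : Measurable g) :
    ∫⁻ η, g (Function.update η i (η i + b * η j)) ∂(Measure.pi fun _ : ι => gaussianReal 0 1)
      = ∫⁻ η, shearL i j b η * g η ∂(Measure.pi fun _ : ι => gaussianReal 0 1) := by
  have hu : Measurable fun η : ι → ℝ => Function.update η i (η i + b * η j) := by
    rw [measurable_pi_iff]; intro k
    by_cases h : k = i
    · subst h; simp; fun_prop
    · simp [h]; fun_prop
  refine lintegral_eq_of_lmarginal_eq {i} (hg.comp hu) ((measurable_shearL i j b).mul hg) ?_
  rw [lmarginal_singleton, lmarginal_singleton]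
  ext η
  simp only [shearL, Function.update_idem, Function.update_self,
    Function.update_of_ne hij.symm]
  exact gaussian_shift_1d (b * η j) (fun x => g (Function.update η i x)) (hg.comp (measurable_update η))

lemma gaussian_exp_sq (a : ℝ) (ha : a ^ 2 ≤ 1 / 4) :
    ∫⁻ x, ENNReal.ofReal (Real.exp (a ^ 2 * x ^ 2)) ∂(gaussianReal 0 1)
      ≤ ENNReal.ofReal (Real.exp (2 * a ^ 2)) := by
  rw [gaussianReal_of_var_ne_zero _ one_ne_zero,
    lintegral_withDensity_eq_lintegral_mul _ (measurable_gaussianPDF _ _) (by fun_prop)]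
  have hb : 0 < 1 / 2 - a ^ 2 := by linarith
  have h1 : ∀ x : ℝ, (gaussianPDF 0 1 * fun x => ENNReal.ofReal (Real.exp (a ^ 2 * x ^ 2))) x
      = ENNReal.ofReal ((√(2 * Real.pi))⁻¹ * Real.exp (-(1 / 2 - a ^ 2) * x ^ 2)) := by
    intro x
    simp only [Pi.mul_apply, gaussianPDF]
    rw [← ENNReal.ofReal_mul (gaussianPDFReal_nonneg _ _ _)]
    congr 1
    simp only [gaussianPDFReal, mul_assoc, ← Real.exp_add]
    simp only [NNReal.coe_one, mul_one, sub_zero]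
    ring_nf
  simp_rw [h1]
  rw [← ofReal_integral_eq_lintegral_ofReal ((integrable_exp_neg_mul_sq hb).const_mul _)
    (by filter_upwards with x; positivity), integral_const_mul, integral_gaussian]
  refine ENNReal.ofReal_le_ofReal ?_
  rw [← Real.sqrt_inv, ← Real.sqrt_mul (by positivity)]
  refine Real.sqrt_le_iff.2 ⟨by positivity, ?_⟩
  have : (2 * Real.pi)⁻¹ * (Real.pi / (1 / 2 - a ^ 2)) = (1 - 2 * a ^ 2)⁻¹ := by
    have := Real.pi_pos
    have h3 : (1 - 2 * a ^ 2) ≠ 0 := by linarith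
    have h4 : (1 - a ^ 2 * 2) ≠ 0 := by linarith
    field_simp
  rw [this, ← Real.exp_nat_mul, inv_le_comm₀ (by linarith) (by positivity), ← Real.exp_neg]
  set y := 4 * a ^ 2 with hy
  have hy0 : 0 ≤ y := by positivity
  have hy1 : y ≤ 1 := by linarith
  have e1 : -(((2:ℕ):ℝ) * (2 * a ^ 2)) = -y := by push_cast; ring
  rw [e1, show 1 - 2 * a ^ 2 = 1 - y / 2 by ring]
  rw [Real.exp_neg, inv_le_comm₀ (Real.exp_pos _) (by linarith)]
  refine le_trans ?_ (Real.add_one_le_exp y)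
  rw [inv_le_comm₀ (by linarith) (by linarith), inv_le_iff_one_le_mul₀ (by linarith)]
  nlinarith


noncomputable abbrev stdG (n : ℕ) : Measure (Fin n → ℝ) := Measure.pi fun _ : Fin n => gaussianReal 0 1

noncomputable def cPdf : ℝ := gaussianPDFReal 0 1 1
noncomputable def kap : ℝ := ∫ z, min |z| 1 ∂(gaussianReal 0 1)

lemma cPdf_pos : 0 < cPdf := gaussianPDFReal_pos _ _ _ one_ne_zero

lemma integrable_min_abs : Integrable (fun z : ℝ => min |z| 1) (gaussianReal 0 1) := by
  refine Integrable.of_bound (C := 1) (by fun_prop) ?_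
  filter_upwards with z
  rw [Real.norm_of_nonneg (by positivity)]
  exact min_le_right _ _

lemma kap_pos : 0 < kap := by
  unfold kap
  rw [integral_pos_iff_support_of_nonneg (fun z => by positivity) integrable_min_abs]
  have : Function.support (fun z : ℝ => min |z| 1) = {0}ᶜ := by
    ext z
    simp only [Function.mem_support, Set.mem_compl_iff, Set.mem_singleton_iff]
    constructor
    · rintro h rfl; simp at h
    · intro h
      have : 0 < |z| := abs_pos.2 h
      positivity
  rw [this]
  have := nullSingletonClass_gaussianReal (μ := 0) (v := 1) one_ne_zero
  rw [prob_compl_eq_one_sub (measurableSet_singleton _), measure_singleton]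
  simp

lemma gauss_Ioc (v : ℝ) (hv : 0 ≤ v) :
    ENNReal.ofReal (cPdf * min (√v) 1) ≤ gaussianReal 0 v.toNNReal (Set.Ioc (-v) 0) := by
  rcases hv.eq_or_lt with rfl | hv
  · simp
  have hs : 0 < √v := Real.sqrt_pos.2 hv
  have h1 : gaussianReal 0 v.toNNReal = (gaussianReal 0 1).map (√v * ·) := by
    rw [gaussianReal_map_const_mul]
    congr 1
    · simp
    · ext; simp [Real.sq_sqrt hv.le, hv.le]
  rw [h1, Measure.map_apply (by fun_prop) measurableSet_Ioc]
  have h2 : Set.Ioc (-(min (√v) 1)) 0 ⊆ (√v * ·) ⁻¹' (Set.Ioc (-v) 0) := by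
    intro z hz
    have hm : min (√v) 1 ≤ √v := min_le_left _ _
    have h4 : √v * √v = v := Real.mul_self_sqrt hv.le
    simp only [Set.mem_preimage, Set.mem_Ioc] at hz ⊢
    constructor
    · nlinarith [hz.1]
    · nlinarith [hz.2]
  refine le_trans ?_ (measure_mono h2)
  rw [gaussianReal_apply _ one_ne_zero]
  calc ENNReal.ofReal (cPdf * min (√v) 1)
      = ∫⁻ z in Set.Ioc (-(min (√v) 1)) 0, ENNReal.ofReal cPdf := by
        rw [setLIntegral_const, Real.volume_Ioc, ← ENNReal.ofReal_mul cPdf_pos.le]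
        simp
    _ ≤ _ := by
        refine setLIntegral_mono (measurable_gaussianPDF _ _) fun z hz => ?_
        refine ENNReal.ofReal_le_ofReal ?_
        unfold cPdf
        simp only [gaussianPDFReal, NNReal.coe_one, mul_one, sub_zero]
        have hm : min (√v) 1 ≤ 1 := min_le_right _ _
        have : z ^ 2 ≤ 1 := by nlinarith [hz.1, hz.2]
        gcongr _ * Real.exp (-?_ / _)
        linarith

section lower
variable {n : ℕ} (p : Fin n → Prop) [DecidablePred p]

def Supp (B : Matrix (Fin n) (Fin n) ℝ) : Prop := ∀ i j, ¬ (¬ p i ∧ p j) → B i j = 0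

variable {p}

lemma Supp.mul {B C : Matrix (Fin n) (Fin n) ℝ} (hB : Supp p B) (hC : Supp p C) : B * C = 0 := by
  ext i j
  rw [Matrix.mul_apply]
  refine Finset.sum_eq_zero fun k _ => ?_
  by_cases h : p k
  · rw [hC k j (by tauto), mul_zero]
  · rw [hB i k (by tauto), zero_mul]

lemma Supp.inv {B : Matrix (Fin n) (Fin n) ℝ} (hB : Supp p B) : (1 - B)⁻¹ = 1 + B := by
  refine Matrix.inv_eq_right_inv ?_
  rw [sub_mul, mul_add, one_mul, one_mul, mul_add, hB.mul hB, mul_one]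
  abel

/-- sum of squares of `D η` -/
noncomputable def rr (D : Matrix (Fin n) (Fin n) ℝ) (η : Fin n → ℝ) : ℝ := ∑ i, (D *ᵥ η) i ^ 2
noncomputable def qq (D : Matrix (Fin n) (Fin n) ℝ) (η : Fin n → ℝ) : ℝ := ∑ i, (D *ᵥ η) i * η i
noncomputable def frob (D : Matrix (Fin n) (Fin n) ℝ) : ℝ := √(∑ i, ∑ j, D i j ^ 2)

lemma meas_mulVec (D : Matrix (Fin n) (Fin n) ℝ) : Measurable fun η : Fin n → ℝ => D *ᵥ η := by
  unfold Matrix.mulVec dotProduct; fun_prop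

lemma meas_rr (D : Matrix (Fin n) (Fin n) ℝ) : Measurable (rr D) := by
  unfold rr Matrix.mulVec dotProduct; fun_prop
lemma meas_qq (D : Matrix (Fin n) (Fin n) ℝ) : Measurable (qq D) := by
  unfold qq Matrix.mulVec dotProduct; fun_prop

lemma rr_nonneg (D : Matrix (Fin n) (Fin n) ℝ) (η) : 0 ≤ rr D η :=
  Finset.sum_nonneg fun _ _ => sq_nonneg _

lemma expect_min (D : Matrix (Fin n) (Fin n) ℝ) (h1 : frob D ≤ 1) :
    kap * frob D ≤ ∫ η, min (√(rr D η)) 1 ∂(stdG n) := by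
  have hf0 : 0 ≤ frob D := Real.sqrt_nonneg _
  rcases hf0.eq_or_lt with h0 | h0
  · rw [← h0, mul_zero]
    exact integral_nonneg fun η => by positivity
  set N : Fin n → ℝ := fun i => √(∑ j, D i j ^ 2) with hN
  have hNsq : ∀ i, N i ^ 2 = ∑ j, D i j ^ 2 := fun i =>
    Real.sq_sqrt (Finset.sum_nonneg fun _ _ => sq_nonneg _)
  have hsq : frob D ^ 2 = ∑ i, N i ^ 2 := by
    simp_rw [hNsq]
    exact Real.sq_sqrt (Finset.sum_nonneg fun _ _ => Finset.sum_nonneg fun _ _ => sq_nonneg _)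
  have hN0 : ∀ i, 0 ≤ N i := fun i => Real.sqrt_nonneg _
  set z : Fin n → (Fin n → ℝ) → ℝ := fun i η => ∑ j, (D i j / N i) * η j with hz
  have hzm : ∀ i, Measurable (z i) := fun i => by simp only [hz]; fun_prop
  have hzD : ∀ i η, N i * z i η = (D *ᵥ η) i := by
    intro i η
    by_cases h : N i = 0
    · have : ∀ j, D i j = 0 := by
        intro j
        have h5 := hNsq i
        rw [h] at h5
        have h6 := (Finset.sum_eq_zero_iff_of_nonneg (fun j _ => sq_nonneg (D i j))).1 (by simpa using h5.symm) j (Finset.mem_univ j)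
        simpa using h6
      simp [h, Matrix.mulVec, dotProduct, this]
    · simp only [hz, Matrix.mulVec, dotProduct, Finset.mul_sum]
      refine Finset.sum_congr rfl fun j _ => ?_
      field_simp
  have hpt : ∀ η, ∑ i, N i ^ 2 * min |z i η| 1 ≤ frob D * min (√(rr D η)) 1 := by
    intro η
    rw [mul_min_of_nonneg _ _ h0.le]
    refine le_min ?_ ?_
    · have hcs := Finset.sum_mul_sq_le_sq_mul_sq Finset.univ N (fun i => |(D *ᵥ η) i|)
      simp only [sq_abs] at hcs
      have h7 : ∑ i, N i * |(D *ᵥ η) i| ≤ frob D * √(rr D η) := by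
        refine abs_le_of_sq_le_sq' ?_ (by positivity) |>.2
        rw [mul_pow, hsq, Real.sq_sqrt (rr_nonneg _ _)]
        exact hcs
      refine le_trans (Finset.sum_le_sum fun i _ => ?_) h7
      rw [← hzD, abs_mul, abs_of_nonneg (hN0 i), ← mul_assoc, ← sq]
      exact mul_le_mul_of_nonneg_left (min_le_left _ _) (sq_nonneg _)
    · calc ∑ i, N i ^ 2 * min |z i η| 1 ≤ ∑ i, N i ^ 2 * 1 :=
            Finset.sum_le_sum fun i _ => mul_le_mul_of_nonneg_left (min_le_right _ _) (sq_nonneg _)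
        _ = frob D ^ 2 := by simp [hsq]
        _ ≤ frob D * 1 := by nlinarith
  have hint : ∀ i, Integrable (fun η => min |z i η| 1) (stdG n) := by
    intro i
    refine Integrable.of_bound (C := 1) ((hzm i).abs.min measurable_const).aestronglyMeasurable ?_
    filter_upwards with z
    rw [Real.norm_of_nonneg (by positivity)]
    exact min_le_right _ _
  have hint2 : Integrable (fun η => min (√(rr D η)) 1) (stdG n) := by
    refine Integrable.of_bound (C := 1) ((meas_rr D).sqrt.min measurable_const).aestronglyMeasurable ?_
    filter_upwards with z
    rw [Real.norm_of_nonneg (by positivity)]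
    exact min_le_right _ _
  have hE : ∀ i, N i ^ 2 * ∫ η, min |z i η| 1 ∂(stdG n) = N i ^ 2 * kap := by
    intro i
    by_cases h : N i = 0
    · simp [h]
    congr 1
    have h8 := map_linear_gaussian (fun j => D i j / N i)
    have h9 : ∑ j, (D i j / N i) ^ 2 = 1 := by
      simp_rw [div_pow]
      rw [← Finset.sum_div, ← hNsq, div_self (by positivity)]
    rw [h9, Real.toNNReal_one] at h8
    unfold kap
    rw [← h8, integral_map (hzm i).aemeasurable (by fun_prop)]
  have h10 := integral_mono (integrable_finsetSum _ fun i _ => (hint i).const_mul (N i ^ 2))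
    (hint2.const_mul (frob D)) hpt
  rw [integral_const_mul, integral_finsetSum _ fun i _ => (hint i).const_mul (N i ^ 2)] at h10
  simp_rw [integral_const_mul, hE] at h10
  rw [← Finset.sum_mul, ← hsq] at h10
  nlinarith

lemma tv_lower_core {D : Matrix (Fin n) (Fin n) ℝ} (hD : Supp p D) (h1 : frob D ≤ 1) :
    cPdf * kap * frob D ≤ (stdG n).real {η | 0 < qq D η + rr D η} - (stdG n).real {η | 0 < qq D η} := by
  have hm1 : MeasurableSet {η : Fin n → ℝ | 0 < qq D η + rr D η} :=
    measurableSet_lt measurable_const ((meas_qq D).add (meas_rr D))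
  have hm0 : MeasurableSet {η : Fin n → ℝ | 0 < qq D η} :=
    measurableSet_lt measurable_const (meas_qq D)
  have hsub : {η : Fin n → ℝ | 0 < qq D η} ⊆ {η : Fin n → ℝ | 0 < qq D η + rr D η} :=
    fun η h => add_pos_of_pos_of_nonneg h (rr_nonneg D η)
  rw [← measureReal_sdiff hsub hm0]
  set S := {η : Fin n → ℝ | 0 < qq D η + rr D η} \ {η | 0 < qq D η} with hS
  have hSm : MeasurableSet S := hm1.diff hm0
  have hle : ∫⁻ η, ENNReal.ofReal (cPdf * min (√(rr D η)) 1) ∂(stdG n) ≤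
      ∫⁻ η, S.indicator 1 η ∂(stdG n) := by
    refine lintegral_le_of_lmarginal_le (Finset.univ.filter fun i => ¬ p i) ?_
      (measurable_one.indicator hSm) ?_
    · exact (((meas_rr D).sqrt.min measurable_const).const_mul _).ennreal_ofReal
    intro x
    simp only [lmarginal]
    set s : Finset (Fin n) := Finset.univ.filter fun i => ¬ p i
    have hDu : ∀ y : (∀ i : s, ℝ), D *ᵥ (Function.updateFinset x s y) = D *ᵥ x := by
      intro y
      ext i
      simp only [Matrix.mulVec, dotProduct]
      refine Finset.sum_congr rfl fun j _ => ?_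
      by_cases h : p j
      · rw [Function.updateFinset, dif_neg (by simp [s, h])]
      · rw [hD i j (by tauto)]; simp
    have hr : ∀ y : (∀ i : s, ℝ), rr D (Function.updateFinset x s y) = rr D x := by
      intro y; simp only [rr, hDu]
    have hq : ∀ y : (∀ i : s, ℝ), qq D (Function.updateFinset x s y) = ∑ i : s, (D *ᵥ x) i * y i := by
      intro y
      simp only [qq, hDu]
      rw [← Finset.sum_subset (Finset.subset_univ s), ← Finset.sum_coe_sort]
      · refine Finset.sum_congr rfl fun i _ => ?_
        simp [Function.updateFinset]
      · intro i _ hi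
        have : (D *ᵥ x) i = 0 := by
          simp only [Matrix.mulVec, dotProduct]
          refine Finset.sum_eq_zero fun j _ => ?_
          rw [hD i j (by simp [s] at hi; tauto), zero_mul]
        rw [this, zero_mul]
    have hrs : rr D x = ∑ i : s, (D *ᵥ x) i ^ 2 := by
      simp only [rr]
      rw [← Finset.sum_subset (Finset.subset_univ s), ← Finset.sum_coe_sort]
      intro i _ hi
      have : (D *ᵥ x) i = 0 := by
        simp only [Matrix.mulVec, dotProduct]
        refine Finset.sum_eq_zero fun j _ => ?_
        rw [hD i j (by simp [s] at hi; tauto), zero_mul]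
      rw [this]; simp
    simp only [hr]
    rw [lintegral_const, measure_univ, mul_one]
    refine (gauss_Ioc _ (rr_nonneg D x)).trans ?_
    have hlin := map_linear_gaussian (fun i : s => (D *ᵥ x) i)
    rw [← hrs] at hlin
    rw [← hlin, Measure.map_apply (by fun_prop) measurableSet_Ioc, ← lintegral_indicator_one
      (measurableSet_Ioc.preimage (by fun_prop))]
    refine lintegral_mono fun y => ?_
    refine le_of_eq ?_
    have : (Function.updateFinset x s y ∈ S) ↔ y ∈ (fun η : (∀ i : s, ℝ) => ∑ i : s, (D *ᵥ x) i * η i) ⁻¹' Set.Ioc (-rr D x) 0 := by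
      simp only [hS, Set.mem_sdiff, Set.mem_ofPred_eq, hr, hq, Set.mem_preimage, Set.mem_Ioc, not_lt]
      constructor <;> rintro ⟨h, h'⟩ <;> exact ⟨by linarith, h'⟩
    by_cases hy : Function.updateFinset x s y ∈ S
    · rw [Set.indicator_of_mem hy, Set.indicator_of_mem (this.1 hy)]; rfl
    · rw [Set.indicator_of_notMem hy, Set.indicator_of_notMem (fun h => hy (this.2 h))]
  rw [lintegral_indicator_one hSm, ← ofReal_integral_eq_lintegral_ofReal] at hle
  · have h2 := (ENNReal.ofReal_le_iff_le_toReal (measure_ne_top _ _)).1 hle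
    rw [integral_const_mul] at h2
    have h3 := mul_le_mul_of_nonneg_left (expect_min D h1) cPdf_pos.le
    rw [measureReal_def]
    linarith
  · refine Integrable.const_mul ?_ _
    refine Integrable.of_bound (C := 1) ((meas_rr D).sqrt.min measurable_const).aestronglyMeasurable ?_
    filter_upwards with z
    rw [Real.norm_of_nonneg (by positivity)]
    exact min_le_right _ _
  · filter_upwards with η
    have := cPdf_pos
    show 0 ≤ cPdf * min (√(rr D η)) 1
    positivity
end lower


lemma assouad {Ω K : Type*} [MeasurableSpace Ω] [Fintype K] [DecidableEq K] [Nonempty K]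
    (P : (K → Bool) → Measure Ω) [∀ τ, IsProbabilityMeasure (P τ)]
    (E : (K → Bool) → Set Ω) (hEm : ∀ τ, MeasurableSet (E τ))
    (hE : ∀ τ, 2 / 3 ≤ (P τ).real (E τ))
    (hdist : ∀ τ τ' ω, ω ∈ E τ → ω ∈ E τ' → 12 * hammingDist τ τ' ≤ Fintype.card K)
    (t : ℝ) (ht : t < 1 / 6)
    (hTV : ∀ τ k A, MeasurableSet A →
      |(P τ).real A - (P (Function.update τ k (!τ k))).real A| ≤ t) : False := by
  classical
  set N : ℝ := (Fintype.card K : ℝ) with hN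
  have hNpos : 0 < N := by simp only [hN]; exact_mod_cast Fintype.card_pos
  let G : ((K → Bool) → Prop) → (K → Bool) := fun s => if h : ∃ τ, s τ then h.choose else fun _ => true
  let est : Ω → (K → Bool) := fun ω => G (fun τ => ω ∈ E τ)
  have hest : Measurable est := by
    have h1 : Measurable fun ω => (fun τ => ω ∈ E τ : (K → Bool) → Prop) := by
      rw [measurable_pi_iff]; intro τ
      exact measurableSet_setOfPred.1 (hEm τ)
    exact (measurable_of_countable G).comp h1
  have hin : ∀ τ ω, ω ∈ E τ → ω ∈ E (est ω) := by
    intro τ ω h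
    have hex : ∃ τ, ω ∈ E τ := ⟨τ, h⟩
    have : est ω = hex.choose := by
      simp only [est, G]; rw [dif_pos hex]
    rw [this]; exact hex.choose_spec
  let A : (K → Bool) → K → Set Ω := fun τ k => {ω | est ω k ≠ τ k}
  have hAm : ∀ τ k, MeasurableSet (A τ k) := by
    intro τ k
    have : Measurable fun ω => est ω k := (measurable_pi_apply k).comp hest
    exact (measurableSet_eq_fun this measurable_const).compl
  have hup : ∀ τ, ∑ k, (P τ).real (A τ k) ≤ 5 * N / 12 := by
    intro τ
    have hi : ∀ S : Set Ω, MeasurableSet S → Integrable (S.indicator (fun _ => (1:ℝ))) (P τ) :=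
      fun S hS => (integrable_const _).indicator hS
    have h1 : ∑ k, (P τ).real (A τ k) = ∫ ω, ∑ k, (A τ k).indicator (fun _ => (1:ℝ)) ω ∂(P τ) := by
      rw [integral_finsetSum _ fun k _ => hi _ (hAm τ k)]
      refine Finset.sum_congr rfl fun k _ => ?_
      rw [integral_indicator_const _ (hAm τ k)]; simp
    have h2 : ∫ ω, (N / 12 + N * (E τ)ᶜ.indicator (fun _ => (1:ℝ)) ω) ∂(P τ)
        = N / 12 + N * (1 - (P τ).real (E τ)) := by
      rw [integral_add (integrable_const _) ((hi _ (hEm τ).compl).const_mul _), integral_const_mul,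
        integral_indicator_const _ (hEm τ).compl, probReal_compl_eq_one_sub (hEm τ)]
      simp
    have h3 : ∑ k, (P τ).real (A τ k) ≤ N / 12 + N * (1 - (P τ).real (E τ)) := by
      rw [h1, ← h2]
      refine integral_mono (integrable_finsetSum _ fun k _ => hi _ (hAm τ k))
        ((integrable_const _).add ((hi _ (hEm τ).compl).const_mul _)) fun ω => ?_
      have h4 : ∑ k, (A τ k).indicator (fun _ => (1:ℝ)) ω = (hammingDist (est ω) τ : ℝ) := by
        simp only [hammingDist, Finset.card_filter, Set.indicator]
        push_cast
        rfl
      show ∑ k, (A τ k).indicator (fun _ => (1:ℝ)) ω ≤ N / 12 + N * (E τ)ᶜ.indicator (fun _ => (1:ℝ)) ω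
      rw [h4]
      by_cases h : ω ∈ E τ
      · have := hdist (est ω) τ ω (hin τ ω h) h
        have h5 : 12 * (hammingDist (est ω) τ : ℝ) ≤ N := by simp only [hN]; exact_mod_cast this
        have h6 : (E τ)ᶜ.indicator (fun _ => (1:ℝ)) ω = 0 := Set.indicator_of_notMem (by simpa using h) _
        rw [h6]; linarith
      · have h6 : (E τ)ᶜ.indicator (fun _ => (1:ℝ)) ω = 1 := Set.indicator_of_mem h _
        have h5 : (hammingDist (est ω) τ : ℝ) ≤ N := by
          simp only [hN]; exact_mod_cast hammingDist_le_card_fintype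
        rw [h6]; linarith
    have := hE τ
    nlinarith
  have hlow : ∀ k, (Fintype.card (K → Bool) : ℝ) * (1 - t) ≤ 2 * ∑ τ, (P τ).real (A τ k) := by
    intro k
    let fl : (K → Bool) → (K → Bool) := fun τ => Function.update τ k (!τ k)
    have hinv : Function.Involutive fl := by
      intro τ; simp [fl]
    have h1 : ∑ τ, (P (fl τ)).real (A (fl τ) k) = ∑ τ, (P τ).real (A τ k) :=
      Equiv.sum_comp hinv.toPerm (fun τ => (P τ).real (A τ k))
    have h2 : ∀ τ, 1 - t ≤ (P τ).real (A τ k) + (P (fl τ)).real (A (fl τ) k) := by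
      intro τ
      have h3 : A (fl τ) k = (A τ k)ᶜ := by
        ext ω
        simp only [A, fl, Function.update_self, Set.mem_compl_iff]
        show est ω k ≠ !τ k ↔ ¬ (est ω k ≠ τ k)
        cases est ω k <;> cases τ k <;> simp
      rw [h3, probReal_compl_eq_one_sub (hAm τ k)]
      have := (abs_le.1 (hTV τ k _ (hAm τ k))).1
      simp only [fl]
      linarith
    have h4 := Finset.sum_le_sum fun τ (_ : τ ∈ Finset.univ) => h2 τ
    rw [Finset.sum_add_distrib, h1] at h4
    simp only [Finset.sum_const, Finset.card_univ, nsmul_eq_mul] at h4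
    linarith
  have h1 := Finset.sum_le_sum fun k (_ : k ∈ Finset.univ) => hlow k
  have h2 := Finset.sum_le_sum fun τ (_ : τ ∈ Finset.univ) => hup τ
  rw [← Finset.mul_sum, ← Finset.mul_sum, Finset.sum_comm] at h1
  simp only [Finset.sum_const, Finset.card_univ, nsmul_eq_mul] at h1 h2
  rw [← hN] at h1
  have hM : (0:ℝ) < (Fintype.card (K → Bool) : ℝ) := by exact_mod_cast Fintype.card_pos
  set M : ℝ := (Fintype.card (K → Bool) : ℝ)
  have h3 : N * M * (1 - t) ≤ N * M * (5 / 6) := by linarith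
  have h4 := le_of_mul_le_mul_left h3 (by positivity)
  linarith

lemma tv_shear {n m : ℕ} (i j : Fin n) (hij : i ≠ j) (b : ℝ) (hb : b ^ 2 ≤ 1 / 4) (t : ℝ) (ht : 0 < t)
    (hbt : Real.exp (2 * b ^ 2) ^ m ≤ 1 + t ^ 2) (A : Set (Fin m → Fin n → ℝ)) (hA : MeasurableSet A) :
    |(Measure.pi fun _ : Fin m => stdG n).real A - (Measure.pi fun _ : Fin m =>
      (stdG n).map (fun η => (1 + Matrix.single i j b) *ᵥ η)).real A| ≤ t := by
  have hmap : (stdG n).map (fun η => (1 + Matrix.single i j b) *ᵥ η)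
      = (stdG n).withDensity (shearL i j b) := by
    have hfun : ∀ η : Fin n → ℝ, (1 + Matrix.single i j b) *ᵥ η
        = Function.update η i (η i + b * η j) := by
      intro η
      rw [add_mulVec, one_mulVec, Matrix.single_mulVec]
      ext k
      by_cases hk : k = i
      · subst hk; simp
      · simp [hk]
    ext s hs
    rw [Measure.map_apply (meas_mulVec _) hs, withDensity_apply _ hs, ← lintegral_indicator hs,
      ← lintegral_indicator_one (hs.preimage (meas_mulVec _))]
    have := gaussian_shear i j hij b (s.indicator 1) (measurable_one.indicator hs)
    simp_rw [← hfun] at this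
    calc _ = _ := this
      _ = _ := by
        refine lintegral_congr fun η => ?_
        by_cases h : η ∈ s <;> simp [h]
  have : IsProbabilityMeasure ((stdG n).withDensity (shearL i j b)) := by
    rw [← hmap]; exact Measure.isProbabilityMeasure_map (meas_mulVec _).aemeasurable
  rw [hmap]
  have hpw := pi_withDensity_aux (m := m) (stdG n) (shearL i j b) (measurable_shearL i j b)
  have : IsProbabilityMeasure ((Measure.pi fun _ : Fin m => stdG n).withDensity
    (fun ω => ∏ k, shearL i j b (ω k))) := by rw [← hpw]; infer_instance
  rw [hpw]
  have hm := measurable_shearL i j b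
  have hpm : Measurable fun ω : Fin m → Fin n → ℝ => ∏ k, shearL i j b (ω k) :=
    Finset.measurable_prod _ fun k _ => hm.comp (measurable_pi_apply k)
  refine chi_sq_tv _ _ hpm ?_ t ht ?_ A hA
  · intro ω
    exact ENNReal.prod_ne_top fun k _ => ENNReal.ofReal_ne_top
  rw [lintegral_prod_sq _ _ hm]
  have h2 : ∀ η : Fin n → ℝ, shearL i j b η ^ 2 = shearL i j (2 * b) η *
      ENNReal.ofReal (Real.exp (b ^ 2 * η j ^ 2)) := by
    intro η
    simp only [shearL]
    rw [← ENNReal.ofReal_pow (by positivity), ← ENNReal.ofReal_mul (by positivity), ← Real.exp_nat_mul,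
      ← Real.exp_add]
    congr 2
    push_cast; ring
  simp_rw [h2]
  have h3 := gaussian_shear i j hij (2 * b) (fun η => ENNReal.ofReal (Real.exp (b ^ 2 * η j ^ 2)))
    (by fun_prop)
  rw [← h3]
  simp only [Function.update_of_ne hij.symm]
  have h4 := (measurePreserving_eval (fun _ : Fin n => gaussianReal 0 1) j).lintegral_comp
    (f := fun x => ENNReal.ofReal (Real.exp (b ^ 2 * x ^ 2))) (by fun_prop)
  simp only [Function.eval] at h4
  rw [h4]
  calc _ ≤ ENNReal.ofReal (Real.exp (2 * b ^ 2)) ^ m := pow_le_pow_left' (gaussian_exp_sq b hb) m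
    _ = ENNReal.ofReal (Real.exp (2 * b ^ 2) ^ m) := (ENNReal.ofReal_pow (by positivity) m).symm
    _ ≤ _ := ENNReal.ofReal_le_ofReal hbt

section bn
variable {n : ℕ} {p : Fin n → Prop} [DecidablePred p]

lemma gaussianBN_eq {B : Matrix (Fin n) (Fin n) ℝ} (hB : Supp p B) (σ : Fin n → ℝ) :
    gaussianBN B σ = (stdG n).map (fun η => (1 + B) *ᵥ (fun i => σ i * η i)) := by
  unfold gaussianBN
  have h1 : (Measure.pi fun i => gaussianReal 0 ((σ i ^ 2).toNNReal))
      = (stdG n).map (fun η i => σ i * η i) := by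
    have : ∀ i, gaussianReal 0 ((σ i ^ 2).toNNReal) = (gaussianReal 0 1).map (σ i * ·) := by
      intro i
      rw [gaussianReal_map_const_mul]
      congr 1
      · simp
      · ext; simp [sq_nonneg]
    simp_rw [this]
    have : ∀ i, IsProbabilityMeasure ((gaussianReal 0 1).map (σ i * ·)) := fun i =>
      Measure.isProbabilityMeasure_map (by fun_prop)
    rw [Measure.pi_map_pi (fun i => by fun_prop)]
  rw [h1, hB.inv, Measure.map_map (meas_mulVec _) (by fun_prop)]
  rfl

instance gaussianBN_prob (B : Matrix (Fin n) (Fin n) ℝ) (σ : Fin n → ℝ) :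
    IsProbabilityMeasure (gaussianBN B σ) :=
  Measure.isProbabilityMeasure_map (meas_mulVec _).aemeasurable

lemma gaussianBN_one {B : Matrix (Fin n) (Fin n) ℝ} (hB : Supp p B) :
    gaussianBN B (fun _ => 1) = (stdG n).map (fun η => (1 + B) *ᵥ η) := by
  rw [gaussianBN_eq hB]; simp

def testS (B B' : Matrix (Fin n) (Fin n) ℝ) : Set (Fin n → ℝ) :=
  {X | 0 < qq (B' - B) ((1 - B) *ᵥ X)}

lemma meas_testS (B B' : Matrix (Fin n) (Fin n) ℝ) : MeasurableSet (testS B B') :=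
  measurableSet_lt measurable_const ((meas_qq _).comp (meas_mulVec _))

lemma Supp.sub {B B' : Matrix (Fin n) (Fin n) ℝ} (hB : Supp p B) (hB' : Supp p B') : Supp p (B' - B) := by
  intro i j h
  rw [Matrix.sub_apply, hB i j h, hB' i j h, sub_zero]

lemma tv_lower {B B' : Matrix (Fin n) (Fin n) ℝ} (hB : Supp p B) (hB' : Supp p B')
    (h1 : frob (B' - B) ≤ 1) :
    cPdf * kap * frob (B' - B) ≤ (gaussianBN B' (fun _ => 1)).real (testS B B')
      - (gaussianBN B (fun _ => 1)).real (testS B B') := by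
  have hD := hB.sub hB'
  refine (tv_lower_core hD h1).trans (le_of_eq ?_)
  rw [gaussianBN_one hB, gaussianBN_one hB', map_measureReal_apply (meas_mulVec _) (meas_testS _ _),
    map_measureReal_apply (meas_mulVec _) (meas_testS _ _)]
  congr 2
  · ext η
    simp only [testS, Set.mem_preimage, Set.mem_ofPred_eq]
    have e1 : (1 - B) * (1 + B') = 1 + (B' - B) := by
      rw [sub_mul, mul_add, mul_add, hB.mul hB']; simp; abel
    rw [Matrix.mulVec_mulVec, e1]
    have e2 : qq (B' - B) ((1 + (B' - B)) *ᵥ η) = qq (B' - B) η + rr (B' - B) η := by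
      have e3 : (B' - B) *ᵥ ((1 + (B' - B)) *ᵥ η) = (B' - B) *ᵥ η := by
        rw [Matrix.mulVec_mulVec, mul_add, hD.mul hD, mul_one, add_zero]
      simp only [qq, rr, e3]
      rw [← Finset.sum_add_distrib]
      refine Finset.sum_congr rfl fun i _ => ?_
      rw [add_mulVec, one_mulVec, Pi.add_apply]; ring
    rw [e2]
  · ext η
    simp only [testS, Set.mem_preimage, Set.mem_ofPred_eq]
    have e1 : (1 - B) * (1 + B) = 1 := by
      rw [sub_mul, mul_add, mul_add, hB.mul hB]; simp
    rw [Matrix.mulVec_mulVec, e1, one_mulVec]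

lemma tv_neighbor {m : ℕ} {B : Matrix (Fin n) (Fin n) ℝ} (hB : Supp p B)
    (i j : Fin n) (hi : ¬ p i) (hj : p j) (b : ℝ) (hb : b ^ 2 ≤ 1 / 4) (t : ℝ) (ht : 0 < t)
    (hbt : Real.exp (2 * b ^ 2) ^ m ≤ 1 + t ^ 2) (A : Set (Fin m → Fin n → ℝ)) (hA : MeasurableSet A) :
    |(Measure.pi fun _ : Fin m => gaussianBN B (fun _ => 1)).real A - (Measure.pi fun _ : Fin m =>
      gaussianBN (B + Matrix.single i j b) (fun _ => 1)).real A| ≤ t := by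
  have hij : i ≠ j := by rintro rfl; exact hi hj
  have hS : Supp p (Matrix.single i j b) := by
    intro i' j' h
    rw [Matrix.single_apply, if_neg]
    rintro ⟨rfl, rfl⟩; exact h ⟨hi, hj⟩
  have hB' : Supp p (B + Matrix.single i j b) := by
    intro i' j' h
    rw [Matrix.add_apply, hB _ _ h, hS _ _ h, add_zero]
  have hP : ∀ ν : Measure (Fin n → ℝ), IsProbabilityMeasure ν →
      (Measure.pi fun _ : Fin m => ν.map (fun η => (1 + B) *ᵥ η))
      = (Measure.pi fun _ : Fin m => ν).map (fun ω k => (1 + B) *ᵥ (ω k)) := by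
    intro ν hν
    have : ∀ k : Fin m, IsProbabilityMeasure (ν.map (fun η => (1 + B) *ᵥ η)) := fun k =>
      Measure.isProbabilityMeasure_map (meas_mulVec _).aemeasurable
    rw [Measure.pi_map_pi (fun k => (meas_mulVec _).aemeasurable)]
  have hm : Measurable (fun (ω : Fin m → Fin n → ℝ) k => (1 + B) *ᵥ (ω k)) :=
    measurable_pi_iff.2 fun k => (meas_mulVec _).comp (measurable_pi_apply k)
  have e : gaussianBN (B + Matrix.single i j b) (fun _ => 1)
      = ((stdG n).map (fun η => (1 + Matrix.single i j b) *ᵥ η)).map (fun η => (1 + B) *ᵥ η) := by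
    rw [gaussianBN_one hB', Measure.map_map (meas_mulVec _) (meas_mulVec _)]
    congr 1
    ext1 η
    simp only [Function.comp_apply, Matrix.mulVec_mulVec]
    rw [add_mul, one_mul, mul_add, hB.mul hS, mul_one, add_zero]
    congr 1
    abel
  rw [e, gaussianBN_one hB, hP _ inferInstance,
    hP _ (Measure.isProbabilityMeasure_map (meas_mulVec _).aemeasurable),
    map_measureReal_apply hm hA, map_measureReal_apply hm hA]
  exact tv_shear i j hij b hb t ht hbt _ (hm hA)

lemma meas_est {m : ℕ} (f : (Fin m → Fin n → ℝ) → (Fin n → Fin n → ℝ) × (Fin n → ℝ))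
    (hf : Measurable f) (hs : ∀ ω, Supp p (Matrix.of (f ω).1)) (S : Set (Fin n → ℝ))
    (hS : MeasurableSet S) :
    Measurable fun ω => (gaussianBN (Matrix.of (f ω).1) (f ω).2).real S := by
  refine Measurable.ennreal_toReal ?_
  have hF : Measurable fun q : (Fin m → Fin n → ℝ) × (Fin n → ℝ) =>
      (1 + Matrix.of (f q.1).1) *ᵥ (fun i => (f q.1).2 i * q.2 i) := by
    have h1 : ∀ i j, Measurable fun q : (Fin m → Fin n → ℝ) × (Fin n → ℝ) => (f q.1).1 i j := by
      intro i j
      fun_prop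
    have h2 : ∀ i, Measurable fun q : (Fin m → Fin n → ℝ) × (Fin n → ℝ) => (f q.1).2 i := by
      intro i
      fun_prop
    rw [measurable_pi_iff]
    intro i
    simp only [Matrix.mulVec, dotProduct, Matrix.add_apply, Matrix.of_apply]
    fun_prop
  have := measurable_measure_prodMk_left (ν := stdG n) (hF hS)
  convert this using 2 with ω
  rw [gaussianBN_eq (hs ω), Measure.map_apply _ hS]
  · rfl
  · exact (meas_mulVec _).comp (by fun_prop)

lemma abs_le_dTV (P Q : Measure (Fin n → ℝ)) [IsProbabilityMeasure P] [IsProbabilityMeasure Q]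
    (s : Set (Fin n → ℝ)) : |P.real s - Q.real s| ≤ dTV P Q := by
  refine le_ciSup (f := fun s : Set (Fin n → ℝ) => |(P s).toReal - (Q s).toReal|) ⟨1, ?_⟩ s
  rintro _ ⟨s, rfl⟩
  have h1 : P.real s ≤ 1 := measureReal_le_one
  have h2 : Q.real s ≤ 1 := measureReal_le_one
  have h3 : 0 ≤ P.real s := measureReal_nonneg
  have h4 : 0 ≤ Q.real s := measureReal_nonneg
  show |P.real s - Q.real s| ≤ 1
  rw [abs_le]; constructor <;> linarith

variable (p) in
abbrev Idx := {q : Fin n × Fin n // ¬ p q.1 ∧ p q.2}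

def Bm (a : ℝ) (τ : Idx p → Bool) : Matrix (Fin n) (Fin n) ℝ := Matrix.of fun i j =>
  if h : ¬ p i ∧ p j then (if τ ⟨(i, j), h⟩ then a else 0) else 0

lemma Bm_supp (a : ℝ) (τ : Idx p → Bool) : Supp p (Bm a τ) := by
  intro i j h
  simp only [Bm, Matrix.of_apply]
  rw [dif_neg h]

lemma Bm_flip (a : ℝ) (τ : Idx p → Bool) (k : Idx p) :
    Bm a (Function.update τ k (!τ k)) = Bm a τ + Matrix.single k.1.1 k.1.2 (if τ k then -a else a) := by
  ext i j
  simp only [Bm, Matrix.of_apply, Matrix.add_apply, Matrix.single_apply]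
  by_cases hk : k.1.1 = i ∧ k.1.2 = j
  · obtain ⟨rfl, rfl⟩ := hk
    rw [dif_pos k.2, dif_pos k.2]
    cases h : τ k <;> simp [h]
  · rw [if_neg hk, add_zero]
    split_ifs with h <;> try rfl
    all_goals
      rename_i h1 h2
      rw [Function.update_of_ne] at h1
      · simp_all
      · rintro rfl; exact hk ⟨rfl, rfl⟩

lemma frob_Bm (a : ℝ) (τ τ' : Idx p → Bool) :
    ∑ i, ∑ j, (Bm a τ' - Bm a τ) i j ^ 2 = a ^ 2 * hammingDist τ τ' := by
  have h1 : ∀ k : Idx p, (Bm a τ' - Bm a τ) k.1.1 k.1.2 ^ 2 = if τ k ≠ τ' k then a ^ 2 else 0 := by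
    intro k
    simp only [Matrix.sub_apply, Bm, Matrix.of_apply]
    rw [dif_pos k.2, dif_pos k.2]
    cases h : τ k <;> cases h' : τ' k <;> simp [h, h']
  rw [← Fintype.sum_prod_type']
  have h2 : ∑ q ∈ Finset.univ.filter (fun q : Fin n × Fin n => ¬ p q.1 ∧ p q.2),
      (Bm a τ' - Bm a τ) q.1 q.2 ^ 2 = ∑ k : Idx p, (Bm a τ' - Bm a τ) k.1.1 k.1.2 ^ 2 :=
    Finset.sum_subtype _ (by simp) _
  rw [← Finset.sum_subset (Finset.subset_univ (Finset.univ.filter fun q : Fin n × Fin n => ¬ p q.1 ∧ p q.2)), h2]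
  · simp_rw [h1]
    rw [← Finset.sum_filter]
    simp [hammingDist, mul_comm]
  · intro q _ hq
    rw [((Bm_supp a τ).sub (Bm_supp a τ')) q.1 q.2 (by simpa using hq)]
    simp

lemma card_Idx (n d : ℕ) (hd : d ≤ n) :
    Fintype.card (Idx (fun i : Fin n => i.val < d)) = d * (n - d) := by
  have h1 : (Finset.univ.filter fun i : Fin n => i.val < d).card = d := by
    rw [Fin.card_filter_val_lt, min_eq_right hd]
  have h2 : (Finset.univ.filter fun i : Fin n => ¬ i.val < d).card = n - d := by
    have := Finset.card_filter_add_card_filter_not (s := Finset.univ) (fun i : Fin n => i.val < d)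
    rw [h1, Finset.card_univ, Fintype.card_fin] at this
    omega
  rw [Fintype.card_subtype, ← Finset.univ_product_univ]
  rw [Finset.filter_product (p := fun i : Fin n => ¬ i.val < d) (q := fun i : Fin n => i.val < d),
    Finset.card_product, h1, h2, mul_comm]

end bn

/-- Theorem 5.2, sample-complexity lower bound for learning Gaussian Bayesian networks:
there is a universal constant `c > 0` such that for every `ε ∈ (0,1)` and `1 ≤ d ≤ n/2`
there is a DAG `G` on `n` nodes of in-degree at most `d` (given by parent sets `π`)
such that any measurable estimator mapping `m` i.i.d. samples of a Gaussian Bayesian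
network `P` on `G` to a Gaussian Bayesian network `Q` on `G` with
`Pr(d_TV(P,Q) ≤ c·ε) ≥ 2/3` for every such `P` must satisfy `m ≥ c·d(n−d)/ε²`. -/
theorem stmt_17 : ∃ c : ℝ, 0 < c ∧
    ∀ (ε : ℝ), 0 < ε → ε < 1 → ∀ (n d : ℕ), 1 ≤ d → 2 * d ≤ n →
    ∃ π : Fin n → Finset (Fin n),
      (∀ i, ∀ j ∈ π i, j < i) ∧ (∀ i, (π i).card ≤ d) ∧
      ∀ (m : ℕ)
        (f : (Fin m → Fin n → ℝ) → (Fin n → Fin n → ℝ) × (Fin n → ℝ)),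
        Measurable f →
        (∀ ω i j, j ∉ π i → (f ω).1 i j = 0) →
        (∀ ω i, 0 < (f ω).2 i) →
        (∀ (B : Matrix (Fin n) (Fin n) ℝ) (σ : Fin n → ℝ),
          (∀ i j, j ∉ π i → B i j = 0) → (∀ i, 0 < σ i) →
          (2 / 3 : ENNReal) ≤
            (Measure.pi fun _ : Fin m => gaussianBN B σ)
              {ω | dTV (gaussianBN B σ) (gaussianBN (Matrix.of (f ω).1) (f ω).2) ≤ c * ε}) →
        c * ((d : ℝ) * ((n : ℝ) - (d : ℝ))) / ε ^ 2 ≤ (m : ℝ) := by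
  set c : ℝ := min (cPdf * kap / 14) (1 / 100) with hc
  have hck : 0 < cPdf * kap := mul_pos cPdf_pos kap_pos
  have hc0 : 0 < c := lt_min (by positivity) (by norm_num)
  have hc1 : 14 * c ≤ cPdf * kap := by
    have : c ≤ cPdf * kap / 14 := min_le_left _ _
    linarith
  have hc2 : c ≤ 1 / 100 := min_le_right _ _
  refine ⟨c, hc0, ?_⟩
  intro ε hε hε1 n d hd hdn
  let p : Fin n → Prop := fun i => i.val < d
  refine ⟨fun i => Finset.univ.filter fun j => ¬ p i ∧ p j, ?_, ?_, ?_⟩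
  · intro i j hj
    simp only [Finset.mem_filter, Finset.mem_univ, true_and, p] at hj
    exact Fin.lt_def.2 (by omega)
  · intro i
    refine (Finset.card_le_card (t := Finset.univ.filter fun j : Fin n => j.val < d) ?_).trans ?_
    · intro j hj
      simp only [Finset.mem_filter, Finset.mem_univ, true_and, p] at hj ⊢
      exact hj.2
    · rw [Fin.card_filter_val_lt]; exact min_le_right _ _
  intro m f hf hf1 _ hacc
  have hfs : ∀ ω, Supp p (Matrix.of (f ω).1) := fun ω i j h => hf1 ω i j (by simpa using h)
  by_contra hlt
  rw [not_le] at hlt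
  have hcard : Fintype.card (Idx p) = d * (n - d) := card_Idx n d (by omega)
  set N : ℝ := (Fintype.card (Idx p) : ℝ) with hN
  have hNe : N = (d : ℝ) * ((n : ℝ) - (d : ℝ)) := by
    rw [hN, hcard]; push_cast [Nat.cast_sub (show d ≤ n by omega)]; ring
  have hNnat : 1 ≤ Fintype.card (Idx p) := by
    rw [hcard]; exact Nat.mul_pos hd (by omega)
  have hN1 : 1 ≤ N := by rw [hN]; exact_mod_cast hNnat
  have : Nonempty (Idx p) := Fintype.card_pos_iff.1 hNnat
  rw [← hNe] at hlt
  set a : ℝ := ε / (2 * √N) with ha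
  have ha2 : a ^ 2 = ε ^ 2 / (4 * N) := by
    rw [ha, div_pow, mul_pow, Real.sq_sqrt (by linarith)]; norm_num
  have hε2 : ε ^ 2 ≤ 1 := by nlinarith
  have haq : a ^ 2 ≤ 1 / 4 := by
    rw [ha2, div_le_div_iff₀ (by positivity) (by norm_num)]; nlinarith
  let P : (Idx p → Bool) → Measure (Fin n → ℝ) := fun τ => gaussianBN (Bm a τ) (fun _ => 1)
  let Q : (Fin m → Fin n → ℝ) → Measure (Fin n → ℝ) := fun ω => gaussianBN (Matrix.of (f ω).1) (f ω).2
  let T : (Idx p → Bool) → (Idx p → Bool) → Set (Fin n → ℝ) := fun τ τ' => testS (Bm a τ) (Bm a τ')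
  let E : (Idx p → Bool) → Set (Fin m → Fin n → ℝ) := fun τ =>
    ⋂ τ', ({ω | |(P τ).real (T τ τ') - (Q ω).real (T τ τ')| ≤ c * ε} ∩
      {ω | |(P τ).real (T τ' τ) - (Q ω).real (T τ' τ)| ≤ c * ε})
  have hQm : ∀ τ τ', Measurable fun ω => (Q ω).real (T τ τ') := fun τ τ' =>
    meas_est f hf hfs _ (meas_testS _ _)
  refine assouad (fun τ => Measure.pi fun _ : Fin m => P τ) E ?_ ?_ ?_ (1 / 7) (by norm_num) ?_
  · intro τ
    refine MeasurableSet.iInter fun τ' => MeasurableSet.inter ?_ ?_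
    · exact measurableSet_le ((measurable_const.sub (hQm _ _)).abs) measurable_const
    · exact measurableSet_le ((measurable_const.sub (hQm _ _)).abs) measurable_const
  · intro τ
    have h1 := hacc (Bm a τ) (fun _ => 1) (fun i j h => Bm_supp a τ i j (by simpa using h))
      (fun _ => one_pos)
    have h2 : {ω | dTV (gaussianBN (Bm a τ) (fun _ => 1))
        (gaussianBN (Matrix.of (f ω).1) (f ω).2) ≤ c * ε} ⊆ E τ := by
      intro ω hω
      refine Set.mem_iInter.2 fun τ' => ⟨?_, ?_⟩
      · exact (abs_le_dTV (P τ) (Q ω) (T τ τ')).trans hω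
      · exact (abs_le_dTV (P τ) (Q ω) (T τ' τ)).trans hω
    have h3 := h1.trans (measure_mono h2)
    have h4 := ENNReal.toReal_mono (measure_ne_top _ _) h3
    have h5 : ((2 / 3 : ENNReal)).toReal = 2 / 3 := by simp
    rw [h5] at h4
    exact h4
  · intro τ τ' ω h h'
    by_contra hcon
    rw [not_le] at hcon
    have k1 : |(P τ).real (T τ τ') - (Q ω).real (T τ τ')| ≤ c * ε := (Set.mem_iInter.1 h τ').1
    have k2 : |(P τ').real (T τ τ') - (Q ω).real (T τ τ')| ≤ c * ε := (Set.mem_iInter.1 h' τ).2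
    set H : ℝ := (hammingDist τ τ' : ℝ) with hH
    have hHl : N < 12 * H := by rw [hN, hH]; exact_mod_cast hcon
    have hHu : H ≤ N := by rw [hN, hH]; exact_mod_cast hammingDist_le_card_fintype
    have hfr : frob (Bm a τ' - Bm a τ) = √(a ^ 2 * H) := by
      unfold frob; rw [frob_Bm]
    have hf1 : frob (Bm a τ' - Bm a τ) ≤ 1 := by
      rw [hfr]
      refine Real.sqrt_le_iff.2 ⟨zero_le_one, ?_⟩
      rw [one_pow, ha2, div_mul_eq_mul_div, div_le_one (by positivity)]
      nlinarith
    have hf2 : ε / 7 < frob (Bm a τ' - Bm a τ) := by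
      rw [hfr]
      refine Real.lt_sqrt_of_sq_lt ?_
      rw [ha2, div_mul_eq_mul_div, lt_div_iff₀ (by positivity)]
      have : 0 < ε ^ 2 := by positivity
      nlinarith
    have k3 : cPdf * kap * frob (Bm a τ' - Bm a τ) ≤ (P τ').real (T τ τ') - (P τ).real (T τ τ') :=
      tv_lower (Bm_supp a τ) (Bm_supp a τ') hf1
    have k4 : cPdf * kap * (ε / 7) < cPdf * kap * frob (Bm a τ' - Bm a τ) :=
      mul_lt_mul_of_pos_left hf2 hck
    have k5 := (abs_le.1 k1).1
    have k6 := (abs_le.1 k2).2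
    nlinarith
  · intro τ k A hA
    show |(Measure.pi fun _ : Fin m => P τ).real A
      - (Measure.pi fun _ : Fin m => P (Function.update τ k (!τ k))).real A| ≤ 1 / 7
    simp only [P]
    rw [Bm_flip]
    have hb2 : (if τ k then -a else a) ^ 2 = a ^ 2 := by split_ifs <;> ring
    refine tv_neighbor (Bm_supp a τ) _ _ k.2.1 k.2.2 _ (by rw [hb2]; exact haq) _ (by norm_num) ?_ A hA
    rw [hb2, ← Real.exp_nat_mul]
    have h1 : (m : ℝ) * (2 * a ^ 2) ≤ 1 / 200 := by
      rw [lt_div_iff₀ (by positivity)] at hlt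
      rw [ha2]
      have : (m : ℝ) * (2 * (ε ^ 2 / (4 * N))) = (m * ε ^ 2) / (2 * N) := by field_simp; ring
      rw [this, div_le_iff₀ (by positivity)]
      nlinarith
    refine (Real.exp_le_exp.2 h1).trans ?_
    have h2 := Real.add_one_le_exp (-(1 / 200 : ℝ))
    rw [Real.exp_neg] at h2
    have h3 : 0 < Real.exp (1 / 200) := Real.exp_pos _
    have h4 : Real.exp (1 / 200) * (Real.exp (1 / 200))⁻¹ = 1 := mul_inv_cancel₀ h3.ne'
    nlinarith
end
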